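/- Let U be a bounded connected open set in ℂ^m, let F : B^m(0,1) → U be an injective holomorphic map, and let 0 < s < 1 and ε > 0. Then there exists an injective holomorphic map F′ : B^m(0,1) → U such that F′(B^m(0,1)) ⊇ F(B^m(0,s)) and vol(F′(B^m(0,1))) ≥ vol(F(B^m(0,1))) + (ρ_m/(2·32^{2m}))·(vol(U) − vol(F(B^m(0,1)))) − ε. -/

import Mathlib

/-!
The volume of the image can in fact be brought arbitrarily close to `vol(U)`; this implies the
claim, since `ρ_m ≤ 1`.

The derivative of an injective holomorphic map between equidimensional spaces is invertible
(Osgood's theorem, `BallFill.injective_fderiv_of_injOn`), so images of injective holomorphic maps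
are open, and such maps are bounded below by a multiple of the distance on compact sets.

The basic construction is `BallFill.touch_fill`. Suppose that `F` is holomorphic and injective near
the closed unit ball and that the distance from the image of the closed ball to a point `p` is
`d > 0`, attained at `F e` with `‖e‖ = 1`. Let `n` be the unit vector pointing from `F e` to `p`.
To `F` is added the pole
`κ (1 - ⟨e, z⟩) ^ (-1/2) n + (κ / 4) (1 - ⟨e, z⟩)⁻¹ T z`,
where `T` is the isometric factor in the polar decomposition of the derivative of `F` at `e`,
restricted to the complex tangent space of the sphere. For small `κ` and on a slightly smaller ball
the sum is injective: in the normal and in the tangential directions the difference quotients of the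
pole and of the linear part of `F` cannot cancel each other. Moreover the sum stays in any prescribed
neighbourhood of `F(closed ball) ∪ ball(p, d)`, covers any prescribed compact part of the image of
the open ball, and covers the closed ball of radius `d / 100` around `p`.

In a connected open set `W` it follows that every point can be covered (`BallFill.Emb.reach`). As
removing a closed ball does not disconnect `W`, finitely many disjoint closed balls avoided by the
image can be filled one after the other, each up to the factor `1 / 100` in the radius
(`BallFill.Emb.fill_finset`). By the Besicovitch covering theorem finitely many such balls make up
half of the measure of the complement of the image, so a fixed proportion of this measure can be
gained (`BallFill.Emb.gain_step`). Hence the supremum of the measures of the images is the measure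
of `W` (`BallFill.Emb.exhaust`).
-/

open Metric MeasureTheory

noncomputable instance {m : ℕ} : MeasurableSpace (EuclideanSpace ℂ (Fin m)) := borel _
instance {m : ℕ} : BorelSpace (EuclideanSpace ℂ (Fin m)) := ⟨rfl⟩
noncomputable instance {m : ℕ} : InnerProductSpace ℝ (EuclideanSpace ℂ (Fin m)) :=
  InnerProductSpace.rclikeToReal ℂ _

/-- Lebesgue measure on `ℂ^m ≅ ℝ^{2m}`. -/
noncomputable instance {m : ℕ} : MeasureSpace (EuclideanSpace ℂ (Fin m)) :=
  measureSpaceOfInnerProductSpace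

/-- `ρ_m`: the ratio of the volume of a maximal ball inscribed in a cube of `ℝ^{2m}` to the
volume of the cube, i.e. the volume of a ball of radius `1/2` in `ℂ^m ≅ ℝ^{2m}` (the unit
cube having volume `1`). -/
noncomputable def rhoConst (m : ℕ) : ℝ :=
  (volume (ball (0 : EuclideanSpace ℂ (Fin m)) (1 / 2))).toReal

/-! ### Regularity of holomorphic maps of several variables -/

section
open Metric Set Filter Topology

namespace BallFill

section Regularity
variable {E F : Type*} [NormedAddCommGroup E] [NormedSpace ℂ E]
  [NormedAddCommGroup F] [NormedSpace ℂ F]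

/-- Restricting a holomorphic map to a complex line. -/
lemma hasDerivAt_line {f : E → F} {z v : E} {t : ℂ} (h : DifferentiableAt ℂ f (z + t • v)) :
    HasDerivAt (fun t : ℂ => f (z + t • v)) (fderiv ℂ f (z + t • v) v) t := by
  have h1 : HasDerivAt (fun t : ℂ => z + t • v) v t := by
    simpa using ((hasDerivAt_id t).smul_const v).const_add z
  exact h.hasFDerivAt.comp_hasDerivAt t h1

/-- The Cauchy estimate for the derivative of a holomorphic map of several variables. -/
lemma norm_fderiv_le_of_bound {f : E → F} {Ω : Set E} (hΩ : IsOpen Ω)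
    (hf : DifferentiableOn ℂ f Ω) {z : E} {r C : ℝ} (hr : 0 < r) (hz : closedBall z r ⊆ Ω)
    (hC : ∀ x ∈ closedBall z r, ‖f x‖ ≤ C) : ‖fderiv ℂ f z‖ ≤ C / r := by
  have hC0 : 0 ≤ C := (norm_nonneg _).trans (hC z (mem_closedBall_self hr.le))
  refine ContinuousLinearMap.opNorm_le_bound _ (div_nonneg hC0 hr.le) fun v => ?_
  rcases eq_or_ne v 0 with rfl | hv
  · simp
  have hv' : 0 < ‖v‖ := norm_pos_iff.2 hv
  have hmem : ∀ t : ℂ, t ∈ closedBall (0 : ℂ) (r / ‖v‖) → z + t • v ∈ closedBall z r := by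
    intro t ht
    have : ‖t‖ ≤ r / ‖v‖ := by simpa using ht
    rw [mem_closedBall, dist_eq_norm]
    simpa [norm_smul] using (le_div_iff₀ hv').1 this
  have hd : DifferentiableOn ℂ (fun t : ℂ => f (z + t • v)) (closedBall 0 (r / ‖v‖)) := by
    intro t ht
    have := hf.differentiableAt (hΩ.mem_nhds (hz (hmem t ht)))
    exact (hasDerivAt_line this).differentiableAt.differentiableWithinAt
  have hR : 0 < r / ‖v‖ := div_pos hr hv'
  have key := Complex.norm_deriv_le_of_forall_mem_sphere_norm_le hR
    (c := 0) (C := C) (f := fun t : ℂ => f (z + t • v))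
    (hd.diffContOnCl_ball subset_rfl)
    (fun t ht => hC _ (hmem t (sphere_subset_closedBall ht)))
  have hz0 : DifferentiableAt ℂ f (z + (0 : ℂ) • v) := by
    simpa using hf.differentiableAt (hΩ.mem_nhds (hz (mem_closedBall_self hr.le)))
  rw [(hasDerivAt_line hz0).deriv] at key
  simp only [zero_smul, add_zero] at key
  calc _ ≤ C / (r / ‖v‖) := key
    _ = C / r * ‖v‖ := by field_simp

variable [FiniteDimensional ℂ E]

/-- A holomorphic map has a continuous derivative: apply the Cauchy estimate to the difference of
the map and its translates. -/
lemma continuousOn_fderiv {f : E → F} {Ω : Set E} (hΩ : IsOpen Ω)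
    (hf : DifferentiableOn ℂ f Ω) : ContinuousOn (fderiv ℂ f) Ω := by
  have : ProperSpace E := FiniteDimensional.proper ℂ E
  intro z hz
  refine ContinuousAt.continuousWithinAt ?_
  obtain ⟨r, hr, hrΩ⟩ := nhds_basis_closedBall.mem_iff.1 (hΩ.mem_nhds hz)
  have hunif : UniformContinuousOn f (closedBall z r) :=
    (isCompact_closedBall z r).uniformContinuousOn_of_continuous (hf.continuousOn.mono hrΩ)
  rw [Metric.continuousAt_iff]
  intro ε hε
  rw [Metric.uniformContinuousOn_iff] at hunif
  obtain ⟨δ, hδ, hu⟩ := hunif (ε * (r / 2) / 2) (by positivity)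
  refine ⟨min δ (r / 4), by positivity, fun {w} hw => ?_⟩
  have hw1 : dist w z < δ := hw.trans_le (min_le_left _ _)
  have hw2 : dist w z < r / 4 := hw.trans_le (min_le_right _ _)
  have hsh : ∀ x ∈ ball z (3 * r / 4), x + (w - z) ∈ closedBall z r := by
    intro x hx
    rw [mem_ball, dist_eq_norm] at hx
    rw [dist_eq_norm] at hw2
    rw [mem_closedBall, dist_eq_norm]
    calc _ = ‖(x - z) + (w - z)‖ := by congr 1; abel
      _ ≤ ‖x - z‖ + ‖w - z‖ := norm_add_le _ _
      _ ≤ r := by linarith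
  have hsh0 : ∀ x ∈ ball z (3 * r / 4), x ∈ closedBall z r := by
    intro x hx
    rw [mem_ball] at hx
    rw [mem_closedBall]; linarith
  set g : E → F := fun x => f (x + (w - z)) - f x with hg
  have hd : ∀ x ∈ ball z (3 * r / 4), HasFDerivAt g
      (fderiv ℂ f (x + (w - z)) - fderiv ℂ f x) x := by
    intro x hx
    have h1 := hf.differentiableAt (hΩ.mem_nhds (hrΩ (hsh x hx)))
    have h2 := hf.differentiableAt (hΩ.mem_nhds (hrΩ (hsh0 x hx)))
    have h3 : HasFDerivAt (fun x => f (x + (w - z))) (fderiv ℂ f (x + (w - z))) x := by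
      simpa [Function.comp_def] using h1.hasFDerivAt.comp x ((hasFDerivAt_id x).add_const (w - z))
    exact h3.sub h2.hasFDerivAt
  have hcb : closedBall z (r / 2) ⊆ ball z (3 * r / 4) := closedBall_subset_ball (by linarith)
  have hbound : ∀ x ∈ closedBall z (r / 2), ‖g x‖ ≤ ε * (r / 2) / 2 := by
    intro x hx
    have := hu (x + (w - z)) (hsh x (hcb hx)) x (hsh0 x (hcb hx))
      (by simpa [dist_eq_norm] using hw1)
    rw [dist_eq_norm] at this
    exact this.le
  have := norm_fderiv_le_of_bound isOpen_ball
    (fun x hx => (hd x hx).differentiableAt.differentiableWithinAt) (half_pos hr) hcb hbound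
  rw [(hd z (mem_ball_self (by positivity))).fderiv] at this
  rw [dist_eq_norm]
  simp only [add_sub_cancel] at this
  calc _ ≤ _ := this
    _ = ε / 2 := by field_simp
    _ < ε := by linarith

lemma hasStrictFDerivAt_of_holomorphic {f : E → F} {Ω : Set E} (hΩ : IsOpen Ω)
    (hf : DifferentiableOn ℂ f Ω) {z : E} (hz : z ∈ Ω) :
    HasStrictFDerivAt f (fderiv ℂ f z) z := by
  refine hasStrictFDerivAt_of_hasFDerivAt_of_continuousAt (f' := fderiv ℂ f) ?_
    ((continuousOn_fderiv hΩ hf).continuousAt (hΩ.mem_nhds hz))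
  filter_upwards [hΩ.mem_nhds hz] with x hx
  exact (hf.differentiableAt (hΩ.mem_nhds hx)).hasFDerivAt

/-- Directional derivatives of a holomorphic map are holomorphic: differentiate the Cauchy
integral formula under the integral sign. -/
lemma differentiableOn_fderiv_apply [CompleteSpace F] {f : E → F} {Ω : Set E} (hΩ : IsOpen Ω)
    (hf : DifferentiableOn ℂ f Ω) (v : E) : DifferentiableOn ℂ (fun z => fderiv ℂ f z v) Ω := by
  have : ProperSpace E := FiniteDimensional.proper ℂ E
  intro z hz
  refine DifferentiableAt.differentiableWithinAt ?_
  obtain ⟨r, hr, hrΩ⟩ := nhds_basis_closedBall.mem_iff.1 (hΩ.mem_nhds hz)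
  obtain ⟨C, hC⟩ := (isCompact_closedBall z r).exists_bound_of_continuousOn
    ((continuousOn_fderiv hΩ hf).mono hrΩ)
  set ρ : ℝ := r / 2 / (‖v‖ + 1) with hρ
  have hρ0 : 0 < ρ := by positivity
  have hmem : ∀ x ∈ ball z (r / 2), ∀ t : ℂ, ‖t‖ ≤ ρ → x + t • v ∈ closedBall z r := by
    intro x hx t ht
    rw [mem_ball, dist_eq_norm] at hx
    rw [mem_closedBall, dist_eq_norm]
    have h1 : ‖t • v‖ ≤ r / 2 := by
      rw [norm_smul]
      calc _ ≤ ρ * (‖v‖ + 1) := by gcongr; linarith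
        _ = r / 2 := by rw [hρ]; field_simp
    calc _ = ‖(x - z) + t • v‖ := by congr 1; abel
      _ ≤ ‖x - z‖ + ‖t • v‖ := norm_add_le _ _
      _ ≤ r := by linarith
  set k : ℝ → ℂ := fun θ => deriv (circleMap 0 ρ) θ * ((circleMap 0 ρ θ - 0) ^ 2)⁻¹ with hk
  have hknz : ∀ θ, (circleMap 0 ρ θ - 0) ^ 2 ≠ 0 := by
    intro θ; simp [circleMap, hρ0.ne']
  have hkc : Continuous k := by
    have : Continuous (deriv (circleMap 0 ρ)) := by
      have : deriv (circleMap 0 ρ) = fun θ => circleMap 0 ρ θ * Complex.I := by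
        ext θ; simp [deriv_circleMap]
      rw [this]; fun_prop
    exact this.mul (Continuous.inv₀ (by fun_prop) hknz)
  have hcm : ∀ θ, ‖circleMap 0 ρ θ‖ ≤ ρ := by intro θ; simp [abs_of_pos hρ0]
  have hrep : ∀ x ∈ ball z (r / 2), fderiv ℂ f x v =
      (2 * Real.pi * Complex.I : ℂ)⁻¹ •
        ∫ θ in (0 : ℝ)..2 * Real.pi, k θ • f (x + circleMap 0 ρ θ • v) := by
    intro x hx
    have hU : IsOpen {t : ℂ | x + t • v ∈ Ω} := hΩ.preimage (by fun_prop)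
    have h1 := Complex.two_pi_I_inv_smul_circleIntegral_sub_sq_inv_smul_of_differentiable hU
      (c := 0) (w₀ := 0) (R := ρ) (f := fun t : ℂ => f (x + t • v))
      (fun t ht => hrΩ (hmem x hx t (by simpa using ht)))
      (fun t ht => (hasDerivAt_line
        (hf.differentiableAt (hΩ.mem_nhds ht))).differentiableAt.differentiableWithinAt)
      (mem_ball_self hρ0)
    have hx0 : DifferentiableAt ℂ f (x + (0 : ℂ) • v) :=
      hf.differentiableAt (hΩ.mem_nhds (hrΩ (hmem x hx 0 (by simpa using hρ0.le))))
    rw [(hasDerivAt_line hx0).deriv] at h1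
    simp only [zero_smul, add_zero] at h1
    rw [← h1]
    simp only [circleIntegral, hk, smul_smul]
  have hcont : ∀ x ∈ ball z (r / 2), Continuous fun θ : ℝ => f (x + circleMap 0 ρ θ • v) := by
    intro x hx
    refine hf.continuousOn.comp_continuous (by fun_prop) fun θ => hrΩ (hmem x hx _ (hcm θ))
  have hcont' : ∀ x ∈ ball z (r / 2),
      Continuous fun θ : ℝ => fderiv ℂ f (x + circleMap 0 ρ θ • v) := by
    intro x hx
    refine (continuousOn_fderiv hΩ hf).comp_continuous (by fun_prop)
      fun θ => hrΩ (hmem x hx _ (hcm θ))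
  have hz2 : z ∈ ball z (r / 2) := mem_ball_self (by positivity)
  have hintegral := intervalIntegral.hasFDerivAt_integral_of_dominated_of_fderiv_le (𝕜 := ℂ)
    (μ := MeasureTheory.volume) (a := 0) (b := 2 * Real.pi)
    (F := fun x θ => k θ • f (x + circleMap 0 ρ θ • v))
    (F' := fun x θ => k θ • fderiv ℂ f (x + circleMap 0 ρ θ • v))
    (x₀ := z) (s := ball z (r / 2)) (bound := fun θ => ‖k θ‖ * C)
    (isOpen_ball.mem_nhds hz2)
    (by
      filter_upwards [isOpen_ball.mem_nhds hz2] with x hx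
      exact (hkc.smul (hcont x hx)).aestronglyMeasurable)
    ((hkc.smul (hcont z hz2)).intervalIntegrable _ _)
    ((hkc.smul (hcont' z hz2)).aestronglyMeasurable)
    (by
      refine Eventually.of_forall fun θ _ x hx => ?_
      rw [norm_smul]
      gcongr
      exact hC _ (hmem x hx _ (hcm θ)))
    ((hkc.norm.mul continuous_const).intervalIntegrable _ _)
    (by
      refine Eventually.of_forall fun θ _ x hx => ?_
      have h1 := hf.differentiableAt (hΩ.mem_nhds (hrΩ (hmem x hx _ (hcm θ))))
      have h3 : HasFDerivAt (fun x => f (x + circleMap 0 ρ θ • v))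
          (fderiv ℂ f (x + circleMap 0 ρ θ • v)) x := by
        simpa [Function.comp_def] using h1.hasFDerivAt.comp x ((hasFDerivAt_id x).add_const (circleMap 0 ρ θ • v))
      exact h3.const_smul _)
  have hd := (hintegral.const_smul ((2 * Real.pi * Complex.I : ℂ)⁻¹)).differentiableAt
  refine hd.congr_of_eventuallyEq ?_
  filter_upwards [isOpen_ball.mem_nhds hz2] with x hx
  exact hrep x hx

end Regularity
end BallFill

end

/-! ### Critical points in one variable -/

section
open Metric Set Filter Topology

namespace BallFill

/-- An injective holomorphic function of one variable has no critical points: near a critical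
point it is, up to an additive constant, a power `k ≥ 2` of a local coordinate. -/
lemma deriv_ne_zero_of_injOn {φ : ℂ → ℂ} {V : Set ℂ} (hV : IsOpen V)
    (hd : DifferentiableOn ℂ φ V) (hinj : InjOn φ V) {z : ℂ} (hz : z ∈ V) : deriv φ z ≠ 0 := by
  intro h0
  have han : AnalyticAt ℂ φ z := hd.analyticAt (hV.mem_nhds hz)
  have han' : AnalyticAt ℂ (fun w => φ w - φ z) z := han.sub analyticAt_const
  have htop : analyticOrderAt (fun w => φ w - φ z) z ≠ ⊤ := by
    intro h
    rw [analyticOrderAt_eq_top] at h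
    have h2 : ∀ᶠ w in 𝓝[≠] z, False := by
      filter_upwards [h.filter_mono nhdsWithin_le_nhds,
        nhdsWithin_le_nhds (hV.mem_nhds hz), self_mem_nhdsWithin] with w h1 h2 h3
      exact h3 (hinj h2 hz (sub_eq_zero.1 h1))
    exact h2.exists.elim fun _ h => h
  obtain ⟨k, hk⟩ := ENat.ne_top_iff_exists.1 htop
  obtain ⟨h, hh, hhz, heq⟩ := (han'.analyticOrderAt_eq_natCast).1 hk.symm
  have hk2 : 2 ≤ k := by
    by_contra hlt
    interval_cases k
    · have := heq.self_of_nhds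
      simp at this
      exact hhz this.symm
    · have h1 : HasDerivAt (fun w => (w - z) ^ 1 • h w) (h z) z := by
        have := ((hasDerivAt_id z).sub_const z).fun_mul hh.differentiableAt.hasDerivAt
        simpa using this
      have h2 : HasDerivAt (fun w => φ w - φ z) (h z) z := h1.congr_of_eventuallyEq heq
      have h3 := h2.deriv
      rw [deriv_sub_const, h0] at h3
      exact hhz h3.symm
  have hk0 : (k : ℂ) ≠ 0 := by
    have : k ≠ 0 := by omega
    exact_mod_cast this
  -- a holomorphic `k`-th root of `h` near `z`
  set a : ℂ := (h z) ^ ((k : ℂ)⁻¹) with ha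
  have hak : a ^ k = h z := Complex.cpow_nat_inv_pow _ (by omega)
  have ha0 : a ≠ 0 := by
    intro h; rw [h, zero_pow (by omega)] at hak; exact hhz hak.symm
  set r : ℂ → ℂ := fun w => a * (h w / h z) ^ ((k : ℂ)⁻¹) with hr
  have hrk : ∀ w, r w ^ k = h w := by
    intro w
    simp only [hr, mul_pow, hak]
    rw [Complex.cpow_nat_inv_pow _ (by omega)]
    field_simp
  have hran : AnalyticAt ℂ r z := by
    refine analyticAt_const.mul ?_
    refine (hh.div analyticAt_const hhz).cpow analyticAt_const ?_
    simp [hhz]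
  have hrz : r z = a := by simp [hr, hhz]
  set χ : ℂ → ℂ := fun w => (w - z) * r w with hχ
  have hχan : AnalyticAt ℂ χ z := (analyticAt_id.sub analyticAt_const).mul hran
  have hχd : HasStrictDerivAt χ a z := by
    have h1 : HasDerivAt χ a z := by
      have := ((hasDerivAt_id z).sub_const z).fun_mul hran.differentiableAt.hasDerivAt
      simpa [hrz] using this
    have := hχan.hasStrictDerivAt
    rwa [h1.deriv] at this
  have hmap : map χ (𝓝 z) = 𝓝 0 := by
    have := hχd.map_nhds_eq ha0
    simpa [hχ] using this
  have hgood : {w | w ∈ V ∧ φ w - φ z = (w - z) ^ k • h w} ∈ 𝓝 z :=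
    (hV.eventually_mem hz).and heq
  have himg := image_mem_map (m := χ) hgood
  rw [hmap] at himg
  set ζ : ℂ := Complex.exp (2 * Real.pi * Complex.I / k) with hζ
  have hprim : IsPrimitiveRoot ζ k := Complex.isPrimitiveRoot_exp k (by omega)
  have hζ1 : ζ ≠ 1 := hprim.ne_one (by omega)
  have himg2 : ∀ᶠ η in 𝓝 (0 : ℂ), ζ * η ∈ χ '' {w | w ∈ V ∧ φ w - φ z = (w - z) ^ k • h w} := by
    have : Tendsto (fun η : ℂ => ζ * η) (𝓝 0) (𝓝 0) := by
      have : Continuous (fun η : ℂ => ζ * η) := by fun_prop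
      simpa using this.tendsto 0
    exact this himg
  obtain ⟨η, ⟨⟨w₁, ⟨hw₁, e₁⟩, c₁⟩, ⟨w₂, ⟨hw₂, e₂⟩, c₂⟩⟩, hη⟩ :=
    (((eventually_mem_set.2 himg).and himg2).filter_mono nhdsWithin_le_nhds |>.and
      (self_mem_nhdsWithin (a := (0 : ℂ)) (s := {0}ᶜ))).exists
  have hval : ∀ w, (w - z) ^ k • h w = χ w ^ k := by
    intro w; simp only [hχ, mul_pow, hrk, smul_eq_mul]
  rw [hval, c₁] at e₁
  rw [hval, c₂, mul_pow, hprim.pow_eq_one, one_mul] at e₂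
  have hww : w₁ = w₂ := hinj hw₁ hw₂ (sub_left_injective (e₁.trans e₂.symm))
  subst hww
  rw [c₁] at c₂
  have : ζ = 1 := mul_right_cancel₀ (b := η) hη (by rw [one_mul]; exact c₂.symm)
  exact hζ1 this

end BallFill

end

/-! ### Osgood's theorem: reduction to vanishing derivative -/

section
open Metric Set Filter Topology

namespace BallFill
universe u

/-- Osgood's theorem in dimension `k`: an injective holomorphic map between open subsets of
`k`-dimensional spaces has injective derivative everywhere. -/
def OsgoodDim (k : ℕ) : Prop :=
  ∀ (E F : Type u) [NormedAddCommGroup E] [NormedSpace ℂ E] [FiniteDimensional ℂ E]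
    [NormedAddCommGroup F] [NormedSpace ℂ F] [FiniteDimensional ℂ F],
    Module.finrank ℂ E = k → Module.finrank ℂ F = k →
    ∀ (Ω : Set E) (f : E → F), IsOpen Ω → DifferentiableOn ℂ f Ω → InjOn f Ω →
      ∀ z ∈ Ω, Function.Injective (fderiv ℂ f z)

variable {E F : Type u} [NormedAddCommGroup E] [NormedSpace ℂ E] [FiniteDimensional ℂ E]
    [NormedAddCommGroup F] [NormedSpace ℂ F] [FiniteDimensional ℂ F]

lemma contDiffAt_of_holomorphic {f : E → F} {Ω : Set E} (hΩ : IsOpen Ω)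
    (hf : DifferentiableOn ℂ f Ω) {z : E} (hz : z ∈ Ω) : ContDiffAt ℂ 1 f z := by
  rw [contDiffAt_one_iff]
  exact ⟨fderiv ℂ f, Ω, hΩ.mem_nhds hz, continuousOn_fderiv hΩ hf,
    fun x hx => (hf.differentiableAt (hΩ.mem_nhds hx)).hasFDerivAt⟩

/-- If the derivative at `z` is neither zero nor injective, restricting the map to a fibre of its
nondegenerate part gives an injective holomorphic map in lower dimension with zero derivative. -/
lemma fderiv_eq_zero_or_injective {n : ℕ} (IH : ∀ k < n, 0 < k → OsgoodDim.{u} k)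
    (hE : Module.finrank ℂ E = n) (hF : Module.finrank ℂ F = n)
    {Ω : Set E} {f : E → F} (hΩ : IsOpen Ω) (hf : DifferentiableOn ℂ f Ω) (hinj : InjOn f Ω)
    {z : E} (hz : z ∈ Ω) : fderiv ℂ f z = 0 ∨ Function.Injective (fderiv ℂ f z) := by
  by_contra hcon
  push Not at hcon
  obtain ⟨hne, hninj⟩ := hcon
  have : CompleteSpace E := FiniteDimensional.complete ℂ E
  have : CompleteSpace F := FiniteDimensional.complete ℂ F
  set L : E →L[ℂ] F := fderiv ℂ f z with hL
  set K : Submodule ℂ E := LinearMap.ker (L : E →ₗ[ℂ] F) with hK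
  set R : Submodule ℂ F := LinearMap.range (L : E →ₗ[ℂ] F) with hR
  obtain ⟨π, hπ⟩ := Submodule.ClosedComplemented.of_finiteDimensional R
  obtain ⟨κ, hκ⟩ := Submodule.ClosedComplemented.of_finiteDimensional K
  have hrn : Module.finrank ℂ R + Module.finrank ℂ K = Module.finrank ℂ E :=
    LinearMap.finrank_range_add_finrank_ker (L : E →ₗ[ℂ] F)
  set N : Submodule ℂ F := LinearMap.ker (π : F →ₗ[ℂ] R) with hN
  obtain ⟨ν, hν⟩ := Submodule.ClosedComplemented.of_finiteDimensional N
  have hNdim : Module.finrank ℂ R + Module.finrank ℂ N = Module.finrank ℂ F := by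
    have h1 := LinearMap.finrank_range_add_finrank_ker (π : F →ₗ[ℂ] R)
    have h2 : LinearMap.range (π : F →ₗ[ℂ] R) = ⊤ :=
      LinearMap.range_eq_top.2 fun r => ⟨r, hπ r⟩
    rw [h2, finrank_top] at h1
    exact h1
  have hKpos : 0 < Module.finrank ℂ K := by
    rw [Nat.pos_iff_ne_zero]
    intro h
    have : K = ⊥ := Submodule.finrank_eq_zero.1 h
    exact hninj (LinearMap.ker_eq_bot.1 this)
  have hKlt : Module.finrank ℂ K < n := by
    have : 0 < Module.finrank ℂ R := by
      rw [Nat.pos_iff_ne_zero]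
      intro h
      have : R = ⊥ := Submodule.finrank_eq_zero.1 h
      exact hne (ContinuousLinearMap.coe_injective (LinearMap.range_eq_bot.1 this))
    omega
  -- `Θ` is a local coordinate system whose first component is the nondegenerate part of `f`
  set Θ : E → R × K := fun x => (π (f x), κ x) with hΘ
  have hΘd : HasStrictFDerivAt Θ ((π.comp L).prod κ) z :=
    (π.hasStrictFDerivAt.comp z (hasStrictFDerivAt_of_holomorphic hΩ hf hz)).prodMk
      κ.hasStrictFDerivAt
  have hΘcd : ContDiffAt ℂ 1 Θ z :=
    (π.contDiff.contDiffAt.comp z (contDiffAt_of_holomorphic hΩ hf hz)).prodMk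
      κ.contDiff.contDiffAt
  have hπL : ∀ x, π (L x) = 0 → L x = 0 := by
    intro x hx
    have := hπ ⟨L x, x, rfl⟩
    rw [hx] at this
    exact (congrArg Subtype.val this).symm
  have hAinj : Function.Injective ((π.comp L).prod κ) := by
    rw [injective_iff_map_eq_zero]
    intro x hx
    simp only [ContinuousLinearMap.prod_apply, ContinuousLinearMap.comp_apply, Prod.mk_eq_zero]
      at hx
    have hxK : x ∈ K := hπL x hx.1
    have := hκ ⟨x, hxK⟩
    rw [hx.2] at this
    exact (congrArg Subtype.val this).symm
  let A : E ≃L[ℂ] R × K :=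
    (LinearEquiv.ofInjectiveOfFinrankEq ((π.comp L).prod κ : E →ₗ[ℂ] R × K) hAinj
      (by rw [Module.finrank_prod, hrn])).toContinuousLinearEquiv
  have hA : (A : E →L[ℂ] R × K) = (π.comp L).prod κ := by ext x <;> rfl
  have hΘA : HasFDerivAt Θ (A : E →L[ℂ] R × K) z := by rw [hA]; exact hΘd.hasFDerivAt
  have hone : (1 : WithTop ℕ∞) ≠ 0 := one_ne_zero
  set g := hΘcd.localInverse hΘA hone with hg
  have hgcd : ContDiffAt ℂ 1 g (Θ z) := hΘcd.to_localInverse hΘA hone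
  have hgz : g (Θ z) = z := hΘcd.localInverse_apply_image hΘA hone
  have hright : ∀ᶠ y in 𝓝 (Θ z), Θ (g y) = y :=
    (hΘcd.hasStrictFDerivAt' hΘA hone).eventually_right_inverse
  set ι : K → R × K := fun k => Θ z + (0, k) with hι
  have hι0 : ι 0 = Θ z := by simp [hι]
  have hιd : Differentiable ℂ ι := by
    simp only [hι]; fun_prop
  -- `σ` parametrises the fibre through `z` of the first component
  set σ : K → E := g ∘ ι with hσ
  have hσ0 : σ 0 = z := by simp [hσ, hι0, hgz]
  have hgdiff : ∀ᶠ y in 𝓝 (Θ z), DifferentiableAt ℂ g y := by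
    filter_upwards [hgcd.eventually (by simp)] with y hy
    exact hy.differentiableAt hone
  have hgΩ : ∀ᶠ y in 𝓝 (Θ z), g y ∈ Ω := by
    refine hgcd.continuousAt.eventually_mem ?_
    rw [hgz]; exact hΩ.mem_nhds hz
  have hev : ∀ᶠ k in 𝓝 (0 : K), Θ (g (ι k)) = ι k ∧ DifferentiableAt ℂ g (ι k) ∧ g (ι k) ∈ Ω := by
    have : Tendsto ι (𝓝 0) (𝓝 (Θ z)) := by rw [← hι0]; exact hιd.continuous.tendsto 0
    exact this.eventually (hright.and (hgdiff.and hgΩ))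
  obtain ⟨V, hVsub, hVo, hV0⟩ := _root_.eventually_nhds_iff.1 hev
  set G : K → N := fun k => ν (f (σ k)) with hG
  have hσd : ∀ k ∈ V, DifferentiableAt ℂ σ k := fun k hk =>
    (hVsub k hk).2.1.comp k (hιd k)
  have hfσd : ∀ k ∈ V, DifferentiableAt ℂ (fun k => f (σ k)) k := fun k hk =>
    (hf.differentiableAt (hΩ.mem_nhds (hVsub k hk).2.2)).comp k (hσd k hk)
  have hπσ : ∀ k ∈ V, π (f (σ k)) = π (f z) ∧ κ (σ k) = κ z + k := by
    intro k hk
    have h := (hVsub k hk).1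
    exact ⟨(congrArg Prod.fst h).trans (add_zero _), congrArg Prod.snd h⟩
  have hGinj : InjOn G V := by
    intro k hk k' hk' h
    have h1 : f (σ k) - f (σ k') ∈ N := by
      simp [hN, (hπσ k hk).1, (hπσ k' hk').1]
    have h2 := hν ⟨_, h1⟩
    simp only [map_sub] at h2
    have h3 : ν (f (σ k)) - ν (f (σ k')) = 0 := sub_eq_zero.2 h
    rw [h3] at h2
    have h4 : f (σ k) = f (σ k') := sub_eq_zero.1 (congrArg Subtype.val h2).symm
    have h5 : σ k = σ k' := hinj (hVsub k hk).2.2 (hVsub k' hk').2.2 h4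
    have h6 := (hπσ k hk).2
    rw [h5, (hπσ k' hk').2] at h6
    exact (add_left_cancel h6).symm
  have hGd : DifferentiableOn ℂ G V := fun k hk =>
    (ν.differentiableAt.comp k (hfσd k hk)).differentiableWithinAt
  have hinjG := IH _ hKlt hKpos K N rfl (by omega) V G hVo hGd hGinj 0 hV0
  -- the derivative of `f ∘ σ` at `0` is `L ∘ σ'(0)`, and is killed by `π`, hence vanishes
  have hder : HasFDerivAt (fun k => f (σ k)) (L.comp (fderiv ℂ σ 0)) 0 := by
    have h1 : HasFDerivAt f L (σ 0) := by
      rw [hσ0]; exact (hf.differentiableAt (hΩ.mem_nhds hz)).hasFDerivAt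
    exact h1.comp 0 (hσd 0 hV0).hasFDerivAt
  have hzero : L.comp (fderiv ℂ σ 0) = 0 := by
    have h1 : HasFDerivAt (fun k => π (f (σ k))) (π.comp (L.comp (fderiv ℂ σ 0))) 0 :=
      π.hasFDerivAt.comp 0 hder
    have h2 : HasFDerivAt (fun k => π (f (σ k))) (0 : K →L[ℂ] R) 0 := by
      refine (hasFDerivAt_const (π (f z)) (0 : K)).congr_of_eventuallyEq ?_
      filter_upwards [hVo.mem_nhds hV0] with k hk using (hπσ k hk).1
    have h3 := h1.unique h2
    ext k
    exact hπL _ (by simpa using congrArg (fun T => T k) h3)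
  have hGder : fderiv ℂ G 0 = 0 := by
    have := (ν.hasFDerivAt.comp (0 : K) hder).fderiv
    rw [hzero, ContinuousLinearMap.comp_zero] at this
    exact this
  rw [hGder] at hinjG
  have hsub : Subsingleton K := ⟨fun a b => hinjG (by simp)⟩
  rw [Module.finrank_zero_of_subsingleton] at hKpos
  exact lt_irrefl _ hKpos

end BallFill

end

/-! ### Curves of zeros of holomorphic functions -/

section
open Metric Set Filter Topology

namespace BallFill
universe u

section curve
variable {E : Type*} [NormedAddCommGroup E] [NormedSpace ℂ E] [FiniteDimensional ℂ E]

/-- Iterated derivatives of `g` in the fixed direction `v`. -/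
noncomputable def dirDeriv (g : E → ℂ) (v : E) : ℕ → E → ℂ
  | 0 => g
  | j + 1 => fun z => fderiv ℂ (dirDeriv g v j) z v

lemma differentiableOn_dirDeriv {g : E → ℂ} {Ω : Set E} (hΩ : IsOpen Ω)
    (hg : DifferentiableOn ℂ g Ω) (v : E) (j : ℕ) : DifferentiableOn ℂ (dirDeriv g v j) Ω := by
  induction j with
  | zero => exact hg
  | succ j ih => exact differentiableOn_fderiv_apply hΩ ih v

lemma isOpen_line {Ω : Set E} (hΩ : IsOpen Ω) (z v : E) :
    IsOpen {w : ℂ | z + w • v ∈ Ω} :=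
  hΩ.preimage (by fun_prop : Continuous fun w : ℂ => z + w • v)

lemma differentiableOn_line {g : E → ℂ} {Ω : Set E} (hΩ : IsOpen Ω)
    (hg : DifferentiableOn ℂ g Ω) (z v : E) :
    DifferentiableOn ℂ (fun w : ℂ => g (z + w • v)) {w : ℂ | z + w • v ∈ Ω} := fun _ hw =>
  (hasDerivAt_line (hg.differentiableAt (hΩ.mem_nhds hw))).differentiableAt.differentiableWithinAt

lemma iteratedDeriv_line {g : E → ℂ} {Ω : Set E} (hΩ : IsOpen Ω)
    (hg : DifferentiableOn ℂ g Ω) (z v : E) (j : ℕ) :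
    ∀ w : ℂ, z + w • v ∈ Ω →
      iteratedDeriv j (fun w : ℂ => g (z + w • v)) w = dirDeriv g v j (z + w • v) := by
  induction j with
  | zero => intro w _; simp [dirDeriv]
  | succ j ih =>
    intro w hw
    rw [iteratedDeriv_succ]
    have h1 : iteratedDeriv j (fun w : ℂ => g (z + w • v)) =ᶠ[𝓝 w]
        fun w => dirDeriv g v j (z + w • v) := by
      filter_upwards [(isOpen_line hΩ z v).mem_nhds hw] with w' hw' using ih w' hw'
    rw [h1.deriv_eq]
    exact (hasDerivAt_line
      ((differentiableOn_dirDeriv hΩ hg v j).differentiableAt (hΩ.mem_nhds hw))).deriv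

/-- Hurwitz: a zero which is isolated on the line in direction `v` persists under a small
displacement in direction `e`. The proof applies the maximum principle to `1 / g`. -/
lemma eventually_exists_zero {g : E → ℂ} {Ω : Set E} (hΩ : IsOpen Ω)
    (hg : DifferentiableOn ℂ g Ω) {z v : E} (e : E) (hz : z ∈ Ω) (h0 : g z = 0)
    (hiso : ∀ᶠ w : ℂ in 𝓝[≠] 0, g (z + w • v) ≠ 0) {δ : ℝ} (hδ : 0 < δ) :
    ∀ᶠ t : ℂ in 𝓝 0, ∃ w : ℂ, ‖w‖ < δ ∧ z + t • e + w • v ∈ Ω ∧ g (z + t • e + w • v) = 0 := by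
  obtain ⟨ε, hε, hεΩ⟩ := Metric.isOpen_iff.1 hΩ z hz
  obtain ⟨δ₁, hδ₁, hδ₁'⟩ := Metric.eventually_nhds_iff.1 (eventually_nhdsWithin_iff.1 hiso)
  set P : ℂ × ℂ → E := fun q => z + q.1 • e + q.2 • v with hP
  have hPc : Continuous P := by fun_prop
  have hPO : IsOpen (P ⁻¹' Ω) := hΩ.preimage hPc
  obtain ⟨δ₂, hδ₂, hδ₂'⟩ := Metric.isOpen_iff.1 hPO (0, 0) (by simpa [hP] using hz)
  set r : ℝ := min (min δ δ₁) δ₂ / 2 with hr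
  have hrpos : 0 < r := by positivity
  have hr1 : r < δ := by
    have := min_le_left (min δ δ₁) δ₂; have := min_le_left δ δ₁; linarith
  have hr2 : r < δ₁ := by
    have := min_le_left (min δ δ₁) δ₂; have := min_le_right δ δ₁; linarith
  have hr3 : r < δ₂ := by
    have := min_le_right (min δ δ₁) δ₂; linarith
  have hmemΩ : ∀ t w : ℂ, ‖t‖ < δ₂ → ‖w‖ < δ₂ → z + t • e + w • v ∈ Ω := by
    intro t w ht hw
    refine hδ₂' (?_ : (t, w) ∈ _)
    simp [Prod.dist_eq, ht, hw]
  have hgc : ContinuousOn g Ω := hg.continuousOn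
  obtain ⟨w₀, hw₀, hmin⟩ := (isCompact_sphere (0 : ℂ) r).exists_isMinOn
    (NormedSpace.sphere_nonempty.2 hrpos.le) (f := fun w => ‖g (z + w • v)‖) (by
      refine ContinuousOn.norm (hgc.comp (by fun_prop) ?_)
      intro w hw
      have := hmemΩ 0 w (by simpa using hδ₂) (by rw [mem_sphere_zero_iff_norm.1 hw]; exact hr3)
      simpa using this)
  set m : ℝ := ‖g (z + w₀ • v)‖ with hm
  have hmpos : 0 < m := by
    refine norm_pos_iff.2 (hδ₁' ?_ ?_)
    · rw [dist_zero_right, mem_sphere_zero_iff_norm.1 hw₀]; exact hr2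
    · intro h
      rw [h] at hw₀
      simp at hw₀
      exact hrpos.ne hw₀
  have hcirc : ∀ᶠ t : ℂ in 𝓝 0, ∀ w ∈ sphere (0 : ℂ) r, m / 2 < ‖g (z + t • e + w • v)‖ := by
    refine (isCompact_sphere (0 : ℂ) r).eventually_forall_of_forall_eventually ?_
    intro w hw
    have hw' := mem_sphere_zero_iff_norm.1 hw
    have h1 : ContinuousAt (fun q : ℂ × ℂ => ‖g (P q)‖) (0, w) := by
      refine (ContinuousAt.comp (f := P) (g := g) ?_ hPc.continuousAt).norm
      exact hgc.continuousAt (hΩ.mem_nhds (hmemΩ 0 w (by simpa using hδ₂) (by rw [hw']; exact hr3)))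
    refine h1.eventually_const_lt ?_
    have := hmin hw
    simp only [mem_ofPred_eq] at this
    simp only [hP, zero_smul, add_zero]
    linarith
  have hcent : ∀ᶠ t : ℂ in 𝓝 0, ‖g (z + t • e)‖ < m / 2 := by
    have h1 : ContinuousAt (fun t : ℂ => ‖g (z + t • e)‖) 0 := by
      refine (ContinuousAt.comp (f := fun t : ℂ => z + t • e) (g := g) ?_ (by fun_prop)).norm
      simpa using hgc.continuousAt (hΩ.mem_nhds hz)
    refine h1.eventually_lt_const ?_
    simp [h0, hmpos]
  have hsmall : ∀ᶠ t : ℂ in 𝓝 0, ‖t‖ < δ₂ := by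
    filter_upwards [Metric.ball_mem_nhds (0 : ℂ) hδ₂] with t ht using mem_ball_zero_iff.1 ht
  filter_upwards [hcirc, hcent, hsmall] with t h1 h2 h3
  by_contra hno
  push Not at hno
  have hne : ∀ w ∈ closedBall (0 : ℂ) r, g (z + t • e + w • v) ≠ 0 := by
    intro w hw
    have hw' : ‖w‖ ≤ r := by simpa using hw
    exact hno w (hw'.trans_lt hr1) (hmemΩ t w h3 (hw'.trans_lt hr3))
  have hd : DifferentiableOn ℂ (fun w : ℂ => (g (z + t • e + w • v))⁻¹) (closedBall 0 r) := by
    intro w hw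
    have hw' : ‖w‖ ≤ r := by simpa using hw
    have := (hasDerivAt_line (z := z + t • e) (v := v) (hg.differentiableAt
      (hΩ.mem_nhds (hmemΩ t w h3 (hw'.trans_lt hr3))))).differentiableAt
    exact (this.inv (hne w hw)).differentiableWithinAt
  have hdc : DiffContOnCl ℂ (fun w : ℂ => (g (z + t • e + w • v))⁻¹) (ball 0 r) := by
    refine DifferentiableOn.diffContOnCl ?_
    rwa [closure_ball _ hrpos.ne']
  have := Complex.norm_le_of_forall_mem_frontier_norm_le isBounded_ball hdc (C := (m / 2)⁻¹)
    (by
      rw [frontier_ball _ hrpos.ne']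
      intro w hw
      rw [norm_inv]
      exact inv_anti₀ (by positivity) (h1 w hw).le) (subset_closure (mem_ball_self hrpos))
  simp only [zero_smul, add_zero, norm_inv] at this
  have hpos : 0 < ‖g (z + t • e)‖ := norm_pos_iff.2 (by
    simpa using hne 0 (mem_closedBall_self hrpos.le))
  have := (inv_le_inv₀ hpos (by positivity)).1 this
  linarith

/-- Through a suitable zero of `g` passes a Lipschitz curve of zeros of `g`, parametrised over a
disc in direction `e`. The zero is chosen of minimal multiplicity `k` along lines in direction
`v`; by minimality all nearby zeros of `g` are zeros of the `(k-1)`-st derivative of `g` in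
direction `v`, which is transverse to `v`, and this gives the Lipschitz bound. -/
lemma exists_zero_curve {g : E → ℂ} {Ω : Set E} (hΩ : IsOpen Ω) (hconv : Convex ℝ Ω)
    (hg : DifferentiableOn ℂ g Ω) {z₀ v : E} (e : E) (hz₀ : z₀ ∈ Ω) (hz₁ : z₀ + v ∈ Ω)
    (h0 : g z₀ = 0) (h1 : g (z₀ + v) ≠ 0) :
    ∃ z : E, ∃ C δ : ℝ, 0 < δ ∧ ∃ w : ℂ → ℂ,
      (∀ t ∈ ball (0 : ℂ) δ, z + t • e + w t • v ∈ Ω ∧ g (z + t • e + w t • v) = 0) ∧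
      ∀ t ∈ ball (0 : ℂ) δ, ∀ t' ∈ ball (0 : ℂ) δ, ‖w t - w t'‖ ≤ C * ‖t - t'‖ := by
  -- `g` is not identically zero on the line through `z₀` in direction `v`, so some derivative at `z₀`
  -- is nonzero
  have hex : ∃ k : ℕ, ∃ z ∈ Ω, g z = 0 ∧ dirDeriv g v k z ≠ 0 := by
    by_contra hno
    push Not at hno
    have hall : ∀ k, dirDeriv g v k z₀ = 0 := fun k => hno k z₀ hz₀ h0
    set S : Set ℂ := {w : ℂ | z₀ + w • v ∈ Ω} with hS
    have hSo : IsOpen S := isOpen_line hΩ z₀ v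
    have hSc : Convex ℝ S := by
      intro a ha b hb p q hp hq hpq
      have := hconv ha hb hp hq hpq
      simp only [hS, mem_ofPred_eq]
      convert this using 1
      have hz : z₀ = p • z₀ + q • z₀ := by rw [← add_smul, hpq, one_smul]
      rw [add_smul, smul_add, smul_add, smul_assoc, smul_assoc]
      nth_rewrite 1 [hz]
      abel
    have hS0 : (0 : ℂ) ∈ S := by simpa [hS] using hz₀
    have hS1 : (1 : ℂ) ∈ S := by simpa [hS] using hz₁
    have han : AnalyticOnNhd ℂ (fun w : ℂ => g (z₀ + w • v)) S :=
      (differentiableOn_line hΩ hg z₀ v).analyticOnNhd hSo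
    have htop : analyticOrderAt (fun w : ℂ => g (z₀ + w • v)) 0 = ⊤ := by
      refine ENat.eq_top_iff_forall_ge.2 fun k => ?_
      rw [natCast_le_analyticOrderAt_iff_iteratedDeriv_eq_zero (han 0 hS0)]
      intro i _
      rw [iteratedDeriv_line hΩ hg z₀ v i 0 hS0]
      simpa using hall i
    rw [analyticOrderAt_eq_top] at htop
    have := han.eqOn_zero_of_preconnected_of_eventuallyEq_zero hSc.isPreconnected hS0 htop hS1
    simp at this
    exact h1 this
  classical
  set k := Nat.find hex with hk
  obtain ⟨z, hz, hgz, hkz⟩ := Nat.find_spec hex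
  have hkmin : ∀ i < k, ∀ y ∈ Ω, g y = 0 → dirDeriv g v i y = 0 := by
    intro i hi y hy hy0
    have := Nat.find_min hex hi
    push Not at this
    exact this y hy hy0
  have hkpos : k ≠ 0 := by
    intro h
    rw [← hk, h] at hkz
    exact hkz hgz
  obtain ⟨j, hj⟩ := Nat.exists_eq_succ_of_ne_zero hkpos
  rw [← hk, hj] at hkz
  set ψ := dirDeriv g v j with hψ
  have hψ0 : ∀ y ∈ Ω, g y = 0 → ψ y = 0 := hkmin j (by omega)
  have hψd : HasStrictFDerivAt ψ (fderiv ℂ ψ z) z :=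
    hasStrictFDerivAt_of_holomorphic hΩ (differentiableOn_dirDeriv hΩ hg v j) hz
  set A := fderiv ℂ ψ z with hA
  have hAv : A v ≠ 0 := hkz
  -- the zero `z` is isolated on its line in direction `v`, so `eventually_exists_zero` applies
  have hiso : ∀ᶠ w : ℂ in 𝓝[≠] 0, g (z + w • v) ≠ 0 := by
    have h0' : (0 : ℂ) ∈ {w : ℂ | z + w • v ∈ Ω} := by simpa using hz
    have han : AnalyticAt ℂ (fun w : ℂ => g (z + w • v)) 0 :=
      ((differentiableOn_line hΩ hg z v).analyticOnNhd (isOpen_line hΩ z v)) 0 h0'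
    rcases han.eventually_eq_zero_or_eventually_ne_zero with h | h
    · exfalso
      have hit : iteratedDeriv (j + 1) (fun w : ℂ => g (z + w • v)) 0 = 0 := by
        have : (fun w : ℂ => g (z + w • v)) =ᶠ[𝓝 0] fun _ => (0 : ℂ) := h
        rw [this.iteratedDeriv_eq]
        simp
      rw [iteratedDeriv_line hΩ hg z v (j + 1) 0 h0'] at hit
      apply hAv
      simpa [dirDeriv] using hit
    · exact h
  set a : ℝ := ‖A v‖ with ha
  have hapos : 0 < a := norm_pos_iff.2 hAv
  set c : ℝ := a / (2 * (‖v‖ + 1)) with hc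
  have hcpos : 0 < c := by positivity
  have hcv : c * ‖v‖ ≤ a / 2 := by
    rw [hc, div_mul_eq_mul_div, div_le_div_iff₀ (by positivity) (by positivity)]
    nlinarith [norm_nonneg v]
  have hst := (hψd.isLittleO.def hcpos)
  rw [nhds_prod_eq] at hst
  obtain ⟨N, hN, hNb⟩ := mem_prod_self_iff.1 hst
  obtain ⟨ε, hε, hεN⟩ := Metric.mem_nhds_iff.1 hN
  set P : ℂ × ℂ → E := fun q => z + q.1 • e + q.2 • v with hP
  have hPc : Continuous P := by fun_prop
  obtain ⟨δ₁, hδ₁, hδ₁'⟩ := Metric.isOpen_iff.1 (isOpen_ball (x := z) (ε := ε) |>.preimage hPc)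
    (0, 0) (by simpa [hP] using hε)
  obtain ⟨δ₂, hδ₂, hδ₂'⟩ := Metric.eventually_nhds_iff.1
    (eventually_exists_zero hΩ hg e hz hgz hiso hδ₁)
  have hδ₂'' : ∀ t : ℂ, dist t 0 < δ₂ → ∃ w : ℂ, ‖w‖ < δ₁ ∧ z + t • e + w • v ∈ Ω ∧
      g (z + t • e + w • v) = 0 := fun t ht => hδ₂' ht
  choose! w hw using hδ₂''
  refine ⟨z, (‖A e‖ + c * ‖e‖) / (a / 2), min δ₁ δ₂, by positivity, w, ?_, ?_⟩
  · intro t ht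
    have ht' : dist t 0 < δ₂ := (mem_ball.1 ht).trans_le (min_le_right _ _)
    exact (hw t ht').2
  · have hball : ∀ t ∈ ball (0 : ℂ) (min δ₁ δ₂), z + t • e + w t • v ∈ N := by
      intro t ht
      refine hεN (hδ₁' (?_ : (t, w t) ∈ _))
      have ht1 : dist t 0 < δ₁ := (mem_ball.1 ht).trans_le (min_le_left _ _)
      have ht2 : dist t 0 < δ₂ := (mem_ball.1 ht).trans_le (min_le_right _ _)
      have := (hw t ht2).1
      rw [mem_ball, Prod.dist_eq, max_lt_iff]
      exact ⟨ht1, by simpa using this⟩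
    intro t ht t' ht'
    have hd2 : ∀ s ∈ ball (0 : ℂ) (min δ₁ δ₂), dist s 0 < δ₂ :=
      fun s hs => (mem_ball.1 hs).trans_le (min_le_right _ _)
    have hb := hNb (mk_mem_prod (hball t ht) (hball t' ht'))
    have e1 := hψ0 _ (hw t (hd2 t ht)).2.1 (hw t (hd2 t ht)).2.2
    have e2 := hψ0 _ (hw t' (hd2 t' ht')).2.1 (hw t' (hd2 t' ht')).2.2
    simp only [mem_ofPred_eq, e1, e2, sub_self, zero_sub, norm_neg] at hb
    have hdiff : z + t • e + w t • v - (z + t' • e + w t' • v) =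
        (t - t') • e + (w t - w t') • v := by rw [sub_smul, sub_smul]; abel
    rw [hdiff, map_add, map_smul, map_smul] at hb
    have h3 : ‖(w t - w t') • A v‖ ≤
        ‖(t - t') • A e + (w t - w t') • A v‖ + ‖(t - t') • A e‖ := by
      have := norm_sub_le ((t - t') • A e + (w t - w t') • A v) ((t - t') • A e)
      rwa [add_sub_cancel_left] at this
    have h4 : ‖(t - t') • e + (w t - w t') • v‖ ≤ ‖t - t'‖ * ‖e‖ + ‖w t - w t'‖ * ‖v‖ := by
      refine (norm_add_le _ _).trans ?_
      rw [norm_smul, norm_smul]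
    rw [norm_smul] at h3
    rw [norm_smul (t - t') (A e)] at h3
    rw [div_mul_eq_mul_div, le_div_iff₀ (by positivity)]
    have h5 := mul_le_mul_of_nonneg_left h4 hcpos.le
    have h6 := mul_le_mul_of_nonneg_right hcv (norm_nonneg (w t - w t'))
    nlinarith
end curve

end BallFill

end

/-! ### Osgood's theorem: the induction -/

section
open Metric Set Filter Topology

namespace BallFill
universe u

variable {E F : Type u} [NormedAddCommGroup E] [NormedSpace ℂ E] [FiniteDimensional ℂ E]
    [NormedAddCommGroup F] [NormedSpace ℂ F] [FiniteDimensional ℂ F]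

/-- The Jacobian determinant in some bases: a holomorphic function vanishing exactly at the points
where the derivative is not injective. -/
lemma exists_jacobian {Ω : Set E} {f : E → F} (hΩ : IsOpen Ω) (hf : DifferentiableOn ℂ f Ω)
    (hEF : Module.finrank ℂ E = Module.finrank ℂ F) :
    ∃ g : E → ℂ, DifferentiableOn ℂ g Ω ∧
      ∀ z ∈ Ω, g z ≠ 0 ↔ Function.Injective (fderiv ℂ f z) := by
  have : CompleteSpace F := FiniteDimensional.complete ℂ F
  let bE := Module.finBasis ℂ E
  let bF := (Module.finBasis ℂ F).reindex (finCongr hEF.symm)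
  refine ⟨fun z => (LinearMap.toMatrix bE bF (fderiv ℂ f z : E →ₗ[ℂ] F)).det, ?_, ?_⟩
  · simp only [Matrix.det_apply]
    refine DifferentiableOn.fun_sum fun σ _ => ?_
    refine DifferentiableOn.const_smul ?_ _
    intro z hz
    refine DifferentiableAt.differentiableWithinAt ?_
    refine (HasFDerivAt.finsetProd fun i _ => DifferentiableAt.hasFDerivAt ?_).differentiableAt
    refine DifferentiableOn.differentiableAt ?_ (hΩ.mem_nhds hz)
    simp only [LinearMap.toMatrix_apply]
    have h1 := differentiableOn_fderiv_apply hΩ hf (bE i)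
    have h2 := (LinearMap.toContinuousLinearMap (bF.coord (σ i))).differentiable
    exact h2.comp_differentiableOn h1
  · intro z _
    constructor
    · intro h
      have hu : IsUnit (LinearMap.toMatrix bE bF (fderiv ℂ f z : E →ₗ[ℂ] F)).det :=
        isUnit_iff_ne_zero.2 h
      exact (LinearEquiv.ofIsUnitDet hu).injective
    · intro h
      have := LinearEquiv.isUnit_det
        (LinearEquiv.ofInjectiveOfFinrankEq (fderiv ℂ f z : E →ₗ[ℂ] F) h hEF) bE bF
      exact this.ne_zero

lemma osgoodDim_one : OsgoodDim.{u} 1 := by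
  intro E F _ _ _ _ _ _ hE hF Ω f hΩ hf hinj z hz
  rcases fderiv_eq_zero_or_injective (n := 1) (fun k hk hk' => by omega) hE hF hΩ hf hinj hz
    with h | h
  swap
  · exact h
  exfalso
  have : Nontrivial E := Module.nontrivial_of_finrank_pos (R := ℂ) (by omega)
  obtain ⟨v, hv⟩ := exists_ne (0 : E)
  let l : F ≃L[ℂ] ℂ := ContinuousLinearEquiv.ofFinrankEq (by rw [hF, Module.finrank_self])
  have hz0 : z + (0 : ℂ) • v ∈ Ω := by simpa using hz
  have hd : ∀ t ∈ {t : ℂ | z + t • v ∈ Ω},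
      HasDerivAt (fun t : ℂ => l (f (z + t • v))) (l (fderiv ℂ f (z + t • v) v)) t := fun t ht =>
    (l : F →L[ℂ] ℂ).hasFDerivAt.comp_hasDerivAt t
      (hasDerivAt_line (hf.differentiableAt (hΩ.mem_nhds ht)))
  refine deriv_ne_zero_of_injOn (isOpen_line hΩ z v)
    (fun t ht => (hd t ht).differentiableAt.differentiableWithinAt) ?_ (z := 0) hz0 ?_
  · intro t ht t' ht' htt
    have h1 := hinj ht ht' (l.injective htt)
    exact smul_left_injective ℂ hv (add_left_cancel h1)
  · rw [(hd 0 hz0).deriv]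
    simp [h]

/-- If the derivative of `f` were not injective at `z`, there would be a Lipschitz curve of zeros of the
Jacobian determinant. By `fderiv_eq_zero_or_injective` the derivative of `f` vanishes along it, so
`f` is constant on the curve, contradicting injectivity. -/
lemma osgood_step {n : ℕ} (hn : 2 ≤ n) (IH : ∀ k < n, 0 < k → OsgoodDim.{u} k) :
    OsgoodDim.{u} n := by
  intro E F _ _ _ _ _ _ hE hF Ω' f hΩ' hf' hinj' z hz
  by_contra hcon
  obtain ⟨r, hr, hrΩ⟩ := Metric.isOpen_iff.1 hΩ' z hz
  set Ω := ball z r with hΩdef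
  have hΩ : IsOpen Ω := isOpen_ball
  have hzΩ : z ∈ Ω := mem_ball_self hr
  have hf : DifferentiableOn ℂ f Ω := hf'.mono hrΩ
  have hinj : InjOn f Ω := hinj'.mono hrΩ
  have hconv : Convex ℝ Ω := convex_ball z r
  have hdich : ∀ y ∈ Ω, fderiv ℂ f y = 0 ∨ Function.Injective (fderiv ℂ f y) := fun y hy =>
    fderiv_eq_zero_or_injective IH hE hF hΩ hf hinj hy
  have hnt : Nontrivial E := Module.nontrivial_of_finrank_pos (R := ℂ) (by omega)
  obtain ⟨g, hg, hgiff⟩ := exists_jacobian hΩ hf (hE.trans hF.symm)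
  -- otherwise `f` would be constant on `Ω`
  have hex : ∃ y ∈ Ω, fderiv ℂ f y ≠ 0 := by
    by_contra hno
    push Not at hno
    obtain ⟨v, hv⟩ := exists_ne (0 : E)
    set y := z + ((r / 2 / ‖v‖ : ℝ) : ℂ) • v with hy
    have hyv : y - z = ((r / 2 / ‖v‖ : ℝ) : ℂ) • v := by simp [hy]
    have hv' : 0 < ‖v‖ := norm_pos_iff.2 hv
    have hyΩ : y ∈ Ω := by
      rw [hΩdef, mem_ball, dist_eq_norm, hyv, norm_smul, Complex.norm_real, Real.norm_eq_abs,
        abs_of_pos (by positivity), div_mul_cancel₀ _ hv'.ne']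
      linarith
    have := hΩ.is_const_of_fderiv_eq_zero (𝕜 := ℂ) hconv.isPreconnected hf
      (fun x hx => by simpa using hno x hx) hyΩ hzΩ
    have h2 := hinj hyΩ hzΩ this
    rw [← sub_eq_zero, hyv, smul_eq_zero] at h2
    rcases h2 with h2 | h2
    · have h3 : (r / 2 / ‖v‖ : ℝ) = 0 := by exact_mod_cast h2
      have : 0 < r / 2 / ‖v‖ := by positivity
      exact this.ne' h3
    · exact hv h2
  obtain ⟨y, hy, hy0⟩ := hex
  have hgz : g z = 0 := by
    by_contra h
    exact hcon ((hgiff z hzΩ).1 h)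
  have hgy : g y ≠ 0 := (hgiff y hy).2 ((hdich y hy).resolve_left hy0)
  set v := y - z with hv
  have hzv : z + v = y := by simp [hv]
  obtain ⟨e, he⟩ : ∃ e : E, e ∉ Submodule.span ℂ {v} := by
    by_contra hno
    push Not at hno
    have h1 : Submodule.span ℂ {v} = ⊤ := Submodule.eq_top_iff'.2 hno
    have h2 := finrank_span_le_card (R := ℂ) ({v} : Set E)
    rw [h1, finrank_top, hE] at h2
    simp at h2
    omega
  obtain ⟨p, C, δ, hδ, w, hw, hlip⟩ := exists_zero_curve hΩ hconv hg e hzΩ (by rwa [hzv]) hgz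
    (by rwa [hzv])
  -- the curve of zeros of the Jacobian determinant
  set c : ℂ → E := fun t => p + t • e + w t • v with hc
  have hclip : ∀ t ∈ ball (0 : ℂ) δ, ∀ t' ∈ ball (0 : ℂ) δ,
      ‖c t - c t'‖ ≤ (‖e‖ + C * ‖v‖) * ‖t - t'‖ := by
    intro t ht t' ht'
    have hdiff : c t - c t' = (t - t') • e + (w t - w t') • v := by
      simp only [hc]; rw [sub_smul, sub_smul]; abel
    rw [hdiff]
    refine (norm_add_le _ _).trans ?_
    rw [norm_smul, norm_smul]
    have := mul_le_mul_of_nonneg_right (hlip t ht t' ht') (norm_nonneg v)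
    linarith
  have hf0 : ∀ t ∈ ball (0 : ℂ) δ, HasFDerivAt f (0 : E →L[ℂ] F) (c t) := by
    intro t ht
    have h1 := hw t ht
    have h2 : fderiv ℂ f (c t) = 0 := by
      rcases hdich _ h1.1 with h | h
      · exact h
      · exact absurd h1.2 ((hgiff _ h1.1).2 h)
    rw [← h2]
    exact (hf.differentiableAt (hΩ.mem_nhds h1.1)).hasFDerivAt
  have hderiv : ∀ t ∈ ball (0 : ℂ) δ, HasDerivAt (fun t => f (c t)) 0 t := by
    intro t ht
    have hO : (fun t' => c t' - c t) =O[𝓝 t] fun t' => t' - t := by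
      refine Asymptotics.IsBigO.of_bound (‖e‖ + C * ‖v‖) ?_
      filter_upwards [isOpen_ball.mem_nhds ht] with t' ht'
      exact hclip t' ht' t ht
    have hcont : Tendsto c (𝓝 t) (𝓝 (c t)) := by
      rw [tendsto_iff_norm_sub_tendsto_zero]
      refine (hO.trans_tendsto ?_).norm.trans (by simp)
      have : Continuous fun t' : ℂ => t' - t := by fun_prop
      simpa using this.tendsto t
    have h1 := (hf0 t ht).isLittleO.comp_tendsto hcont
    have h2 := h1.trans_isBigO hO
    rw [hasDerivAt_iff_isLittleO]
    simpa [Function.comp_def] using h2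
  have ht1 : (((δ / 2 : ℝ)) : ℂ) ∈ ball (0 : ℂ) δ := by
    rw [mem_ball_zero_iff, Complex.norm_real, Real.norm_eq_abs, abs_of_pos (by positivity)]
    linarith
  have ht0 : (0 : ℂ) ∈ ball (0 : ℂ) δ := mem_ball_self hδ
  have hconst := isOpen_ball.is_const_of_deriv_eq_zero (𝕜 := ℂ)
    (convex_ball (0 : ℂ) δ).isPreconnected
    (fun t ht => (hderiv t ht).differentiableAt.differentiableWithinAt)
    (fun t ht => (hderiv t ht).deriv) ht1 ht0
  have h1 := hinj (hw _ ht1).1 (hw _ ht0).1 hconst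
  apply he
  have hne : (((δ / 2 : ℝ)) : ℂ) ≠ 0 := by
    have : δ / 2 ≠ 0 := by positivity
    exact_mod_cast this
  have h2 : (((δ / 2 : ℝ)) : ℂ) • e = (w 0 - w ((δ / 2 : ℝ) : ℂ)) • v := by
    rw [zero_smul, add_zero, add_assoc] at h1
    have := add_left_cancel h1
    rw [sub_smul, ← this]; abel
  have h3 : e = ((((δ / 2 : ℝ)) : ℂ)⁻¹ * (w 0 - w ((δ / 2 : ℝ) : ℂ))) • v := by
    rw [mul_smul, ← h2, inv_smul_smul₀ hne]
  rw [h3]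
  exact Submodule.smul_mem _ _ (Submodule.mem_span_singleton_self v)

lemma osgoodDim (n : ℕ) (hn : 0 < n) : OsgoodDim.{u} n := by
  induction n using Nat.strong_induction_on with
  | _ n ih =>
    rcases Nat.lt_or_ge n 2 with h | h
    · have : n = 1 := by omega
      subst this
      exact osgoodDim_one
    · exact osgood_step h fun k hk hpos => ih k hk hpos

/-- Osgood's theorem: an injective holomorphic map between equidimensional spaces is an immersion. -/
theorem injective_fderiv_of_injOn (hEF : Module.finrank ℂ E = Module.finrank ℂ F) {Ω : Set E}
    {f : E → F} (hΩ : IsOpen Ω) (hf : DifferentiableOn ℂ f Ω) (hinj : InjOn f Ω) {z : E}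
    (hz : z ∈ Ω) : Function.Injective (fderiv ℂ f z) := by
  rcases Nat.eq_zero_or_pos (Module.finrank ℂ E) with h | h
  · have : Subsingleton E := Module.finrank_zero_iff.1 h
    exact fun a b _ => Subsingleton.elim a b
  · exact osgoodDim _ h E F rfl hEF.symm Ω f hΩ hf hinj z hz

end BallFill

end

/-! ### Consequences of Osgood's theorem -/

section
open Metric Set Filter Topology

namespace BallFill
universe u

variable {E : Type u} [NormedAddCommGroup E] [NormedSpace ℂ E] [FiniteDimensional ℂ E]

lemma exists_hasStrictFDerivAt_equiv {Ω : Set E} {f : E → E} (hΩ : IsOpen Ω)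
    (hf : DifferentiableOn ℂ f Ω) (hinj : InjOn f Ω) {z : E} (hz : z ∈ Ω) :
    ∃ A : E ≃L[ℂ] E, HasStrictFDerivAt f (A : E →L[ℂ] E) z := by
  have h := injective_fderiv_of_injOn rfl hΩ hf hinj hz
  refine ⟨(LinearEquiv.ofInjectiveEndo (fderiv ℂ f z : E →ₗ[ℂ] E) h).toContinuousLinearEquiv, ?_⟩
  have : (((LinearEquiv.ofInjectiveEndo (fderiv ℂ f z : E →ₗ[ℂ] E) h).toContinuousLinearEquiv :
      E ≃L[ℂ] E) : E →L[ℂ] E) = fderiv ℂ f z := by ext x; rfl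
  rw [this]
  exact hasStrictFDerivAt_of_holomorphic hΩ hf hz

lemma isOpen_image_of_injOn {Ω V : Set E} {f : E → E} (hΩ : IsOpen Ω)
    (hf : DifferentiableOn ℂ f Ω) (hinj : InjOn f Ω) (hV : IsOpen V) (hVΩ : V ⊆ Ω) :
    IsOpen (f '' V) := by
  have : CompleteSpace E := FiniteDimensional.complete ℂ E
  rw [isOpen_iff_mem_nhds]
  rintro _ ⟨z, hz, rfl⟩
  obtain ⟨A, hA⟩ := exists_hasStrictFDerivAt_equiv hΩ hf hinj (hVΩ hz)
  rw [← hA.map_nhds_eq_of_equiv]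
  exact image_mem_map (hV.mem_nhds hz)

/-- On a compact set, an injective holomorphic map is bounded below by a multiple of the distance. -/
lemma exists_antilipschitz {Ω K : Set E} {f : E → E} (hΩ : IsOpen Ω)
    (hf : DifferentiableOn ℂ f Ω) (hinj : InjOn f Ω) (hK : IsCompact K) (hKΩ : K ⊆ Ω) :
    ∃ c : ℝ, 0 < c ∧ ∀ x ∈ K, ∀ y ∈ K, c * ‖x - y‖ ≤ ‖f x - f y‖ := by
  let p : Set (E × E) → Prop := fun S =>
    ∃ c : ℝ, 0 < c ∧ ∀ q ∈ S, c * ‖q.1 - q.2‖ ≤ ‖f q.1 - f q.2‖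
  have hp : p (K ×ˢ K) := by
    refine (hK.prod hK).induction_on (p := p) ⟨1, one_pos, by simp⟩ ?_ ?_ ?_
    · rintro S T hST ⟨c, hc, h⟩
      exact ⟨c, hc, fun q hq => h q (hST hq)⟩
    · rintro S T ⟨c, hc, h⟩ ⟨c', hc', h'⟩
      refine ⟨min c c', lt_min hc hc', ?_⟩
      rintro q (hq | hq)
      · exact (mul_le_mul_of_nonneg_right (min_le_left _ _) (norm_nonneg _)).trans (h q hq)
      · exact (mul_le_mul_of_nonneg_right (min_le_right _ _) (norm_nonneg _)).trans (h' q hq)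
    · rintro ⟨x, y⟩ ⟨hx, hy⟩
      suffices h : ∃ c : ℝ, 0 < c ∧ ∀ᶠ q : E × E in 𝓝 (x, y), c * ‖q.1 - q.2‖ ≤ ‖f q.1 - f q.2‖ by
        obtain ⟨c, hc, h⟩ := h
        exact ⟨_, mem_nhdsWithin_of_mem_nhds h, c, hc, fun q hq => hq⟩
      rcases eq_or_ne x y with rfl | hne
      · obtain ⟨A, hA⟩ := exists_hasStrictFDerivAt_equiv hΩ hf hinj (hKΩ hx)
        have hb : ∀ v : E, ‖v‖ ≤ (‖(A.symm : E →L[ℂ] E)‖ + 1) * ‖A v‖ := by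
          intro v
          have := (A.symm : E →L[ℂ] E).le_opNorm (A v)
          simp at this
          nlinarith [norm_nonneg (A v)]
        set B := ‖(A.symm : E →L[ℂ] E)‖ + 1 with hB
        have hBpos : 0 < B := by positivity
        refine ⟨1 / (2 * B), by positivity, ?_⟩
        filter_upwards [hA.isLittleO.def (c := 1 / (2 * B)) (by positivity)] with q hq
        have h1 := hb (q.1 - q.2)
        have h2 : ‖A (q.1 - q.2)‖ ≤ ‖f q.1 - f q.2‖ + ‖f q.1 - f q.2 - A (q.1 - q.2)‖ := by
          have := norm_sub_le (f q.1 - f q.2) (f q.1 - f q.2 - A (q.1 - q.2))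
          simpa using this
        have h3 : ‖q.1 - q.2‖ / B ≤ ‖A (q.1 - q.2)‖ := by
          rw [div_le_iff₀ hBpos]; linarith
        have h4 : 1 / (2 * B) * ‖q.1 - q.2‖ = ‖q.1 - q.2‖ / B / 2 := by field_simp
        simp only [ContinuousLinearEquiv.coe_coe] at hq
        rw [h4] at hq ⊢
        linarith
      · have hd : 0 < ‖f x - f y‖ := norm_pos_iff.2 (sub_ne_zero.2
          fun h => hne (hinj (hKΩ hx) (hKΩ hy) h))
        have hn : 0 < ‖x - y‖ := norm_pos_iff.2 (sub_ne_zero.2 hne)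
        refine ⟨‖f x - f y‖ / (2 * ‖x - y‖), by positivity, ?_⟩
        have hcx : ContinuousAt f x := hf.continuousOn.continuousAt (hΩ.mem_nhds (hKΩ hx))
        have hcy : ContinuousAt f y := hf.continuousOn.continuousAt (hΩ.mem_nhds (hKΩ hy))
        have hl : ContinuousAt (fun q : E × E => ‖f x - f y‖ / (2 * ‖x - y‖) * ‖q.1 - q.2‖) (x, y) := by
          fun_prop
        have hr : ContinuousAt (fun q : E × E => ‖f q.1 - f q.2‖) (x, y) :=
          ((ContinuousAt.comp (f := Prod.fst) (g := f) hcx continuousAt_fst).sub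
            (ContinuousAt.comp (f := Prod.snd) (g := f) hcy continuousAt_snd)).norm
        have hlt : ‖f x - f y‖ / (2 * ‖x - y‖) * ‖x - y‖ < ‖f x - f y‖ := by
          have : ‖f x - f y‖ / (2 * ‖x - y‖) * ‖x - y‖ = ‖f x - f y‖ / 2 := by field_simp
          linarith
        exact (hl.eventually_lt hr hlt).mono fun q hq => hq.le
  obtain ⟨c, hc, h⟩ := hp
  exact ⟨c, hc, fun x hx y hy => h (x, y) ⟨hx, hy⟩⟩

end BallFill

end

/-! ### Polar decomposition and the derivative at a touching point -/

section
open Metric Set Filter Topology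

namespace BallFill

lemma inner_self_complex {E : Type*} [NormedAddCommGroup E] [InnerProductSpace ℂ E] (x : E) :
    inner ℂ x x = ((‖x‖ ^ 2 : ℝ) : ℂ) := by
  rw [inner_self_eq_norm_sq_to_K]; push_cast; rfl

section polar
variable {K E : Type*} [NormedAddCommGroup K] [InnerProductSpace ℂ K] [FiniteDimensional ℂ K]
  [NormedAddCommGroup E] [InnerProductSpace ℂ E] [FiniteDimensional ℂ E]

/-- The isometric factor `T` of the polar decomposition `B = T P` of an injective map: since `P`
is positive, `B + s T = T (P + s)` is bounded below by `B` for `0 ≤ re s`. -/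
lemma exists_polar (B : K →ₗ[ℂ] E) (hB : Function.Injective B) :
    ∃ T : K →ₗ[ℂ] E, (∀ k, ‖T k‖ = ‖k‖) ∧ (∀ k, ∃ k', T k = B k') ∧
      ∀ k (s : ℂ), 0 ≤ s.re → ‖B k‖ ≤ ‖B k + s • T k‖ := by
  set S : K →ₗ[ℂ] K := B.adjoint ∘ₗ B with hS
  have hsym : S.IsSymmetric := fun x y => by
    simp [hS, LinearMap.adjoint_inner_left, LinearMap.adjoint_inner_right]
  set b := hsym.eigenvectorBasis (n := Module.finrank ℂ K) rfl with hb
  set l := hsym.eigenvalues (n := Module.finrank ℂ K) rfl with hl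
  have hBB : ∀ i j, inner ℂ (B (b i)) (B (b j)) = if i = j then (l j : ℂ) else 0 := by
    intro i j
    have h1 : inner ℂ (B (b i)) (B (b j)) = inner ℂ (b i) (S (b j)) := by
      simp [hS, LinearMap.adjoint_inner_right]
    rw [h1, hsym.apply_eigenvectorBasis, inner_smul_right,
      orthonormal_iff_ite.1 b.orthonormal i j]
    split_ifs <;> simp [hl]
  have hlpos : ∀ i, 0 < l i := by
    intro i
    have h1 := hBB i i
    rw [if_pos rfl, inner_self_complex] at h1
    have h2 : ‖B (b i)‖ ^ 2 = l i := by exact_mod_cast h1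
    rw [← h2]
    have : B (b i) ≠ 0 := by
      intro h
      have h3 : b i = 0 := hB (by simpa using h)
      have := b.orthonormal.1 i
      rw [h3] at this; simp at this
    positivity
  set r : Fin (Module.finrank ℂ K) → ℝ := fun i => √(l i) with hr
  have hrpos : ∀ i, 0 < r i := fun i => Real.sqrt_pos.2 (hlpos i)
  have hrsq : ∀ i, r i * r i = l i := fun i => Real.mul_self_sqrt (hlpos i).le
  set w : Fin (Module.finrank ℂ K) → E := fun i => ((r i)⁻¹ : ℂ) • B (b i) with hw
  have hwo : Orthonormal ℂ w := by
    rw [orthonormal_iff_ite]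
    intro i j
    simp only [hw, inner_smul_left, inner_smul_right, hBB]
    split_ifs with h
    · subst h
      have : (r i : ℂ) ≠ 0 := by exact_mod_cast (hrpos i).ne'
      rw [← hrsq]
      push_cast
      simp
      field_simp
    · simp
  have hBw : ∀ i, B (b i) = (r i : ℂ) • w i := by
    intro i
    have : (r i : ℂ) ≠ 0 := by exact_mod_cast (hrpos i).ne'
    simp only [hw]
    rw [smul_smul, mul_inv_cancel₀ this, one_smul]
  set T : K →ₗ[ℂ] E := b.toBasis.constr ℂ w with hT
  have hTb : ∀ i, T (b i) = w i := by
    intro i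
    have := b.toBasis.constr_basis ℂ w i
    rwa [b.coe_toBasis] at this
  have hnorm : ∀ c : Fin (Module.finrank ℂ K) → ℂ, ‖∑ i, c i • w i‖ ^ 2 = ∑ i, ‖c i‖ ^ 2 := by
    intro c
    have h1 := hwo.inner_sum c c Finset.univ
    rw [inner_self_complex] at h1
    have h2 : ∀ i, (starRingEnd ℂ) (c i) * c i = ((‖c i‖ ^ 2 : ℝ) : ℂ) := by
      intro i; rw [mul_comm, Complex.mul_conj, Complex.normSq_eq_norm_sq]
    simp only [h2] at h1
    exact_mod_cast h1
  have hexp : ∀ k : K, k = ∑ i, b.repr k i • b i := fun k => (b.sum_repr k).symm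
  have hTk : ∀ k, T k = ∑ i, b.repr k i • w i := by
    intro k
    conv_lhs => rw [hexp k]
    simp [hTb]
  have hBk : ∀ k, B k = ∑ i, (b.repr k i * r i) • w i := by
    intro k
    conv_lhs => rw [hexp k]
    simp [hBw, mul_smul]
  refine ⟨T, fun k => ?_, fun k => ?_, fun k s hs => ?_⟩
  · rw [← sq_eq_sq₀ (norm_nonneg _) (norm_nonneg _), hTk, hnorm, ← b.sum_sq_norm_inner_right k]
    simp [b.repr_apply_apply]
  · refine ⟨∑ i, (b.repr k i * (r i : ℂ)⁻¹) • b i, ?_⟩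
    rw [hTk]
    simp [hw, smul_smul]
  · rw [← sq_le_sq₀ (norm_nonneg _) (norm_nonneg _)]
    have h1 : B k + s • T k = ∑ i, (b.repr k i * (r i + s)) • w i := by
      rw [hBk, hTk, Finset.smul_sum, ← Finset.sum_add_distrib]
      refine Finset.sum_congr rfl fun i _ => ?_
      rw [smul_smul s, ← add_smul]
      ring_nf
    rw [h1, hBk, hnorm, hnorm]
    refine Finset.sum_le_sum fun i _ => ?_
    rw [norm_mul, norm_mul]
    have h2 : ‖(r i : ℂ)‖ ≤ ‖(r i : ℂ) + s‖ := by
      have h3 := Complex.re_le_norm ((r i : ℂ) + s)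
      simp only [Complex.add_re, Complex.ofReal_re] at h3
      rw [Complex.norm_real, Real.norm_eq_abs, abs_of_pos (hrpos i)]
      linarith
    gcongr
end polar

section touch
variable {E : Type*} [NormedAddCommGroup E] [InnerProductSpace ℂ E] [FiniteDimensional ℂ E]

/-- At a point `e` of the unit sphere where `F` is closest to `p`, the derivative maps the complex
tangent space of the sphere to that of the ball around `p`, and it maps the outward normal `e` to a
vector whose component along `n`, the direction towards `p`, is a positive real number. -/
lemma touch_derivative {F : E → E} {M : E ≃L[ℂ] E} {e p n : E} {d : ℝ} (he : ‖e‖ = 1)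
    (hd : 0 < d) (hp : p = F e + (d : ℂ) • n) (hn : ‖n‖ = 1)
    (hM : HasFDerivAt F (M : E →L[ℂ] E) e)
    (hmin : ∀ z ∈ closedBall (0 : E) 1, d ≤ ‖F z - p‖) :
    (∀ z, inner ℂ e z = 0 → inner ℂ n (M z) = 0) ∧ ∃ a : ℝ, 0 < a ∧ inner ℂ n (M e) = a := by
  have hneg : ∀ h : E, (inner ℂ e h).re < 0 → (inner ℂ n (M h)).re ≤ 0 := by
    intro h hh
    let _ : InnerProductSpace ℝ E := InnerProductSpace.rclikeToReal ℂ E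
    have hline : HasDerivAt (fun t : ℝ => e + (t : ℂ) • h) h 0 := by
      have h1 : HasDerivAt (fun t : ℝ => (t : ℂ)) 1 0 := Complex.ofRealCLM.hasDerivAt
      simpa using (h1.smul_const h).const_add e
    have hM' : HasFDerivAt F ((M : E →L[ℂ] E).restrictScalars ℝ) (e + ((0 : ℝ) : ℂ) • h) := by
      simpa using hM.restrictScalars ℝ
    have h0 := hM'.comp_hasDerivAt (0 : ℝ) hline
    have h1 : HasDerivAt (fun t : ℝ => F (e + (t : ℂ) • h) - p) (M h) 0 := h0.sub_const p
    have h2 := h1.norm_sq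
    have h3 : inner ℝ (F (e + ((0 : ℝ) : ℂ) • h) - p) (M h) = - (d * (inner ℂ n (M h)).re) := by
      have : F (e + ((0 : ℝ) : ℂ) • h) - p = -((d : ℂ) • n) := by simp [hp]
      rw [this, real_inner_eq_re_inner ℂ, inner_neg_left, inner_smul_left]
      simp
    rw [h3] at h2
    by_contra hpos
    push Not at hpos
    have hlt : 2 * -(d * (inner ℂ n (M h)).re) < 0 := by
      have := mul_pos hd hpos; linarith
    have hev := h2.hasDerivWithinAt (s := Ioi 0) |>.isLittleO.def
      (c := d * (inner ℂ n (M h)).re) (mul_pos hd hpos)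
    have hball : ∀ᶠ t : ℝ in 𝓝[>] 0, e + (t : ℂ) • h ∈ closedBall (0 : E) 1 := by
      have hc : ∀ᶠ t : ℝ in 𝓝[>] 0, t * ‖h‖ ^ 2 < -2 * (inner ℂ e h).re := by
        have : Tendsto (fun t : ℝ => t * ‖h‖ ^ 2) (𝓝 0) (𝓝 0) := by
          have : Continuous fun t : ℝ => t * ‖h‖ ^ 2 := by fun_prop
          simpa using this.tendsto 0
        exact (this.eventually_lt_const (by linarith)).filter_mono nhdsWithin_le_nhds
      filter_upwards [hc, self_mem_nhdsWithin] with t ht ht0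
      have ht0' : (0 : ℝ) < t := ht0
      rw [mem_closedBall_zero_iff, ← sq_le_one_iff₀ (norm_nonneg _), norm_add_sq (𝕜 := ℂ), he,
        inner_smul_right, norm_smul, Complex.norm_real, Real.norm_eq_abs, abs_of_pos ht0']
      simp only [RCLike.re_to_complex, Complex.re_ofReal_mul]
      nlinarith
    obtain ⟨t, h5, h6, h7⟩ := (hev.and (hball.and self_mem_nhdsWithin)).exists
    have ht : (0 : ℝ) < t := h7
    have h8 := hmin _ h6
    have h9 : ‖F (e + ((0 : ℝ) : ℂ) • h) - p‖ = d := by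
      simp [hp, norm_smul, hn, abs_of_pos hd]
    rw [h9] at h5
    have h10 : d ^ 2 ≤ ‖F (e + (t : ℂ) • h) - p‖ ^ 2 := by gcongr
    simp only [sub_zero, smul_eq_mul, Real.norm_eq_abs, abs_of_pos ht] at h5
    have h11 := (abs_le.1 h5).2
    have := mul_pos ht (mul_pos hd hpos)
    nlinarith
  have hle : ∀ h : E, (inner ℂ e h).re ≤ 0 → (inner ℂ n (M h)).re ≤ 0 := by
    intro h hh
    have hc : Continuous fun t : ℝ => (inner ℂ n (M (h - (t : ℂ) • e))).re := by fun_prop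
    have ht : Tendsto (fun t : ℝ => (inner ℂ n (M (h - (t : ℂ) • e))).re) (𝓝[>] 0)
        (𝓝 (inner ℂ n (M h)).re) := by
      simpa using (hc.tendsto 0).mono_left nhdsWithin_le_nhds
    refine le_of_tendsto ht ?_
    filter_upwards [self_mem_nhdsWithin] with t ht
    have ht' : (0 : ℝ) < t := ht
    apply hneg
    rw [inner_sub_right, inner_smul_right, inner_self_eq_norm_sq_to_K, he]
    simp
    linarith
  have heq : ∀ h : E, (inner ℂ e h).re = 0 → (inner ℂ n (M h)).re = 0 := by
    intro h hh
    refine le_antisymm (hle h hh.le) ?_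
    have := hle (-h) (by simp [hh])
    simpa using this
  have h1 : ∀ z, inner ℂ e z = 0 → inner ℂ n (M z) = 0 := by
    intro z hz
    have h2 := heq z (by simp [hz])
    have h3 := heq (Complex.I • z) (by simp [hz])
    rw [map_smul, inner_smul_right] at h3
    apply Complex.ext
    · simpa using h2
    · simpa using h3
  refine ⟨h1, (inner ℂ n (M e)).re, ?_, ?_⟩
  · have h2 : 0 ≤ (inner ℂ n (M e)).re := by
      have := hle (-e) (by simp [inner_self_eq_norm_sq_to_K, he])
      simpa using this
    refine lt_of_le_of_ne h2 fun h0 => ?_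
    have him : (inner ℂ n (M e)).im = 0 := by
      have h3 := heq (Complex.I • e) (by simp [inner_self_eq_norm_sq_to_K, he])
      rw [map_smul, inner_smul_right] at h3
      simpa using h3
    have hz : inner ℂ n (M e) = 0 := Complex.ext h0.symm him
    have hall : ∀ z, inner ℂ n (M z) = 0 := by
      intro z
      have hdec : z = inner ℂ e z • e + (z - inner ℂ e z • e) := by abel
      rw [hdec, map_add, inner_add_right, map_smul, inner_smul_right, hz, mul_zero, zero_add]
      apply h1
      rw [inner_sub_right, inner_smul_right, inner_self_eq_norm_sq_to_K, he]
      simp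
    have := hall (M.symm n)
    rw [M.apply_symm_apply, inner_self_eq_norm_sq_to_K, hn] at this
    simp at this
  · have h3 := heq (Complex.I • e) (by simp [inner_self_eq_norm_sq_to_K, he])
    rw [map_smul, inner_smul_right] at h3
    apply Complex.ext
    · simp
    · simpa using h3

/-- The tangential isometry used in the model map: `T` vanishes on `e`, is isometric on the
orthogonal complement of `e`, and is aligned with `M` there. -/
lemma exists_tangential {M : E ≃L[ℂ] E} {e n : E} (he : ‖e‖ = 1)
    (hMn : ∀ z, inner ℂ e z = 0 → inner ℂ n (M z) = 0) :
    ∃ T : E →L[ℂ] E, (∀ z, ‖T z‖ ^ 2 = ‖z‖ ^ 2 - ‖inner ℂ e z‖ ^ 2) ∧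
      (∀ z, inner ℂ n (T z) = 0) ∧
      ∀ z (s : ℂ), inner ℂ e z = 0 → 0 ≤ s.re → ‖M z‖ ≤ ‖M z + s • T z‖ := by
  set K : Submodule ℂ E := (ℂ ∙ e)ᗮ with hK
  have hmem : ∀ z, z ∈ K ↔ inner ℂ e z = 0 := fun z => by
    rw [hK, Submodule.mem_orthogonal_singleton_iff_inner_right]
  obtain ⟨T, hT1, hT2, hT3⟩ := exists_polar ((M : E →L[ℂ] E).toLinearMap ∘ₗ K.subtype)
    (M.injective.comp K.injective_subtype)
  set P : E →L[ℂ] K := K.orthogonalProjectionOnto with hP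
  have hPz : ∀ z, ((P z : K) : E) = z - inner ℂ e z • e := by
    intro z
    have h1 := Submodule.starProjection_orthogonal_val (K := ℂ ∙ e) z
    rw [Submodule.starProjection_unit_singleton ℂ he] at h1
    exact h1
  refine ⟨(LinearMap.toContinuousLinearMap T).comp P, fun z => ?_, fun z => ?_, fun z s hz hs => ?_⟩
  · simp only [ContinuousLinearMap.comp_apply, LinearMap.coe_toContinuousLinearMap', hT1]
    rw [Submodule.coe_norm, hPz, norm_sub_sq (𝕜 := ℂ), inner_smul_right, norm_smul, he,
      inner_mul_symm_re_eq_norm]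
    simp [norm_inner_symm z e]
    ring
  · obtain ⟨k', hk'⟩ := hT2 (P z)
    simp only [ContinuousLinearMap.comp_apply, LinearMap.coe_toContinuousLinearMap', hk']
    exact hMn _ ((hmem _).1 k'.2)
  · have hPz' : ((P z : K) : E) = z := by rw [hPz, hz]; simp
    have := hT3 (P z) s hs
    simp only [LinearMap.comp_apply, Submodule.subtype_apply, hPz'] at this
    exact this
end touch

end BallFill

end

/-! ### The model map -/

section
open Metric Set Filter Topology

namespace BallFill

/-- The principal square root. -/
noncomputable def rt (u : ℂ) : ℂ := u ^ (2⁻¹ : ℂ)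

lemma rt_sq (u : ℂ) : rt u ^ 2 = u := by
  have := Complex.cpow_nat_inv_pow u (n := 2) two_ne_zero
  simpa [rt] using this

lemma norm_rt_sq (u : ℂ) : ‖rt u‖ ^ 2 = ‖u‖ := by rw [← norm_pow, rt_sq]

lemma rt_re_pos {u : ℂ} (hu : 0 < u.re) : 0 < (rt u).re := by
  rw [rt, Complex.cpow_inv_two_re]
  exact Real.sqrt_pos.2 (by positivity)

lemma abs_im_rt_le {u : ℂ} (hu : 0 < u.re) : |(rt u).im| ≤ (rt u).re := by
  have h1 : 0 < ((rt u) ^ 2).re := by rwa [rt_sq]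
  rw [pow_two, Complex.mul_re] at h1
  exact abs_le_of_sq_le_sq (by nlinarith) (rt_re_pos hu).le

lemma rt_ne_zero {u : ℂ} (hu : 0 < u.re) : rt u ≠ 0 := by
  intro h; have := rt_re_pos hu; rw [h] at this; simp at this

lemma ne_zero_of_re_pos {u : ℂ} (hu : 0 < u.re) : u ≠ 0 := by
  rintro rfl; simp at hu

lemma norm_le_re_of_sector {A : ℂ} (h : |A.im| ≤ A.re) : 7 / 10 * ‖A‖ ≤ A.re := by
  have h0 : 0 ≤ A.re := (abs_nonneg _).trans h
  have h1 : ‖A‖ ^ 2 = A.re ^ 2 + A.im ^ 2 := by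
    rw [← Complex.normSq_eq_norm_sq, Complex.normSq_apply]; ring
  have h2 : A.im ^ 2 ≤ A.re ^ 2 := sq_le_sq' (by have := neg_abs_le A.im; linarith)
    ((le_abs_self _).trans h)
  refine abs_le_of_sq_le_sq' ?_ h0 |>.2
  nlinarith

lemma re_inv_nonneg {w : ℂ} (h : 0 ≤ w.re) : 0 ≤ (w⁻¹).re := by
  rw [Complex.inv_re]; exact div_nonneg h (Complex.normSq_nonneg _)

lemma re_mul_nonneg_of_sector {y y' : ℂ} (h : |y.im| ≤ y.re) (h' : |y'.im| ≤ y'.re) :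
    0 ≤ (y * y').re := by
  rw [Complex.mul_re]
  have h1 : |y.im| * |y'.im| ≤ y.re * y'.re :=
    mul_le_mul h h' (abs_nonneg _) ((abs_nonneg _).trans h)
  rw [← abs_mul] at h1
  have := le_abs_self (y.im * y'.im)
  linarith

/-- In the normal direction the linear part and the pole of the model map never compensate each
other: both difference quotients lie in a half plane. -/
lemma normal_bound {y y' : ℂ} {a κ : ℝ} (ha : 0 < a) (hκ : 0 < κ) (h : |y.im| ≤ y.re)
    (h' : |y'.im| ≤ y'.re) (hy : y ≠ 0) (hy' : y' ≠ 0) :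
    a * ‖y ^ 2 - y' ^ 2‖ ≤ 2 * ‖-(a * (y ^ 2 - y' ^ 2)) + κ * (y⁻¹ - y'⁻¹)‖ ∧
    κ * ‖y⁻¹ - y'⁻¹‖ ≤ 3 * ‖-(a * (y ^ 2 - y' ^ 2)) + κ * (y⁻¹ - y'⁻¹)‖ := by
  set A : ℂ := a * (y + y') with hA
  set B : ℂ := κ * (y * y')⁻¹ with hB
  have e1 : (a : ℂ) * (y ^ 2 - y' ^ 2) = (y - y') * A := by rw [hA]; ring
  have e2 : (κ : ℂ) * (y⁻¹ - y'⁻¹) = -((y - y') * B) := by rw [hB]; field_simp; ring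
  have e3 : -(a * (y ^ 2 - y' ^ 2)) + κ * (y⁻¹ - y'⁻¹) = -((y - y') * (A + B)) := by
    rw [e1, e2]; ring
  have n1 : a * ‖y ^ 2 - y' ^ 2‖ = ‖y - y'‖ * ‖A‖ := by
    rw [← norm_mul, ← e1, norm_mul, Complex.norm_real, Real.norm_eq_abs, abs_of_pos ha]
  have n2 : κ * ‖y⁻¹ - y'⁻¹‖ = ‖y - y'‖ * ‖B‖ := by
    rw [← norm_mul, ← norm_neg ((y - y') * B), ← e2, norm_mul, Complex.norm_real, Real.norm_eq_abs, abs_of_pos hκ]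
  have hAs : |A.im| ≤ A.re := by
    have h1 : A.im = a * (y.im + y'.im) := by simp [hA]
    have h2 : A.re = a * (y.re + y'.re) := by simp [hA]
    rw [h1, h2, abs_mul, abs_of_pos ha]
    have := abs_add_le y.im y'.im
    gcongr
    linarith
  have hBr : 0 ≤ B.re := by
    have h1 : B.re = κ * ((y * y')⁻¹).re := by simp only [hB, Complex.re_ofReal_mul]
    rw [h1]
    exact mul_nonneg hκ.le (re_inv_nonneg (re_mul_nonneg_of_sector h h'))
  have h1 := norm_le_re_of_sector hAs
  have h2 : A.re ≤ ‖A + B‖ := by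
    have := Complex.re_le_norm (A + B)
    rw [Complex.add_re] at this
    linarith
  have h3 : ‖A‖ ≤ 2 * ‖A + B‖ := by nlinarith [norm_nonneg A]
  have h4 : ‖B‖ ≤ 3 * ‖A + B‖ := by
    have := norm_sub_le (A + B) A
    rw [add_sub_cancel_left] at this
    linarith
  rw [e3, norm_neg, norm_mul, n1, n2]
  constructor <;> nlinarith [norm_nonneg (y - y')]

variable {E : Type*} [NormedAddCommGroup E] [InnerProductSpace ℂ E]

/-- Linear algebra at the touching point: `M` is the derivative there, `e` and `n` are the unit
normals in the source and the target, `T` is the tangential isometry aligned with `M`, `a` is the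
normal derivative and `μ` a lower bound for `M`. -/
structure ModelData (M T : E →L[ℂ] E) (e n : E) (a μ : ℝ) : Prop where
  norm_e : ‖e‖ = 1
  norm_n : ‖n‖ = 1
  norm_T : ∀ z, ‖T z‖ ^ 2 = ‖z‖ ^ 2 - ‖inner ℂ e z‖ ^ 2
  inner_T : ∀ z, inner ℂ n (T z) = 0
  le_add : ∀ z (s : ℂ), inner ℂ e z = 0 → 0 ≤ s.re → ‖M z‖ ≤ ‖M z + s • T z‖
  a_pos : 0 < a
  inner_M_e : inner ℂ n (M e) = a
  inner_M : ∀ z, inner ℂ e z = 0 → inner ℂ n (M z) = 0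
  μ_pos : 0 < μ
  le_M : ∀ z, μ * ‖z‖ ≤ ‖M z‖

/-- The coordinate `1 - ⟨e, z⟩`, which has positive real part on the unit ball. -/
noncomputable def nrm (e z : E) : ℂ := 1 - inner ℂ e z

/-- The polar part of the model map: large near `e`, and of size `O(κ)` away from `e`. -/
noncomputable def pole (T : E →L[ℂ] E) (e n : E) (κ : ℝ) (z : E) : E :=
  ((κ : ℂ) * (rt (nrm e z))⁻¹) • n + ((κ : ℂ) / 4 * (nrm e z)⁻¹) • T z

namespace ModelData
variable {M T : E →L[ℂ] E} {e n : E} {a μ : ℝ}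

lemma norm_sq_eq (D : ModelData M T e n a μ) (z : E) :
    ‖z‖ ^ 2 = 1 - 2 * (nrm e z).re + ‖nrm e z‖ ^ 2 + ‖T z‖ ^ 2 := by
  have h1 : inner ℂ e z = 1 - nrm e z := by simp [nrm]
  rw [D.norm_T, h1]
  simp only [← Complex.normSq_eq_norm_sq, Complex.normSq_apply, Complex.sub_re, Complex.sub_im,
    Complex.one_re, Complex.one_im]
  ring

lemma dist_sq_eq (D : ModelData M T e n a μ) (z : E) :
    ‖z - e‖ ^ 2 = ‖nrm e z‖ ^ 2 + ‖T z‖ ^ 2 := by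
  have h2 : (inner ℂ z e).re = 1 - (nrm e z).re := by
    rw [← inner_conj_symm z e, Complex.conj_re]; simp [nrm]
  rw [norm_sub_sq (𝕜 := ℂ), D.norm_sq_eq z, D.norm_e, RCLike.re_to_complex, h2]
  ring

lemma lt_two_re (D : ModelData M T e n a μ) {z : E} (hz : ‖z‖ < 1) :
    ‖nrm e z‖ ^ 2 + ‖T z‖ ^ 2 < 2 * (nrm e z).re := by
  have := D.norm_sq_eq z
  have : ‖z‖ ^ 2 < 1 := by nlinarith [norm_nonneg z]
  linarith

lemma re_pos (D : ModelData M T e n a μ) {z : E} (hz : ‖z‖ < 1) : 0 < (nrm e z).re := by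
  have := D.lt_two_re hz
  nlinarith [sq_nonneg ‖nrm e z‖, sq_nonneg ‖T z‖]

lemma norm_T_sq_le (D : ModelData M T e n a μ) {z : E} (hz : ‖z‖ < 1) :
    ‖T z‖ ^ 2 ≤ 2 * ‖nrm e z‖ := by
  have := D.lt_two_re hz
  have := Complex.re_le_norm (nrm e z)
  nlinarith [sq_nonneg ‖nrm e z‖]

lemma dist_sq_le (D : ModelData M T e n a μ) {z : E} (hz : ‖z‖ < 1) :
    ‖z - e‖ ^ 2 ≤ 2 * ‖nrm e z‖ := by
  have := D.lt_two_re hz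
  have := Complex.re_le_norm (nrm e z)
  rw [D.dist_sq_eq]
  linarith

lemma inner_pole (D : ModelData M T e n a μ) (κ : ℝ) (z : E) :
    inner ℂ n (pole T e n κ z) = κ * (rt (nrm e z))⁻¹ := by
  rw [pole, inner_add_right, inner_smul_right, inner_smul_right, D.inner_T, inner_self_complex,
    D.norm_n]
  simp

lemma norm_pole_sub_sq (D : ModelData M T e n a μ) (κ d : ℝ) (z : E) :
    ‖pole T e n κ z - (d : ℂ) • n‖ ^ 2 =
      ‖(κ : ℂ) * (rt (nrm e z))⁻¹ - d‖ ^ 2 + (κ / 4 * ‖nrm e z‖⁻¹ * ‖T z‖) ^ 2 := by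
  have h1 : pole T e n κ z - (d : ℂ) • n = ((κ : ℂ) * (rt (nrm e z))⁻¹ - d) • n +
      ((κ : ℂ) / 4 * (nrm e z)⁻¹) • T z := by rw [pole, sub_smul]; abel
  rw [h1, norm_add_sq (𝕜 := ℂ), inner_smul_left, inner_smul_right, D.inner_T, norm_smul, norm_smul,
    D.norm_n]
  simp only [mul_zero, map_zero, add_zero, mul_one, mul_pow, norm_mul, norm_div, norm_inv,
    Complex.norm_real, Real.norm_eq_abs, sq_abs, div_pow]
  norm_num

lemma norm_pole_sq_le (D : ModelData M T e n a μ) (κ : ℝ) {z : E} (hz : ‖z‖ < 1) :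
    ‖pole T e n κ z‖ ^ 2 ≤ 9 / 8 * (κ ^ 2 / ‖nrm e z‖) := by
  have h := D.norm_pole_sub_sq κ 0 z
  simp only [Complex.ofReal_zero, zero_smul, sub_zero] at h
  have hu : 0 < ‖nrm e z‖ := norm_pos_iff.2 (ne_zero_of_re_pos (D.re_pos hz))
  have hT := D.norm_T_sq_le hz
  rw [h, norm_mul, norm_inv, mul_pow, inv_pow, norm_rt_sq, Complex.norm_real, Real.norm_eq_abs,
    sq_abs, mul_pow]
  have h2 : (κ / 4 * ‖nrm e z‖⁻¹) ^ 2 * ‖T z‖ ^ 2 ≤ (κ / 4 * ‖nrm e z‖⁻¹) ^ 2 * (2 * ‖nrm e z‖) := by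
    gcongr
  refine (add_le_add le_rfl h2).trans (le_of_eq ?_)
  field_simp
  ring

/-- Where the pole has size about `s ≤ 1.1 d`, it points into the ball of radius `d`
around `d n`. -/
lemma norm_pole_sub_le (D : ModelData M T e n a μ) {κ d s : ℝ} (hκ : 0 < κ) (hd : 0 < d) {z : E}
    (hz : ‖z‖ < 1) (hs : 0 < s) (hsu : s ^ 2 * ‖nrm e z‖ = κ ^ 2) (hsd : s ≤ 11 / 10 * d) :
    ‖pole T e n κ z - (d : ℂ) • n‖ ≤ d - 8 / 100 * s := by
  have hu := D.re_pos hz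
  have hup : 0 < ‖nrm e z‖ := norm_pos_iff.2 (ne_zero_of_re_pos hu)
  set y := rt (nrm e z) with hy
  have hyp : 0 < ‖y‖ := norm_pos_iff.2 (rt_ne_zero hu)
  have hy2 : ‖y‖ ^ 2 = ‖nrm e z‖ := norm_rt_sq _
  have hsy : s * ‖y‖ = κ := by
    have : (s * ‖y‖) ^ 2 = κ ^ 2 := by rw [mul_pow, hy2, hsu]
    exact (sq_eq_sq₀ (by positivity) hκ.le).1 this
  have h1 : ‖pole T e n κ z - (d : ℂ) • n‖ ^ 2 =
      ‖pole T e n κ z‖ ^ 2 - 2 * d * ((κ : ℂ) * y⁻¹).re + d ^ 2 := by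
    rw [norm_sub_sq (𝕜 := ℂ), ← inner_conj_symm, inner_smul_left, D.inner_pole, norm_smul, D.norm_n]
    simp only [Complex.norm_real, Real.norm_eq_abs, mul_one, sq_abs, Complex.conj_ofReal,
      RCLike.re_to_complex, Complex.conj_re, Complex.re_ofReal_mul]
    ring
  have h2 : ‖pole T e n κ z‖ ^ 2 ≤ 9 / 8 * s ^ 2 := by
    have := D.norm_pole_sq_le κ hz
    have h3 : κ ^ 2 / ‖nrm e z‖ = s ^ 2 := by rw [← hsu]; field_simp
    rwa [h3] at this
  have h3 : 7 / 10 * s ≤ ((κ : ℂ) * y⁻¹).re := by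
    rw [Complex.re_ofReal_mul, Complex.inv_re, Complex.normSq_eq_norm_sq, ← hsy]
    have := norm_le_re_of_sector (abs_im_rt_le hu)
    have h4 : s * ‖y‖ * (y.re / ‖y‖ ^ 2) = s * (y.re / ‖y‖) := by field_simp
    rw [h4]
    have h5 : 7 / 10 ≤ y.re / ‖y‖ := by rw [le_div_iff₀ hyp]; exact this
    nlinarith
  refine abs_le_of_sq_le_sq' ?_ (by linarith) |>.2
  rw [h1]
  nlinarith

/-- The model map is bounded below by a multiple of the distance, uniformly in the size `κ` of the
pole. -/
lemma model_lower_bound (D : ModelData M T e n a μ) : ∃ c : ℝ, 0 < c ∧ ∀ κ : ℝ, 0 < κ →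
    ∀ z z' : E, ‖z‖ < 1 → ‖z'‖ < 1 →
      c * ‖z - z'‖ ≤ ‖(M z + pole T e n κ z) - (M z' + pole T e n κ z')‖ := by
  set C : ℝ := 2 / a + (7 + 2 * ‖M e‖ / a) / μ with hC
  have ha := D.a_pos
  have hμ := D.μ_pos
  have hCpos : 0 < C := by positivity
  suffices H : ∀ κ : ℝ, 0 < κ → ∀ z z' : E, ‖z‖ < 1 → ‖z'‖ < 1 →
      ‖rt (nrm e z)‖ ≤ ‖rt (nrm e z')‖ →
      ‖z - z'‖ ≤ C * ‖(M z + pole T e n κ z) - (M z' + pole T e n κ z')‖ by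
    refine ⟨C⁻¹, by positivity, fun κ hκ z z' hz hz' => ?_⟩
    rw [inv_mul_le_iff₀ hCpos]
    rcases le_total ‖rt (nrm e z)‖ ‖rt (nrm e z')‖ with h | h
    · exact H κ hκ z z' hz hz' h
    · rw [norm_sub_rev z z', norm_sub_rev (M z + _)]
      exact H κ hκ z' z hz' hz h
  intro κ hκ z z' hz hz' hyy
  have hu := D.re_pos hz
  have hu' := D.re_pos hz'
  set u := nrm e z with hudef
  set u' := nrm e z' with hudef'
  set y := rt u with hy
  set y' := rt u' with hy'
  have hy0 : y ≠ 0 := rt_ne_zero hu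
  have hy0' : y' ≠ 0 := rt_ne_zero hu'
  have hu0 : u ≠ 0 := ne_zero_of_re_pos hu
  have hu0' : u' ≠ 0 := ne_zero_of_re_pos hu'
  have hyu : y ^ 2 = u := rt_sq u
  have hyu' : y' ^ 2 = u' := rt_sq u'
  set Q := (M z + pole T e n κ z) - (M z' + pole T e n κ z') with hQ
  -- `w` is the tangential component of `z - z'`
  set w := (z - z') + (u - u') • e with hw
  have hew : inner ℂ e w = 0 := by
    rw [hw, inner_add_right, inner_sub_right, inner_smul_right, inner_self_complex, D.norm_e,
      hudef, hudef', nrm, nrm]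
    simp
  have hzz : z - z' = w - (u - u') • e := by rw [hw]; abel
  have hTe : T e = 0 := by
    have := D.norm_T e
    rw [inner_self_complex, D.norm_e] at this
    simpa using this
  have hTw : T w = T z - T z' := by rw [hw, map_add, map_smul, hTe, map_sub]; simp
  have hMw : M w = M z - M z' + (u - u') • M e := by rw [hw, map_add, map_smul, map_sub]
  -- the normal component, to which `normal_bound` applies
  have hQ1 : inner ℂ n Q = -(a * (y ^ 2 - y' ^ 2)) + κ * (y⁻¹ - y'⁻¹) := by
    have h1 : Q = (M w - (u - u') • M e) + (pole T e n κ z - pole T e n κ z') := by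
      rw [hQ, hMw]; abel
    rw [h1, inner_add_right, inner_sub_right, inner_sub_right, D.inner_M w hew, inner_smul_right,
      D.inner_M_e, D.inner_pole, D.inner_pole, hyu, hyu']
    ring
  have hQn : ‖inner ℂ n Q‖ ≤ ‖Q‖ := by
    have := norm_inner_le_norm (𝕜 := ℂ) n Q
    rwa [D.norm_n, one_mul] at this
  obtain ⟨hb1, hb2⟩ := normal_bound ha hκ (abs_im_rt_le hu) (abs_im_rt_le hu') hy0 hy0'
  rw [← hy, ← hy', ← hQ1] at hb1 hb2
  rw [hyu, hyu'] at hb1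
  have hb1' : ‖u - u'‖ ≤ 2 / a * ‖Q‖ := by
    rw [div_mul_eq_mul_div, le_div_iff₀ ha]; linarith
  -- the tangential part: only the term `T w` can be comparable to `M w`, and `D.le_add` excludes that
  -- they cancel; all other terms are bounded by the normal estimates
  have hkey : M w + (κ / 4 * u'⁻¹) • T w = Q + (u - u') • M e - (κ * (y⁻¹ - y'⁻¹)) • n -
      (κ / 4 * (u⁻¹ - u'⁻¹)) • T z := by
    rw [hMw, hTw, hQ, pole, pole, ← hudef, ← hudef', ← hy, ← hy']
    module
  have hTz : ‖T z‖ ≤ 3 / 2 * ‖y‖ := by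
    have h1 := D.norm_T_sq_le hz
    rw [← hudef, ← hyu, norm_pow] at h1
    refine abs_le_of_sq_le_sq' ?_ (by positivity) |>.2
    nlinarith [sq_nonneg ‖y‖]
  have hyp : 0 < ‖y‖ := norm_pos_iff.2 hy0
  have hyp' : 0 < ‖y'‖ := norm_pos_iff.2 hy0'
  have hinv : ‖u⁻¹ - u'⁻¹‖ ≤ ‖y⁻¹ - y'⁻¹‖ * (2 * ‖y‖⁻¹) := by
    have h1 : u⁻¹ - u'⁻¹ = (y⁻¹ - y'⁻¹) * (y⁻¹ + y'⁻¹) := by rw [← hyu, ← hyu']; field_simp; ring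
    rw [h1, norm_mul]
    gcongr
    refine (norm_add_le _ _).trans ?_
    rw [norm_inv, norm_inv]
    have := inv_anti₀ hyp hyy
    linarith
  have hlast : ‖((κ : ℂ) / 4 * (u⁻¹ - u'⁻¹)) • T z‖ ≤ 3 * ‖Q‖ := by
    rw [norm_smul, norm_mul, norm_div, Complex.norm_real, Real.norm_eq_abs, abs_of_pos hκ]
    have h4 : ‖(4 : ℂ)‖ = 4 := by norm_num
    rw [h4]
    calc κ / 4 * ‖u⁻¹ - u'⁻¹‖ * ‖T z‖
        ≤ κ / 4 * (‖y⁻¹ - y'⁻¹‖ * (2 * ‖y‖⁻¹)) * (3 / 2 * ‖y‖) := by gcongr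
      _ = 3 / 4 * (κ * ‖y⁻¹ - y'⁻¹‖) := by field_simp
      _ ≤ 3 * ‖Q‖ := by nlinarith [norm_nonneg Q]
  have hre : 0 ≤ ((κ : ℂ) / 4 * u'⁻¹).re := by
    have h1 : ((κ : ℂ) / 4 * u'⁻¹) = ((κ / 4 : ℝ) : ℂ) * u'⁻¹ := by push_cast; ring
    rw [h1, Complex.re_ofReal_mul]
    exact mul_nonneg (by positivity) (re_inv_nonneg hu'.le)
  have hMwle : ‖M w‖ ≤ (7 + 2 * ‖M e‖ / a) * ‖Q‖ := by
    refine (D.le_add w _ hew hre).trans ?_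
    rw [hkey]
    refine (norm_sub_le _ _).trans ?_
    have h1 := norm_sub_le (Q + (u - u') • M e) (((κ : ℂ) * (y⁻¹ - y'⁻¹)) • n)
    have h2 := norm_add_le Q ((u - u') • M e)
    rw [norm_smul] at h2
    rw [norm_smul ((κ : ℂ) * (y⁻¹ - y'⁻¹)), D.norm_n, norm_mul, Complex.norm_real, Real.norm_eq_abs,
      abs_of_pos hκ, mul_one] at h1
    have h3 : ‖u - u'‖ * ‖M e‖ ≤ 2 / a * ‖Q‖ * ‖M e‖ := by gcongr
    have h4 : (7 + 2 * ‖M e‖ / a) * ‖Q‖ = 7 * ‖Q‖ + 2 / a * ‖Q‖ * ‖M e‖ := by ring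
    rw [h4]
    linarith
  have hwle : ‖w‖ ≤ (7 + 2 * ‖M e‖ / a) / μ * ‖Q‖ := by
    rw [div_mul_eq_mul_div, le_div_iff₀ hμ]
    have := D.le_M w
    linarith
  rw [hzz, hC, add_mul]
  have h1 := norm_sub_le w ((u - u') • e)
  rw [norm_smul, D.norm_e, mul_one] at h1
  linarith

/-- Away from `e` the pole is Lipschitz with constant `O(κ)`. -/
lemma pole_lipschitz (D : ModelData M T e n a μ) {ρ : ℝ} (hρ : 0 < ρ) : ∃ C : ℝ, ∀ κ : ℝ, 0 < κ →
    ∀ z z' : E, ‖z‖ < 1 → ‖z'‖ < 1 → ρ ^ 2 ≤ ‖nrm e z‖ → ρ ^ 2 ≤ ‖nrm e z'‖ →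
      ‖pole T e n κ z - pole T e n κ z'‖ ≤ κ * C * ‖z - z'‖ := by
  refine ⟨1 / ρ ^ 3 + ‖T‖ / ρ ^ 2 + ‖T‖ / ρ ^ 4, fun κ hκ z z' hz hz' hρz hρz' => ?_⟩
  have hu := D.re_pos hz
  have hu' := D.re_pos hz'
  set u := nrm e z with hudef
  set u' := nrm e z' with hudef'
  set y := rt u with hy
  set y' := rt u' with hy'
  have hy0 : y ≠ 0 := rt_ne_zero hu
  have hy0' : y' ≠ 0 := rt_ne_zero hu'
  have hu0 : u ≠ 0 := ne_zero_of_re_pos hu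
  have hu0' : u' ≠ 0 := ne_zero_of_re_pos hu'
  have hyu : y ^ 2 = u := rt_sq u
  have hyu' : y' ^ 2 = u' := rt_sq u'
  have hρy : ρ ≤ ‖y‖ := by
    rw [← hyu, norm_pow] at hρz
    exact le_of_sq_le_sq hρz (norm_nonneg _)
  have hρy' : ρ ≤ ‖y'‖ := by
    rw [← hyu', norm_pow] at hρz'
    exact le_of_sq_le_sq hρz' (norm_nonneg _)
  have hΔu : ‖u - u'‖ ≤ ‖z - z'‖ := by
    have h1 : u - u' = - inner ℂ e (z - z') := by
      rw [inner_sub_right, hudef, hudef', nrm, nrm]; ring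
    rw [h1, norm_neg]
    have := norm_inner_le_norm (𝕜 := ℂ) e (z - z')
    rwa [D.norm_e, one_mul] at this
  have hyyρ : ρ ≤ ‖y + y'‖ := by
    have hs : ‖y‖ ≤ ‖y + y'‖ := by
      have h1 : 0 ≤ (y' * (starRingEnd ℂ) y).re :=
        re_mul_nonneg_of_sector (abs_im_rt_le hu') (by simpa using abs_im_rt_le hu)
      rw [← sq_le_sq₀ (norm_nonneg _) (norm_nonneg _), ← Complex.normSq_eq_norm_sq,
        ← Complex.normSq_eq_norm_sq, Complex.normSq_add]
      have h2 : (y * (starRingEnd ℂ) y').re = (y' * (starRingEnd ℂ) y).re := by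
        simp [Complex.mul_re]; ring
      rw [h2]
      have := Complex.normSq_nonneg y'
      linarith
    linarith
  have hΔy : ‖y⁻¹ - y'⁻¹‖ ≤ ‖z - z'‖ / ρ ^ 3 := by
    have hyy0 : y + y' ≠ 0 := norm_pos_iff.1 (hρ.trans_le hyyρ)
    have h1 : y⁻¹ - y'⁻¹ = -((u - u') / ((y + y') * y * y')) := by
      rw [← hyu, ← hyu']; field_simp; ring
    rw [h1, norm_neg, norm_div, norm_mul, norm_mul]
    have : ρ ^ 3 ≤ ‖y + y'‖ * ‖y‖ * ‖y'‖ := by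
      calc ρ ^ 3 = ρ * ρ * ρ := by ring
        _ ≤ _ := by gcongr
    gcongr
  have hΔi : ‖u⁻¹ - u'⁻¹‖ ≤ ‖z - z'‖ / ρ ^ 4 := by
    have h1 : u⁻¹ - u'⁻¹ = -((u - u') / (u * u')) := by field_simp; ring
    rw [h1, norm_neg, norm_div, norm_mul]
    have : ρ ^ 4 ≤ ‖u‖ * ‖u'‖ := by
      calc ρ ^ 4 = ρ ^ 2 * ρ ^ 2 := by ring
        _ ≤ _ := by gcongr
    gcongr
  have hkey : pole T e n κ z - pole T e n κ z' = ((κ : ℂ) * (y⁻¹ - y'⁻¹)) • n +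
      (((κ : ℂ) / 4 * u'⁻¹) • T (z - z') + ((κ : ℂ) / 4 * (u⁻¹ - u'⁻¹)) • T z) := by
    rw [pole, pole, ← hudef, ← hudef', ← hy, ← hy', map_sub]
    module
  have hTz : ‖T z‖ ≤ ‖T‖ := by
    refine (T.le_opNorm z).trans ?_
    nlinarith [norm_nonneg T]
  have h4 : ‖(4 : ℂ)‖ = 4 := by norm_num
  have hui : ‖u'‖⁻¹ ≤ 1 / ρ ^ 2 := by
    rw [one_div]; exact inv_anti₀ (by positivity) hρz'
  rw [hkey]
  refine (norm_add_le _ _).trans ?_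
  have t1 : ‖((κ : ℂ) * (y⁻¹ - y'⁻¹)) • n‖ ≤ κ * (‖z - z'‖ / ρ ^ 3) := by
    rw [norm_smul, D.norm_n, norm_mul, Complex.norm_real, Real.norm_eq_abs, abs_of_pos hκ, mul_one]
    gcongr
  have t2 : ‖((κ : ℂ) / 4 * u'⁻¹) • T (z - z')‖ ≤ κ * (1 / ρ ^ 2) * (‖T‖ * ‖z - z'‖) := by
    rw [norm_smul, norm_mul, norm_div, norm_inv, Complex.norm_real, Real.norm_eq_abs, abs_of_pos hκ,
      h4]
    have := T.le_opNorm (z - z')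
    have hk : κ / 4 ≤ κ := by linarith
    gcongr
  have t3 : ‖((κ : ℂ) / 4 * (u⁻¹ - u'⁻¹)) • T z‖ ≤ κ * (‖z - z'‖ / ρ ^ 4) * ‖T‖ := by
    rw [norm_smul, norm_mul, norm_div, Complex.norm_real, Real.norm_eq_abs, abs_of_pos hκ, h4]
    have hk : κ / 4 ≤ κ := by linarith
    gcongr
  have t4 := norm_add_le (((κ : ℂ) / 4 * u'⁻¹) • T (z - z')) (((κ : ℂ) / 4 * (u⁻¹ - u'⁻¹)) • T z)
  have t5 : κ * (1 / ρ ^ 3 + ‖T‖ / ρ ^ 2 + ‖T‖ / ρ ^ 4) * ‖z - z'‖ =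
      κ * (‖z - z'‖ / ρ ^ 3) + κ * (1 / ρ ^ 2) * (‖T‖ * ‖z - z'‖) +
        κ * (‖z - z'‖ / ρ ^ 4) * ‖T‖ := by ring
  rw [t5]
  linarith

lemma differentiableAt_pole {κ : ℝ} {z : E} (h : 0 < (nrm e z).re) :
    DifferentiableAt ℂ (pole T e n κ) z := by
  have h1 : DifferentiableAt ℂ (fun z => nrm e z) z := by
    have h2 : DifferentiableAt ℂ (fun z => (innerSL ℂ e) z) z := (innerSL ℂ e).differentiableAt
    exact (differentiableAt_const (1 : ℂ)).sub h2
  have h2 : DifferentiableAt ℂ (fun z => rt (nrm e z)) z :=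
    h1.cpow (differentiableAt_const _) (Or.inl h)
  have h3 : DifferentiableAt ℂ (fun z => (rt (nrm e z))⁻¹) z := h2.inv (rt_ne_zero h)
  have h4 : DifferentiableAt ℂ (fun z => (nrm e z)⁻¹) z := h1.inv (ne_zero_of_re_pos h)
  exact ((h3.const_mul _).smul_const n).add ((h4.const_mul _).smul T.differentiableAt)

end ModelData
end BallFill

end

/-! ### Adding the pole to a touching map -/

section
open Metric Set Filter Topology

namespace BallFill
universe u

variable {E : Type u} [NormedAddCommGroup E] [InnerProductSpace ℂ E]

lemma eventually_small {c : ℝ} (hc : 0 < c) : ∀ᶠ κ in 𝓝[>] (0 : ℝ), κ < c :=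
  mem_nhdsWithin_of_mem_nhds (Iio_mem_nhds hc)

lemma eventually_pos : ∀ᶠ κ in 𝓝[>] (0 : ℝ), 0 < κ := self_mem_nhdsWithin

/-- An open image which meets a connected set `P` and whose boundary misses `P` covers `P`. -/
lemma subset_image_of_proper {X Y : Type*} [TopologicalSpace X] [TopologicalSpace Y] [T2Space Y]
    {g : X → Y} {P : Set Y} {V K : Set X} (hP : IsPreconnected P) (hK : IsCompact K)
    (hVK : V ⊆ K) (hg : ContinuousOn g K) (hV : IsOpen (g '' V))
    (h : ∀ z ∈ K, g z ∈ P → z ∈ V) (hne : (P ∩ g '' V).Nonempty) : P ⊆ g '' V := by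
  refine hP.subset_of_closure_inter_subset hV hne ?_
  rintro y ⟨hy, hyP⟩
  obtain ⟨z, hz, rfl⟩ := closure_minimal (image_mono hVK) (hK.image_of_continuousOn hg).isClosed hy
  exact ⟨z, h z hz hyP, rfl⟩

/-- The holomorphic injective map `F`, defined on a neighbourhood of the closed unit ball, touches
from outside the ball of radius `d` around `p`, at the image of the boundary point `e`. -/
structure Touch (F : E → E) (R : ℝ) (M : E ≃L[ℂ] E) (T : E →L[ℂ] E) (e n p : E) (a μ d : ℝ) :
    Prop where
  model : ModelData (M : E →L[ℂ] E) T e n a μ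
  one_lt : 1 < R
  diff : DifferentiableOn ℂ F (ball 0 R)
  inj : InjOn F (ball 0 R)
  p_eq : p = F e + (d : ℂ) • n
  d_pos : 0 < d
  le_dist : ∀ z ∈ closedBall (0 : E) 1, d ≤ ‖F z - p‖
  strict : HasStrictFDerivAt F (M : E →L[ℂ] E) e

/-- The slightly smaller ball on which the modified map is used. Its radius is chosen so that the
pole has size at most `1.1 d` there, while values close to `d n` are still attained. -/
def Dom (E : Type*) [NormedAddCommGroup E] (d κ : ℝ) : Set E :=
  {z | ‖z‖ ^ 2 < 1 - 5 / 3 * (κ ^ 2 / d ^ 2)}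

lemma norm_lt_one_of_mem_dom {d κ : ℝ} {z : E} (hz : z ∈ Dom E d κ) : ‖z‖ < 1 := by
  have h : ‖z‖ ^ 2 < 1 - 5 / 3 * (κ ^ 2 / d ^ 2) := hz
  have : 0 ≤ κ ^ 2 / d ^ 2 := by positivity
  nlinarith [norm_nonneg z]

lemma isOpen_dom {d κ : ℝ} : IsOpen (Dom E d κ) :=
  isOpen_lt (by fun_prop) continuous_const

namespace Touch
variable {F : E → E} {R : ℝ} {M : E ≃L[ℂ] E} {T : E →L[ℂ] E} {e n p : E} {a μ d : ℝ}

/-- The modified map: `F` with the pole added. -/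
noncomputable def modif (F : E → E) (T : E →L[ℂ] E) (e n : E) (κ : ℝ) (z : E) : E :=
  F z + pole T e n κ z

/-- The number `s = κ ‖nrm e z‖ ^ (-1/2)` measures the size of the pole at `z`. -/
lemma exists_size (t : Touch F R M T e n p a μ d) {κ : ℝ} (hκ : 0 < κ) {z : E}
    (hz : z ∈ Dom E d κ) : ∃ s : ℝ, 0 < s ∧ s ^ 2 * ‖nrm e z‖ = κ ^ 2 ∧ s ≤ 11 / 10 * d := by
  have hz1 := norm_lt_one_of_mem_dom hz
  have h : ‖z‖ ^ 2 < 1 - 5 / 3 * (κ ^ 2 / d ^ 2) := hz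
  have hd := t.d_pos
  have hu : 0 < ‖nrm e z‖ := norm_pos_iff.2 (ne_zero_of_re_pos (t.model.re_pos hz1))
  have h1 := t.model.norm_sq_eq z
  have h2 := Complex.re_le_norm (nrm e z)
  have h3 : 5 / 3 * (κ ^ 2 / d ^ 2) < 2 * ‖nrm e z‖ := by
    nlinarith [sq_nonneg ‖nrm e z‖, sq_nonneg ‖T z‖]
  have h4 : κ ^ 2 < 6 / 5 * d ^ 2 * ‖nrm e z‖ := by
    have : κ ^ 2 = κ ^ 2 / d ^ 2 * d ^ 2 := by field_simp
    rw [this]; nlinarith [sq_pos_of_pos hd]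
  refine ⟨κ / √‖nrm e z‖, by positivity, ?_, ?_⟩
  · rw [div_pow, Real.sq_sqrt hu.le]; field_simp
  · refine abs_le_of_sq_le_sq' ?_ (by positivity) |>.2
    rw [div_pow, Real.sq_sqrt hu.le, div_le_iff₀ hu]
    nlinarith [sq_pos_of_pos hd]

lemma norm_pole_le_size (t : Touch F R M T e n p a μ d) {κ s : ℝ} {z : E} (hz : ‖z‖ < 1)
    (hs : 0 < s) (hsu : s ^ 2 * ‖nrm e z‖ = κ ^ 2) : ‖pole T e n κ z‖ ≤ 11 / 10 * s := by
  have hu : 0 < ‖nrm e z‖ := norm_pos_iff.2 (ne_zero_of_re_pos (t.model.re_pos hz))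
  have h := t.model.norm_pole_sq_le κ hz
  rw [← hsu, mul_div_cancel_right₀ _ hu.ne'] at h
  refine abs_le_of_sq_le_sq' ?_ (by positivity) |>.2
  nlinarith [sq_pos_of_pos hs]

lemma norm_pole_away (t : Touch F R M T e n p a μ d) {κ ρ : ℝ} (hκ : 0 < κ) (hρ : 0 < ρ) {z : E}
    (hz : ‖z‖ < 1) (hze : ρ ≤ ‖z - e‖) : ‖pole T e n κ z‖ ≤ 2 * κ / ρ := by
  have hu : 0 < ‖nrm e z‖ := norm_pos_iff.2 (ne_zero_of_re_pos (t.model.re_pos hz))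
  have h := t.model.norm_pole_sq_le κ hz
  have h1 := t.model.dist_sq_le hz
  have h2 : ρ ^ 2 ≤ ‖z - e‖ ^ 2 := by gcongr
  refine abs_le_of_sq_le_sq' (h.trans ?_) (by positivity) |>.2
  calc 9 / 8 * (κ ^ 2 / ‖nrm e z‖) ≤ 9 / 8 * (κ ^ 2 / (ρ ^ 2 / 2)) := by gcongr; linarith
    _ ≤ (2 * κ / ρ) ^ 2 := by
      rw [div_pow]; field_simp; norm_num

lemma continuousAt_e (t : Touch F R M T e n p a μ d) : ContinuousAt F e := t.strict.continuousAt

lemma exists_near (t : Touch F R M T e n p a μ d) {η : ℝ} (hη : 0 < η) :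
    ∃ δ > 0, ∀ z, ‖z - e‖ < δ → ‖F z - F e‖ < η := by
  obtain ⟨δ, hδ, h⟩ := Metric.continuousAt_iff.1 t.continuousAt_e η hη
  exact ⟨δ, hδ, fun z hz => by simpa [dist_eq_norm] using h (by simpa [dist_eq_norm] using hz)⟩

/-- Where the pole has size at least `σ`, the modified map is well inside the ball around `p`. -/
lemma eventually_inside (t : Touch F R M T e n p a μ d) {σ : ℝ} (hσ : 0 < σ) :
    ∀ᶠ κ in 𝓝[>] (0 : ℝ), ∀ z ∈ Dom E d κ, ∀ s, 0 < s → s ^ 2 * ‖nrm e z‖ = κ ^ 2 → σ ≤ s →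
      s ≤ 11 / 10 * d → ‖modif F T e n κ z - p‖ < d - 4 / 100 * σ := by
  obtain ⟨δ, hδ, hF⟩ := t.exists_near (η := 4 / 100 * σ) (by positivity)
  filter_upwards [eventually_pos, eventually_small (show 0 < σ * δ / 2 by positivity)]
    with κ hκ hκ1 z hz s hs hsu hσs hsd
  have hz1 := norm_lt_one_of_mem_dom hz
  have h1 := t.model.norm_pole_sub_le hκ t.d_pos hz1 hs hsu hsd
  have h2 := t.model.dist_sq_le hz1
  have h3 : ‖z - e‖ < δ := by
    refine lt_of_pow_lt_pow_left₀ 2 hδ.le ?_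
    have h4 : σ ^ 2 * ‖nrm e z‖ ≤ κ ^ 2 := by
      rw [← hsu]; gcongr
    have h5 : κ ^ 2 < (σ * δ / 2) ^ 2 := by gcongr
    have h6 : σ ^ 2 * ‖nrm e z‖ < σ ^ 2 * (δ ^ 2 / 4) := by nlinarith
    have h7 := lt_of_mul_lt_mul_left h6 (by positivity)
    nlinarith
  have h4 : modif F T e n κ z - p = (F z - F e) + (pole T e n κ z - (d : ℂ) • n) := by
    rw [modif, t.p_eq]; abel
  rw [h4]
  have := norm_add_le (F z - F e) (pole T e n κ z - (d : ℂ) • n)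
  have := hF z h3
  linarith

lemma continuousOn_ball (t : Touch F R M T e n p a μ d) : ContinuousOn F (closedBall 0 1) :=
  t.diff.continuousOn.mono (closedBall_subset_ball t.one_lt)

/-- Where the pole is not small the values of the modified map are in the ball around `p`, elsewhere
they are close to those of `F`. -/
lemma eventually_mem (t : Touch F R M T e n p a μ d) [FiniteDimensional ℂ E] {W : Set E}
    (hW : IsOpen W) (hFW : F '' closedBall 0 1 ⊆ W) (hpW : ball p d ⊆ W) :
    ∀ᶠ κ in 𝓝[>] (0 : ℝ), ∀ z ∈ Dom E d κ, modif F T e n κ z ∈ W := by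
  have : ProperSpace E := FiniteDimensional.proper ℂ E
  obtain ⟨η, hη, hηW⟩ := ((isCompact_closedBall (0 : E) 1).image_of_continuousOn
    t.continuousOn_ball).exists_thickening_subset_open hW hFW
  filter_upwards [eventually_pos, t.eventually_inside (σ := η / 2) (by positivity)]
    with κ hκ hin z hz
  have hz1 := norm_lt_one_of_mem_dom hz
  obtain ⟨s, hs, hsu, hsd⟩ := t.exists_size hκ hz
  rcases le_or_gt (η / 2) s with h | h
  · apply hpW
    rw [mem_ball, dist_eq_norm]
    have := hin z hz s hs hsu h hsd
    linarith
  · apply hηW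
    rw [mem_thickening_iff]
    refine ⟨F z, mem_image_of_mem _ (by simpa using hz1.le), ?_⟩
    rw [dist_eq_norm, modif, add_sub_cancel_left]
    have := t.norm_pole_le_size hz1 hs hsu
    linarith

/-- The modified map is injective. Near `e` it is compared with the model map. If `z'` is away from `e`,
the pole is small at `z'`; if it is small at `z` as well, the lower bound for `F` separates the
values, and otherwise the value at `z` is well inside the ball around `p`, which `F` avoids. -/
lemma eventually_injOn (t : Touch F R M T e n p a μ d) [FiniteDimensional ℂ E] :
    ∀ᶠ κ in 𝓝[>] (0 : ℝ), InjOn (modif F T e n κ) (Dom E d κ) := by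
  have : ProperSpace E := FiniteDimensional.proper ℂ E
  obtain ⟨c₁, hc₁, hmodel⟩ := t.model.model_lower_bound
  obtain ⟨c₀, hc₀, hanti⟩ := exists_antilipschitz isOpen_ball t.diff t.inj
    (isCompact_closedBall (0 : E) 1) (closedBall_subset_ball t.one_lt)
  -- near `e` the map `F` differs from its linearization by a small Lipschitz map
  obtain ⟨ρ, hρ, hlin⟩ : ∃ ρ > 0, ∀ z z', ‖z - e‖ < ρ → ‖z' - e‖ < ρ →
      ‖F z - F z' - M (z - z')‖ ≤ c₁ / 2 * ‖z - z'‖ := by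
    have h := t.strict.isLittleO.def (c := c₁ / 2) (by positivity)
    rw [Metric.eventually_nhds_iff] at h
    obtain ⟨ρ, hρ, h⟩ := h
    refine ⟨ρ, hρ, fun z z' hz hz' => h (y := (z, z')) ?_⟩
    rw [Prod.dist_eq, max_lt_iff, dist_eq_norm, dist_eq_norm]
    exact ⟨hz, hz'⟩
  obtain ⟨C, hC⟩ := t.model.pole_lipschitz (ρ := ρ / 4) (by positivity)
  set σ : ℝ := c₀ * ρ / 10 with hσ
  have hσ0 : 0 < σ := by positivity
  filter_upwards [eventually_pos, t.eventually_inside hσ0,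
    eventually_small (show 0 < ρ / 2 * (4 / 100 * σ) by positivity),
    eventually_small (show 0 < ρ / 2 * (c₀ * ρ / 10) by positivity),
    eventually_small (show 0 < c₀ / (|C| + 1) by positivity)]
    with κ hκ hin hκ1 hκ2 hκ3
  -- the case where one of the points is away from `e`
  have key : ∀ z ∈ Dom E d κ, ∀ z' ∈ Dom E d κ, modif F T e n κ z = modif F T e n κ z' →
      ρ ≤ ‖z' - e‖ → z = z' := by
    intro z hz z' hz' heq hfar
    have hz1 := norm_lt_one_of_mem_dom hz
    have hz1' := norm_lt_one_of_mem_dom hz'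
    have hp' := t.norm_pole_away hκ hρ hz1' hfar
    have e1 : F z - F z' = pole T e n κ z' - pole T e n κ z := by
      rw [modif, modif] at heq
      rw [sub_eq_sub_iff_add_eq_add, heq, add_comm]
    have hl := hanti z (by simpa using hz1.le) z' (by simpa using hz1'.le)
    rcases le_or_gt (ρ / 2) ‖z - e‖ with h2 | h2
    · have hu : (ρ / 4) ^ 2 ≤ ‖nrm e z‖ := by
        have := t.model.dist_sq_le hz1
        have : (ρ / 2) ^ 2 ≤ ‖z - e‖ ^ 2 := by gcongr
        nlinarith
      have hu' : (ρ / 4) ^ 2 ≤ ‖nrm e z'‖ := by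
        have := t.model.dist_sq_le hz1'
        have : ρ ^ 2 ≤ ‖z' - e‖ ^ 2 := by gcongr
        nlinarith
      have h3 := hC κ hκ z' z hz1' hz1 hu' hu
      rw [← e1, norm_sub_rev z' z] at h3
      have h4 : κ * C < c₀ := by
        rw [lt_div_iff₀ (by positivity)] at hκ3
        have := le_abs_self C
        nlinarith
      by_contra hne
      have h5 : 0 < ‖z - z'‖ := norm_pos_iff.2 (sub_ne_zero.2 hne)
      nlinarith
    · exfalso
      obtain ⟨s, hs, hsu, hsd⟩ := t.exists_size hκ hz
      rcases le_or_gt σ s with h | h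
      · have h3 := hin z hz s hs hsu h hsd
        have h4 := t.le_dist z' (by simpa using hz1'.le)
        rw [heq, modif] at h3
        have h5 : ‖F z' - p‖ ≤ ‖F z' + pole T e n κ z' - p‖ + ‖pole T e n κ z'‖ := by
          have := norm_sub_le (F z' + pole T e n κ z' - p) (pole T e n κ z')
          rwa [show F z' + pole T e n κ z' - p - pole T e n κ z' = F z' - p by abel] at this
        have h6 : 2 * κ / ρ ≤ 4 / 100 * σ := by
          rw [div_le_iff₀ hρ]; linarith
        linarith
      · have h3 := t.norm_pole_le_size hz1 hs hsu
        have h4 : ρ / 2 ≤ ‖z - z'‖ := by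
          have := norm_sub_le (z - e) (z - z')
          rw [show z - e - (z - z') = z' - e by abel] at this
          linarith
        have h5 : ‖F z - F z'‖ ≤ 2 * κ / ρ + 11 / 10 * s := by
          rw [e1]; exact (norm_sub_le _ _).trans (add_le_add hp' h3)
        have h6 : 2 * κ / ρ ≤ c₀ * ρ / 10 := by
          rw [div_le_iff₀ hρ]; linarith
        have h7 : c₀ * (ρ / 2) ≤ c₀ * ‖z - z'‖ := by gcongr
        nlinarith
  intro z hz z' hz' heq
  rcases le_or_gt ρ ‖z' - e‖ with h | h
  · exact key z hz z' hz' heq h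
  rcases le_or_gt ρ ‖z - e‖ with h' | h'
  · exact (key z' hz' z hz heq.symm h').symm
  have h1 := hmodel κ hκ z z' (norm_lt_one_of_mem_dom hz) (norm_lt_one_of_mem_dom hz')
  have h2 := hlin z z' h' h
  have h3 : (M : E →L[ℂ] E) z + pole T e n κ z - ((M : E →L[ℂ] E) z' + pole T e n κ z') =
      -(F z - F z' - M (z - z')) := by
    rw [modif, modif] at heq
    have h4 : pole T e n κ z = F z' + pole T e n κ z' - F z := by rw [← heq]; abel
    rw [h4, map_sub, ContinuousLinearEquiv.coe_coe]
    abel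
  rw [h3, norm_neg] at h1
  by_contra hne
  have h5 : 0 < ‖z - z'‖ := norm_pos_iff.2 (sub_ne_zero.2 hne)
  nlinarith

lemma differentiableAt_modif (t : Touch F R M T e n p a μ d) (κ : ℝ) {z : E} (hz : ‖z‖ < 1) :
    DifferentiableAt ℂ (modif F T e n κ) z :=
  (t.diff.differentiableAt (isOpen_ball.mem_nhds (by
    have := t.one_lt; rw [mem_ball_zero_iff]; linarith))).add
    (ModelData.differentiableAt_pole (t.model.re_pos hz))

lemma isOpen_image (t : Touch F R M T e n p a μ d) [FiniteDimensional ℂ E] {κ : ℝ}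
    (h : InjOn (modif F T e n κ) (Dom E d κ)) {V : Set E} (hV : IsOpen V) (hVD : V ⊆ Dom E d κ) :
    IsOpen (modif F T e n κ '' V) :=
  isOpen_image_of_injOn isOpen_dom (fun _ hz => (t.differentiableAt_modif κ
    (norm_lt_one_of_mem_dom hz)).differentiableWithinAt) h hV hVD

/-- The modified map still covers what `F` covers well inside the unit ball. -/
lemma eventually_cover_old (t : Touch F R M T e n p a μ d) [FiniteDimensional ℂ E] {s : ℝ}
    (hs0 : 0 < s) (hs1 : s < 1) :
    ∀ᶠ κ in 𝓝[>] (0 : ℝ), F '' closedBall 0 s ⊆ modif F T e n κ '' Dom E d κ := by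
  have : ProperSpace E := FiniteDimensional.proper ℂ E
  have hd := t.d_pos
  obtain ⟨c₀, hc₀, hanti⟩ := exists_antilipschitz isOpen_ball t.diff t.inj
    (isCompact_closedBall (0 : E) 1) (closedBall_subset_ball t.one_lt)
  set s' : ℝ := (s + 1) / 2 with hs'
  have hs'1 : s' < 1 := by rw [hs']; linarith
  have hs's : s < s' := by rw [hs']; linarith
  have hopen : IsOpen (F '' ball 0 s) := isOpen_image_of_injOn isOpen_ball t.diff t.inj isOpen_ball
    (ball_subset_ball (by have := t.one_lt; linarith))
  obtain ⟨η, hη, hηs⟩ := Metric.isOpen_iff.1 hopen (F 0) (mem_image_of_mem _ (by simpa using hs0))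
  filter_upwards [eventually_pos, t.eventually_injOn, eventually_small hη,
    eventually_small (show 0 < (1 - s') * (c₀ * (s' - s)) / 2 by
      have := sub_pos.2 hs'1; have := sub_pos.2 hs's; positivity),
    eventually_small (show 0 < d * √((1 - s' ^ 2) / 2) by
      have : 0 < 1 - s' ^ 2 := by nlinarith
      positivity)] with κ hκ hinj hκη hκ1 hκ2
  have hsub : closedBall (0 : E) s' ⊆ Dom E d κ := by
    intro z hz
    rw [mem_closedBall_zero_iff] at hz
    have h1 : ‖z‖ ^ 2 ≤ s' ^ 2 := by gcongr
    have h0 : 0 < 1 - s' ^ 2 := by nlinarith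
    have h2 : κ ^ 2 < (d * √((1 - s' ^ 2) / 2)) ^ 2 := by gcongr
    rw [mul_pow, Real.sq_sqrt (by positivity)] at h2
    have h3 : κ ^ 2 / d ^ 2 < (1 - s' ^ 2) / 2 := by
      rw [div_lt_iff₀ (by positivity)]; linarith
    change ‖z‖ ^ 2 < 1 - 5 / 3 * (κ ^ 2 / d ^ 2)
    linarith
  have hP : IsPreconnected (F '' closedBall 0 s) :=
    (convex_closedBall (0 : E) s).isPreconnected.image F
      (t.continuousOn_ball.mono (closedBall_subset_closedBall hs1.le))
  refine (subset_image_of_proper (V := ball 0 s') hP (isCompact_closedBall (0 : E) s')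
    ball_subset_closedBall ?_ ?_ ?_ ?_).trans (image_mono (ball_subset_closedBall.trans hsub))
  · exact fun z hz => (t.differentiableAt_modif κ
      (norm_lt_one_of_mem_dom (hsub hz))).continuousAt.continuousWithinAt
  · exact t.isOpen_image hinj isOpen_ball (ball_subset_closedBall.trans hsub)
  · rintro z hz ⟨w, hw, hwz⟩
    rw [mem_closedBall_zero_iff] at hz hw
    rw [mem_ball_zero_iff]
    have h1 : 1 - s' ≤ ‖z - e‖ := by
      have := norm_sub_norm_le e z
      rw [t.model.norm_e, norm_sub_rev] at this
      linarith
    have h2 := t.norm_pole_away hκ (sub_pos.2 hs'1) (hz.trans_lt hs'1) h1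
    have h3 := hanti w (by rw [mem_closedBall_zero_iff]; linarith) z
      (by rw [mem_closedBall_zero_iff]; linarith)
    rw [hwz, modif, add_sub_cancel_left] at h3
    have h4 : 2 * κ / (1 - s') < c₀ * (s' - s) := by
      rw [div_lt_iff₀ (sub_pos.2 hs'1)]; linarith
    have h5 : c₀ * ‖w - z‖ < c₀ * (s' - s) := by linarith
    have h6 := lt_of_mul_lt_mul_left h5 hc₀.le
    have h7 := norm_sub_norm_le z w
    rw [norm_sub_rev] at h7
    linarith
  · have h0 : modif F T e n κ 0 = F 0 + (κ : ℂ) • n := by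
      simp [modif, pole, nrm, rt]
    refine ⟨modif F T e n κ 0, ?_, mem_image_of_mem _ (by rw [mem_ball_zero_iff, norm_zero]; linarith)⟩
    refine image_mono ball_subset_closedBall (hηs ?_)
    rw [h0, mem_ball, dist_eq_norm, add_sub_cancel_left, norm_smul, t.model.norm_n,
      Complex.norm_real, Real.norm_eq_abs, abs_of_pos hκ, mul_one]
    exact hκη
end Touch
end BallFill

end

/-! ### Filling a touching ball -/

section
open Metric Set Filter Topology

namespace BallFill
universe u

variable {E : Type u} [NormedAddCommGroup E] [InnerProductSpace ℂ E]

/-- Here `X` stands for the normal component of the pole and `u` for `nrm e z`: if `X` is close to `d`,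
then `u = (κ / X) ^ 2` is close to `q = (κ / d) ^ 2`. -/
lemma re_lower_of_near {X u : ℂ} {κ d q : ℝ} (hd : 0 < d) (hκq : κ ^ 2 = q * d ^ 2)
    (hre : 0 < u.re) (hXr : 98 / 100 * d ≤ X.re) (hXr' : X.re ≤ 102 / 100 * d)
    (hXi : |X.im| ≤ 2 / 100 * d) (hXu : X ^ 2 * u = κ ^ 2) : 88 / 100 * q ≤ u.re := by
  -- `‖X‖⁴ Re u = κ² Re (X²)`
  have h3 : ‖X‖ ^ 2 * ‖X‖ ^ 2 * u.re = κ ^ 2 * (X.re ^ 2 - X.im ^ 2) := by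
    have h4 := congrArg (fun w => (star X ^ 2 * w).re) hXu
    have h5 : star X ^ 2 * (X ^ 2 * u) = ((‖X‖ ^ 2 * ‖X‖ ^ 2 : ℝ) : ℂ) * u := by
      have : star X * X = ((‖X‖ ^ 2 : ℝ) : ℂ) := by
        have := Complex.normSq_eq_conj_mul_self (z := X)
        rw [← Complex.normSq_eq_norm_sq]; exact this.symm
      push_cast at this ⊢
      rw [← this]; ring
    have h6 : star X ^ 2 * (κ : ℂ) ^ 2 = ((κ ^ 2 : ℝ) : ℂ) * star X ^ 2 := by push_cast; ring
    simp only [h5, h6, Complex.re_ofReal_mul] at h4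
    rw [h4, pow_two (star X), Complex.mul_re]
    simp only [Complex.star_def, Complex.conj_re, Complex.conj_im]; ring
  have hN : ‖X‖ ^ 2 = X.re ^ 2 + X.im ^ 2 := by
    rw [← Complex.normSq_eq_norm_sq, Complex.normSq_apply]; ring
  have hi : X.im ^ 2 ≤ 4 / 10000 * d ^ 2 := by
    have : |X.im| ^ 2 ≤ (2 / 100 * d) ^ 2 := by gcongr
    rw [sq_abs] at this; nlinarith
  have hr1 : (98 / 100 * d) ^ 2 ≤ X.re ^ 2 := by gcongr
  have hr2 : X.re ^ 2 ≤ (102 / 100 * d) ^ 2 := by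
    have : 0 ≤ X.re := by nlinarith
    gcongr
  have hA : ‖X‖ ^ 2 ≤ 1041 / 1000 * d ^ 2 := by rw [hN]; nlinarith
  have hB : 96 / 100 * d ^ 2 ≤ X.re ^ 2 - X.im ^ 2 := by nlinarith
  have hAA : ‖X‖ ^ 2 * ‖X‖ ^ 2 ≤ (1041 / 1000 * d ^ 2) * (1041 / 1000 * d ^ 2) := by gcongr
  have h7 : κ ^ 2 * (96 / 100 * d ^ 2) ≤
      (1041 / 1000 * d ^ 2) * (1041 / 1000 * d ^ 2) * u.re := by
    calc κ ^ 2 * (96 / 100 * d ^ 2) ≤ κ ^ 2 * (X.re ^ 2 - X.im ^ 2) := by gcongr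
      _ = ‖X‖ ^ 2 * ‖X‖ ^ 2 * u.re := h3.symm
      _ ≤ _ := by gcongr
  rw [hκq] at h7
  have h8 : (d ^ 2 * d ^ 2) * (96 / 100 * q) ≤
      (d ^ 2 * d ^ 2) * (1041 / 1000 * (1041 / 1000) * u.re) := by linarith
  have h9 := le_of_mul_le_mul_left h8 (by positivity)
  nlinarith

namespace Touch
variable {F : E → E} {R : ℝ} {M : E ≃L[ℂ] E} {T : E →L[ℂ] E} {e n p : E} {a μ d : ℝ}

/-- Points where the pole is close to `d n` lie in the domain, and are close to `e`. -/
lemma mem_dom_of_near (t : Touch F R M T e n p a μ d) {κ : ℝ} (hκ : 0 < κ) (hκd : κ ≤ d / 10)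
    {z : E} (hz : ‖z‖ < 1) (h : ‖pole T e n κ z - (d : ℂ) • n‖ ≤ 2 / 100 * d) :
    z ∈ Dom E d κ ∧ ‖z - e‖ ≤ 2 * (κ / d) := by
  have hd := t.d_pos
  have hre := t.model.re_pos hz
  set u := nrm e z with hu
  set X : ℂ := κ * (rt u)⁻¹ with hX
  have hrt := rt_ne_zero hre
  have hκ' : (κ : ℂ) ≠ 0 := by exact_mod_cast hκ.ne'
  have hsq := t.model.norm_pole_sub_sq κ d z
  rw [← hu, ← hX] at hsq
  have h2 : ‖pole T e n κ z - (d : ℂ) • n‖ ^ 2 ≤ (2 / 100 * d) ^ 2 := by gcongr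
  have hX1 : ‖X - d‖ ≤ 2 / 100 * d :=
    abs_le_of_sq_le_sq' (by nlinarith [sq_nonneg (κ / 4 * ‖u‖⁻¹ * ‖T z‖)]) (by positivity) |>.2
  have hT1 : κ / 4 * ‖u‖⁻¹ * ‖T z‖ ≤ 2 / 100 * d :=
    abs_le_of_sq_le_sq' (by nlinarith [sq_nonneg ‖X - d‖]) (by positivity) |>.2
  have hXu : X ^ 2 * u = κ ^ 2 := by
    have := rt_sq u
    rw [hX]; rw [mul_pow, inv_pow, this]; field_simp [ne_zero_of_re_pos hre]
  have hu0 : 0 < ‖u‖ := norm_pos_iff.2 (ne_zero_of_re_pos hre)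
  have hXn : ‖X‖ ^ 2 * ‖u‖ = κ ^ 2 := by
    have := congrArg norm hXu
    rwa [norm_mul, norm_pow, norm_pow, Complex.norm_real, Real.norm_eq_abs, sq_abs] at this
  have hXl : 98 / 100 * d ≤ ‖X‖ := by
    have := norm_sub_norm_le (d : ℂ) X
    rw [norm_sub_rev, Complex.norm_real, Real.norm_eq_abs, abs_of_pos hd] at this
    linarith
  have hXr : 98 / 100 * d ≤ X.re := by
    have := (abs_le.1 ((Complex.abs_re_le_norm (X - d)).trans hX1)).1
    simp at this; linarith
  have hXr' : X.re ≤ 102 / 100 * d := by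
    have := (abs_le.1 ((Complex.abs_re_le_norm (X - d)).trans hX1)).2
    simp at this; linarith
  have hXi : |X.im| ≤ 2 / 100 * d := by
    have := (Complex.abs_im_le_norm (X - d)).trans hX1
    simpa using this
  set q : ℝ := κ ^ 2 / d ^ 2 with hq
  have hq0 : 0 < q := by positivity
  have hκq : κ ^ 2 = q * d ^ 2 := by rw [hq]; field_simp
  have hq1 : q ≤ 1 / 100 := by
    rw [hq, div_le_iff₀ (by positivity)]; nlinarith
  have hun : ‖u‖ ≤ 105 / 100 * q := by
    have h3 : (98 / 100 * d) ^ 2 ≤ ‖X‖ ^ 2 := by gcongr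
    have h4 : (98 / 100 * d) ^ 2 * ‖u‖ ≤ q * d ^ 2 := by
      rw [← hκq, ← hXn]; gcongr
    have h5 : d ^ 2 * (98 / 100 * (98 / 100) * ‖u‖) ≤ d ^ 2 * q := by nlinarith
    have h6 := le_of_mul_le_mul_left h5 (by positivity)
    nlinarith
  have hur : 88 / 100 * q ≤ u.re := re_lower_of_near hd hκq hre hXr hXr' hXi hXu
  have hTz : ‖T z‖ ^ 2 ≤ 1 / 100 * q := by
    have h3 : κ * ‖T z‖ ≤ 8 / 100 * d * ‖u‖ := by
      have : κ / 4 * ‖u‖⁻¹ * ‖T z‖ = κ * ‖T z‖ / (4 * ‖u‖) := by field_simp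
      rw [this, div_le_iff₀ (by positivity)] at hT1
      linarith
    have h4 : κ * ‖T z‖ ≤ 9 / 100 * d * q := by
      have : 8 / 100 * d * ‖u‖ ≤ 8 / 100 * d * (105 / 100 * q) := by gcongr
      nlinarith
    have h5 : (κ * ‖T z‖) ^ 2 ≤ (9 / 100 * d * q) ^ 2 := by gcongr
    rw [mul_pow, hκq] at h5
    have h6 : (q * d ^ 2) * ‖T z‖ ^ 2 ≤ (q * d ^ 2) * (1 / 100 * q) := by
      have : 0 ≤ d ^ 2 * q ^ 2 := by positivity
      nlinarith
    exact le_of_mul_le_mul_left h6 (by positivity)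
  have hu2 : ‖u‖ ^ 2 ≤ 2 / 100 * q := by
    have : ‖u‖ ^ 2 ≤ (105 / 100 * q) ^ 2 := by gcongr
    nlinarith
  constructor
  · change ‖z‖ ^ 2 < 1 - 5 / 3 * q
    rw [t.model.norm_sq_eq, ← hu]
    linarith
  · refine abs_le_of_sq_le_sq' ?_ (by positivity) |>.2
    rw [t.model.dist_sq_eq, mul_pow, div_pow, ← hu, ← hq]
    linarith

/-- The modified map covers a fixed proportion of the touching ball. -/
lemma eventually_cover_new (t : Touch F R M T e n p a μ d) [FiniteDimensional ℂ E] :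
    ∀ᶠ κ in 𝓝[>] (0 : ℝ), closedBall p (1 / 100 * d) ⊆ modif F T e n κ '' Dom E d κ := by
  have : ProperSpace E := FiniteDimensional.proper ℂ E
  have hd := t.d_pos
  obtain ⟨δ, hδ, hF⟩ := t.exists_near (η := 1 / 100 * d) (by positivity)
  filter_upwards [eventually_pos, t.eventually_injOn, eventually_small (show 0 < d / 10 by positivity),
    eventually_small (show 0 < d * δ / 2 by positivity)] with κ hκ hinj hκd hκδ
  -- on the relevant region, where the pole is close to `d n`, `F` is almost constant
  have hclose : ∀ z, ‖z - e‖ ≤ 2 * (κ / d) → ‖F z - F e‖ < 1 / 100 * d := by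
    refine fun z hz => hF z (hz.trans_lt ?_)
    rw [← mul_div_assoc, div_lt_iff₀ hd]; linarith
  have hq0 : 0 < κ ^ 2 / d ^ 2 := by positivity
  have hq1 : κ ^ 2 / d ^ 2 < 1 / 10 := by
    rw [div_lt_iff₀ (by positivity)]; nlinarith
  set r : ℝ := √(1 - 5 / 3 * (κ ^ 2 / d ^ 2)) with hr
  have hr2 : r ^ 2 = 1 - 5 / 3 * (κ ^ 2 / d ^ 2) := Real.sq_sqrt (by linarith)
  have hr0 : 0 ≤ r := Real.sqrt_nonneg _
  have hr1 : r < 1 := by nlinarith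
  have hcl : ∀ z ∈ closedBall (0 : E) r, ‖z‖ < 1 := fun z hz => by
    rw [mem_closedBall_zero_iff] at hz; linarith
  have hpc : ContinuousOn (fun z => ‖pole T e n κ z - (d : ℂ) • n‖) (closedBall 0 r) :=
    fun z hz => ((ModelData.differentiableAt_pole (t.model.re_pos (hcl z hz))).continuousAt.sub
      continuousAt_const).norm.continuousWithinAt
  set K : Set E := closedBall 0 r ∩ (fun z => ‖pole T e n κ z - (d : ℂ) • n‖) ⁻¹'
    Iic (2 / 100 * d) with hKdef
  have hK : IsCompact K := (isCompact_closedBall (0 : E) r).of_isClosed_subset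
    (hpc.preimage_isClosed_of_isClosed isClosed_closedBall isClosed_Iic) inter_subset_left
  set V : Set E := ball 0 r ∩ (fun z => ‖pole T e n κ z - (d : ℂ) • n‖) ⁻¹'
    Iio (2 / 100 * d) with hVdef
  have hV : IsOpen V := (hpc.mono ball_subset_closedBall).isOpen_inter_preimage isOpen_ball isOpen_Iio
  have hdom : ∀ z : E, z ∈ Dom E d κ ↔ z ∈ ball (0 : E) r := fun z => by
    rw [mem_ball_zero_iff, Dom, mem_ofPred_eq, ← hr2]
    exact sq_lt_sq₀ (norm_nonneg _) hr0
  have hVD : V ⊆ Dom E d κ := fun z hz => (hdom z).2 hz.1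
  have hmod : ∀ z, modif F T e n κ z - p = (F z - F e) + (pole T e n κ z - (d : ℂ) • n) := by
    intro z; rw [modif, t.p_eq]; abel
  refine (subset_image_of_proper (V := V) (K := K) (convex_closedBall _ _).isPreconnected hK
    ?_ ?_ ?_ ?_ ?_).trans (image_mono hVD)
  · exact fun z hz => ⟨ball_subset_closedBall hz.1, le_of_lt (mem_Iio.1 (mem_preimage.1 hz.2))⟩
  · exact fun z hz => (t.differentiableAt_modif κ
      (hcl z hz.1)).continuousAt.continuousWithinAt
  · exact t.isOpen_image hinj hV hVD
  · intro z hz hzp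
    obtain ⟨h1, h2⟩ := t.mem_dom_of_near hκ hκd.le (hcl z hz.1) hz.2
    refine ⟨(hdom z).1 h1, ?_⟩
    rw [mem_closedBall, dist_eq_norm, hmod] at hzp
    have h3 := hclose z h2
    have h4 := norm_sub_le ((F z - F e) + (pole T e n κ z - (d : ℂ) • n)) (F z - F e)
    rw [add_sub_cancel_left] at h4
    rw [mem_preimage, mem_Iio]
    linarith
  · -- the pole takes the value `d n` at `(1 - κ² / d²) e`
    set z₀ : E := ((1 - κ ^ 2 / d ^ 2 : ℝ) : ℂ) • e with hz₀
    have hnrm : nrm e z₀ = (((κ / d : ℝ) : ℂ)) ^ 2 := by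
      rw [nrm, hz₀, inner_smul_right, inner_self_complex, t.model.norm_e]
      push_cast; ring
    have hrt : rt (nrm e z₀) = ((κ / d : ℝ) : ℂ) := by
      rw [hnrm, rt]
      exact Complex.sq_cpow_two_inv (by rw [Complex.ofReal_re]; positivity)
    have hTe : T e = 0 := by
      have h1 := t.model.norm_T e
      rw [inner_self_complex, t.model.norm_e] at h1
      simpa using h1
    have hpole : pole T e n κ z₀ = (d : ℂ) • n := by
      have h1 : (κ : ℂ) ≠ 0 := by exact_mod_cast hκ.ne'
      have h2 : (d : ℂ) ≠ 0 := by exact_mod_cast hd.ne'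
      rw [pole, hrt, hz₀, map_smul, hTe, smul_zero, smul_zero, add_zero]
      congr 1
      push_cast; field_simp
    have hnz : ‖z₀‖ = 1 - κ ^ 2 / d ^ 2 := by
      rw [hz₀, norm_smul, t.model.norm_e, Complex.norm_real, Real.norm_eq_abs,
        abs_of_pos (by linarith), mul_one]
    have h1 : z₀ ∈ Dom E d κ := by
      rw [Dom, mem_ofPred_eq, hnz]; nlinarith
    have h2 := (t.mem_dom_of_near hκ hκd.le (norm_lt_one_of_mem_dom h1) (by
      rw [hpole, sub_self, norm_zero]; positivity)).2
    refine ⟨modif F T e n κ z₀, ?_, mem_image_of_mem _ ⟨(hdom _).1 h1, ?_⟩⟩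
    · rw [mem_closedBall, dist_eq_norm, hmod, hpole, sub_self, add_zero]
      exact (hclose z₀ h2).le
    · rw [mem_preimage, mem_Iio, hpole, sub_self, norm_zero]; positivity
end Touch

/-- If a holomorphically embedded closed ball touches a ball of radius `d` from outside, then the
embedding can be modified, inside any neighbourhood of the union of the two, so as to cover most of
the old image and the concentric ball of radius `d / 100`. -/
lemma touch_fill [FiniteDimensional ℂ E] {F : E → E} {R d s : ℝ} {e p : E} {W : Set E}
    (hR : 1 < R) (hF : DifferentiableOn ℂ F (ball 0 R)) (hinj : InjOn F (ball 0 R))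
    (he : ‖e‖ = 1) (hd : 0 < d) (hep : ‖F e - p‖ = d)
    (hmin : ∀ z ∈ closedBall (0 : E) 1, d ≤ ‖F z - p‖) (hW : IsOpen W)
    (hFW : F '' closedBall 0 1 ⊆ W) (hpW : ball p d ⊆ W) (hs0 : 0 < s) (hs1 : s < 1) :
    ∃ Φ : E → E, DifferentiableOn ℂ Φ (ball 0 1) ∧ InjOn Φ (ball 0 1) ∧ Φ '' ball 0 1 ⊆ W ∧
      F '' closedBall 0 s ⊆ Φ '' ball 0 1 ∧ closedBall p (1 / 100 * d) ⊆ Φ '' ball 0 1 := by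
  obtain ⟨M, hM⟩ := exists_hasStrictFDerivAt_equiv isOpen_ball hF hinj
    (z := e) (by rw [mem_ball_zero_iff, he]; exact hR)
  have hd' : (d : ℂ) ≠ 0 := by exact_mod_cast hd.ne'
  set n : E := (d : ℂ)⁻¹ • (p - F e) with hn
  have hp : p = F e + (d : ℂ) • n := by rw [hn, smul_inv_smul₀ hd']; abel
  have hn1 : ‖n‖ = 1 := by
    rw [hn, norm_smul, norm_inv, Complex.norm_real, Real.norm_eq_abs, abs_of_pos hd, norm_sub_rev,
      hep, inv_mul_cancel₀ hd.ne']
  obtain ⟨hMn, a, ha, hMe⟩ := touch_derivative he hd hp hn1 hM.hasFDerivAt hmin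
  obtain ⟨T, hT1, hT2, hT3⟩ := exists_tangential he hMn
  obtain ⟨μ, hμ, hμM⟩ : ∃ μ : ℝ, 0 < μ ∧ ∀ z, μ * ‖z‖ ≤ ‖(M : E →L[ℂ] E) z‖ := by
    refine ⟨(‖(M.symm : E →L[ℂ] E)‖ + 1)⁻¹, by positivity, fun z => ?_⟩
    rw [inv_mul_le_iff₀ (by positivity)]
    have := (M.symm : E →L[ℂ] E).le_opNorm (M z)
    simp only [ContinuousLinearEquiv.coe_coe, ContinuousLinearEquiv.symm_apply_apply] at this ⊢
    nlinarith [norm_nonneg (M z)]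
  have t : Touch F R M T e n p a μ d :=
    ⟨⟨he, hn1, hT1, hT2, hT3, ha, hMe, hMn, hμ, hμM⟩, hR, hF, hinj, hp, hd, hmin, hM⟩
  obtain ⟨κ, hκ, hκd, hinj', hmem, hold, hnew⟩ := (eventually_pos.and
    ((eventually_small (show 0 < d / 10 by positivity)).and (t.eventually_injOn.and
    ((t.eventually_mem hW hFW hpW).and ((t.eventually_cover_old hs0 hs1).and
      t.eventually_cover_new))))).exists
  have hq0 : 0 < κ ^ 2 / d ^ 2 := by positivity
  have hq1 : κ ^ 2 / d ^ 2 < 1 / 10 := by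
    rw [div_lt_iff₀ (by positivity)]; nlinarith
  set r : ℝ := √(1 - 5 / 3 * (κ ^ 2 / d ^ 2)) with hr
  have hr2 : r ^ 2 = 1 - 5 / 3 * (κ ^ 2 / d ^ 2) := Real.sq_sqrt (by linarith)
  have hr0 : 0 < r := Real.sqrt_pos.2 (by linarith)
  have hrC : (r : ℂ) ≠ 0 := by exact_mod_cast hr0.ne'
  have hdom : ∀ z : E, z ∈ Dom E d κ ↔ ‖z‖ < r := fun z => by
    rw [Dom, mem_ofPred_eq, ← hr2]
    exact sq_lt_sq₀ (norm_nonneg _) hr0.le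
  have hscale : ∀ z ∈ ball (0 : E) 1, (r : ℂ) • z ∈ Dom E d κ := fun z hz => by
    rw [mem_ball_zero_iff] at hz
    rw [hdom, norm_smul, Complex.norm_real, Real.norm_eq_abs, abs_of_pos hr0]
    nlinarith
  have himg : (fun z : E => Touch.modif F T e n κ ((r : ℂ) • z)) '' ball 0 1 =
      Touch.modif F T e n κ '' Dom E d κ := by
    ext y; constructor
    · rintro ⟨z, hz, rfl⟩; exact mem_image_of_mem _ (hscale z hz)
    · rintro ⟨z, hz, rfl⟩
      refine ⟨(r : ℂ)⁻¹ • z, ?_, by simp only [smul_inv_smul₀ hrC]⟩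
      rw [hdom] at hz
      rw [mem_ball_zero_iff, norm_smul, norm_inv, Complex.norm_real, Real.norm_eq_abs,
        abs_of_pos hr0, inv_mul_lt_iff₀ hr0, mul_one]
      exact hz
  refine ⟨fun z => Touch.modif F T e n κ ((r : ℂ) • z), ?_, ?_, ?_, ?_, ?_⟩
  · intro z hz
    have h1 := t.differentiableAt_modif κ (norm_lt_one_of_mem_dom (hscale z hz))
    exact (h1.comp z (differentiableAt_id.const_smul (r : ℂ))).differentiableWithinAt
  · intro z hz z' hz' h
    exact smul_right_injective E hrC (hinj' (hscale z hz) (hscale z' hz') h)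
  · rw [himg]; rintro _ ⟨z, hz, rfl⟩; exact hmem z hz
  · rw [himg]; exact hold
  · rw [himg]; exact hnew
end BallFill

end

/-! ### Reaching points and filling balls in a connected open set -/

section
open Metric Set Filter Topology

namespace BallFill
universe u

section topology
variable {E : Type*} [NormedAddCommGroup E] [NormedSpace ℂ E] [FiniteDimensional ℂ E]

lemma one_lt_rank_real [Nontrivial E] : 1 < Module.rank ℝ E := by
  have h : Module.finrank ℝ E = 2 * Module.finrank ℂ E := finrank_real_of_complex E
  have h1 : 0 < Module.finrank ℂ E := Module.finrank_pos
  have : FiniteDimensional ℝ E := FiniteDimensional.complexToReal E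
  rw [← Module.finrank_eq_rank ℝ E]
  exact_mod_cast (by omega : 1 < Module.finrank ℝ E)

lemma exists_ball_superset {W : Set E} (hW : IsOpen W) {p : E} {ρ : ℝ} (hρ : 0 < ρ)
    (h : closedBall p ρ ⊆ W) : ∃ ρ', ρ < ρ' ∧ ball p ρ' ⊆ W := by
  have : ProperSpace E := FiniteDimensional.proper ℂ E
  obtain ⟨δ, hδ, hδW⟩ := (isCompact_closedBall p ρ).exists_thickening_subset_open hW h
  refine ⟨ρ + δ, by linarith, ?_⟩
  rw [thickening_closedBall hδ hρ.le, add_comm] at hδW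
  exact hδW

lemma isPreconnected_shell [Nontrivial E] (p : E) {ρ ρ' : ℝ} (hρ : 0 < ρ) :
    IsPreconnected (ball p ρ' \ closedBall p ρ) := by
  have h1 : IsPreconnected (sphere (0 : E) 1 ×ˢ Ioo ρ ρ') :=
    (isPreconnected_sphere one_lt_rank_real (0 : E) 1).prod isPreconnected_Ioo
  have h2 := h1.image (fun x : E × ℝ => p + x.2 • x.1) (by fun_prop)
  convert h2 using 1
  ext x
  simp only [Set.mem_sdiff, mem_ball, mem_closedBall, not_le, dist_eq_norm, mem_image, Prod.exists,
    mem_prod, mem_sphere, sub_zero, mem_Ioo]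
  constructor
  · rintro ⟨h1, h2⟩
    have h0 : ‖x - p‖ ≠ 0 := (hρ.trans h2).ne'
    refine ⟨‖x - p‖⁻¹ • (x - p), ‖x - p‖, ⟨?_, h2, h1⟩, ?_⟩
    · rw [norm_smul, norm_inv, norm_norm, inv_mul_cancel₀ h0]
    · rw [smul_inv_smul₀ h0]; abel
  · rintro ⟨y, t, ⟨hy, ht1, ht2⟩, rfl⟩
    rw [add_sub_cancel_left, norm_smul, hy, Real.norm_eq_abs, abs_of_pos (by linarith), mul_one]
    exact ⟨ht2, ht1⟩

/-- Removing a closed ball from a connected open set does not disconnect it. -/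
lemma isPreconnected_diff_closedBall [Nontrivial E] {W : Set E} (hW : IsOpen W)
    (hc : IsPreconnected W) {p : E} {ρ : ℝ} (hρ : 0 < ρ) (h : closedBall p ρ ⊆ W) :
    IsPreconnected (W \ closedBall p ρ) := by
  obtain ⟨ρ', hρ', hW'⟩ := exists_ball_superset hW hρ h
  have hopen : IsOpen (W \ closedBall p ρ) := hW.sdiff isClosed_closedBall
  have hS := isPreconnected_shell p (ρ' := ρ') hρ
  have hSW : ball p ρ' \ closedBall p ρ ⊆ W \ closedBall p ρ := sdiff_subset_sdiff_left hW'
  have key : ∀ u v : Set E, IsOpen u → IsOpen v → W \ closedBall p ρ ⊆ u ∪ v →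
      (W \ closedBall p ρ) ∩ (u ∩ v) = ∅ → ball p ρ' \ closedBall p ρ ⊆ u →
      W \ closedBall p ρ ⊆ u := by
    intro u v hu hv huv hd hSu
    have hdisj : Disjoint ((W \ closedBall p ρ) ∩ u ∪ ball p ρ') ((W \ closedBall p ρ) ∩ v) := by
      rw [Set.disjoint_left]
      rintro x (hx | hx) hx'
      · exact (Set.eq_empty_iff_forall_notMem.1 hd x) ⟨hx.1, hx.2, hx'.2⟩
      · exact (Set.eq_empty_iff_forall_notMem.1 hd x) ⟨hx'.1, hSu ⟨hx, hx'.1.2⟩, hx'.2⟩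
    have hsub := hc.subset_left_of_subset_union ((hopen.inter hu).union isOpen_ball)
      (hopen.inter hv) hdisj ?_ ⟨p, h (mem_closedBall_self hρ.le),
        Or.inr (mem_ball_self (hρ.trans hρ'))⟩
    · intro x hx
      rcases hsub hx.1 with hx' | hx'
      · exact hx'.2
      · exact hSu ⟨hx', hx.2⟩
    · intro x hx
      by_cases hxb : x ∈ closedBall p ρ
      · exact Or.inl (Or.inr (closedBall_subset_ball hρ' hxb))
      · rcases huv ⟨hx, hxb⟩ with h1 | h1
        · exact Or.inl (Or.inl ⟨⟨hx, hxb⟩, h1⟩)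
        · exact Or.inr ⟨⟨hx, hxb⟩, h1⟩
  rw [isPreconnected_iff_subset_of_disjoint] at hS ⊢
  intro u v hu hv huv hd
  rcases hS u v hu hv (hSW.trans huv)
    (Set.subset_empty_iff.1 ((inter_subset_inter_left _ hSW).trans hd.subset)) with h1 | h1
  · exact Or.inl (key u v hu hv huv hd h1)
  · exact Or.inr (key v u hv hu (by rwa [union_comm]) (by rwa [inter_comm v u]) h1)
end topology

/-- Injective holomorphic maps of the unit ball into `W`. -/
structure Emb {E : Type*} [NormedAddCommGroup E] [NormedSpace ℂ E] (W : Set E) (f : E → E) :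
    Prop where
  diff : DifferentiableOn ℂ f (ball 0 1)
  inj : InjOn f (ball 0 1)
  subset : f '' ball 0 1 ⊆ W

variable {E : Type u} [NormedAddCommGroup E] [InnerProductSpace ℂ E] [FiniteDimensional ℂ E]

lemma Emb.mono {W W' : Set E} {f : E → E} (h : Emb W f) (hW : W ⊆ W') : Emb W' f :=
  ⟨h.diff, h.inj, h.subset.trans hW⟩

lemma Emb.isOpen_image {W : Set E} {f : E → E} (h : Emb W f) : IsOpen (f '' ball 0 1) :=
  isOpen_image_of_injOn isOpen_ball h.diff h.inj isOpen_ball Subset.rfl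

lemma Emb.exists_radius {W K : Set E} {f : E → E} (h : Emb W f) (hK : IsCompact K)
    (hKf : K ⊆ f '' ball 0 1) : ∃ s, 0 < s ∧ s < 1 ∧ K ⊆ f '' ball 0 s := by
  have : Nonempty (Ioo (0 : ℝ) 1) := ⟨⟨1 / 2, by norm_num, by norm_num⟩⟩
  obtain ⟨s, hs⟩ := hK.elim_directed_cover (fun s : Ioo (0 : ℝ) 1 => f '' ball 0 (s : ℝ))
    (fun s => isOpen_image_of_injOn isOpen_ball h.diff h.inj isOpen_ball (ball_subset_ball s.2.2.le))
    (by
      intro x hx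
      obtain ⟨z, hz, rfl⟩ := hKf hx
      rw [mem_ball_zero_iff] at hz
      refine mem_iUnion.2 ⟨⟨(‖z‖ + 1) / 2, by have := norm_nonneg z; constructor <;> linarith⟩,
        mem_image_of_mem _ ?_⟩
      rw [mem_ball_zero_iff]; change ‖z‖ < (‖z‖ + 1) / 2; linarith)
    (Monotone.directed_le fun a b hab => image_mono (ball_subset_ball hab))
  exact ⟨s, s.2.1, s.2.2, hs⟩

/-- If the image of `f` comes within distance `δ` of `p`, then `f` can be modified so as to
cover `p`, and even the closed ball of radius `ρ / 100` around `p`, where `ρ` is any lower bound for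
the distance of `p` from the image. -/
lemma Emb.fill {W W₀ K : Set E} {f : E → E} {p q : E} {δ ρ : ℝ} (h : Emb W₀ f) (hW₀ : W₀ ⊆ W)
    (hW : IsOpen W) (hK : IsCompact K) (hKf : K ⊆ f '' ball 0 1) (hq : q ∈ f '' ball 0 1)
    (hqp : ‖q - p‖ < δ) (hpW : ball p δ ⊆ W) (hp : p ∉ f '' ball 0 1)
    (hρ : ∀ z ∈ ball (0 : E) 1, ρ ≤ ‖f z - p‖) :
    ∃ Φ, Emb W Φ ∧ K ⊆ Φ '' ball 0 1 ∧ p ∈ Φ '' ball 0 1 ∧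
      closedBall p (1 / 100 * ρ) ⊆ Φ '' ball 0 1 := by
  have : ProperSpace E := FiniteDimensional.proper ℂ E
  obtain ⟨s, hs0, hs1, hs⟩ := h.exists_radius (hK.insert q)
    (insert_subset hq hKf)
  set r : ℝ := (s + 1) / 2 with hr
  have hr0 : 0 < r := by rw [hr]; linarith
  have hr1 : r < 1 := by rw [hr]; linarith
  have hsr : s < r := by rw [hr]; linarith
  have hrC : (r : ℂ) ≠ 0 := by exact_mod_cast hr0.ne'
  have hnr : ∀ z : E, ‖(r : ℂ) • z‖ = r * ‖z‖ := fun z => by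
    rw [norm_smul, Complex.norm_real, Real.norm_eq_abs, abs_of_pos hr0]
  set F : E → E := fun z => f ((r : ℂ) • z) with hF
  have hmaps : ∀ z ∈ ball (0 : E) (1 / r), (r : ℂ) • z ∈ ball (0 : E) 1 := fun z hz => by
    rw [mem_ball_zero_iff] at hz ⊢
    rw [hnr]
    rw [lt_div_iff₀ hr0] at hz; linarith
  have hR : 1 < 1 / r := by rw [lt_div_iff₀ hr0]; linarith
  have hFd : DifferentiableOn ℂ F (ball 0 (1 / r)) :=
    h.diff.comp ((differentiable_id.const_smul (r : ℂ)).differentiableOn) hmaps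
  have hFi : InjOn F (ball 0 (1 / r)) := fun z hz z' hz' hzz =>
    smul_right_injective E hrC (h.inj (hmaps z hz) (hmaps z' hz') hzz)
  have hcl : closedBall (0 : E) 1 ⊆ ball 0 (1 / r) := closedBall_subset_ball hR
  -- a closest point of the image of the closed ball of radius `r`
  obtain ⟨e, he, hemin⟩ := (isCompact_closedBall (0 : E) 1).exists_isMinOn
    ⟨0, mem_closedBall_self zero_le_one⟩
    (f := fun z => ‖F z - p‖) ((hFd.continuousOn.mono hcl).sub continuousOn_const).norm
  have hemin' : ∀ z ∈ closedBall (0 : E) 1, ‖F e - p‖ ≤ ‖F z - p‖ := fun z hz => hemin hz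
  set d : ℝ := ‖F e - p‖ with hd
  have hd0 : 0 < d := by
    rw [hd, norm_pos_iff, sub_ne_zero]
    rintro heq
    exact hp ⟨_, hmaps e (hcl he), heq⟩
  have hFs : f '' ball 0 s ⊆ F '' closedBall 0 (s / r) := by
    rintro _ ⟨z, hz, rfl⟩
    refine ⟨(r : ℂ)⁻¹ • z, ?_, by simp only [hF, smul_inv_smul₀ hrC]⟩
    rw [mem_ball_zero_iff] at hz
    rw [mem_closedBall_zero_iff, norm_smul, norm_inv, Complex.norm_real, Real.norm_eq_abs,
      abs_of_pos hr0, ← div_eq_inv_mul]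
    gcongr
  have hsr1 : s / r < 1 := by rw [div_lt_one hr0]; exact hsr
  have hdδ : d < δ := by
    obtain ⟨z, hz, hzq⟩ := hFs (hs (mem_insert q K))
    have := hemin' z (closedBall_subset_closedBall hsr1.le hz)
    rw [hzq] at this
    linarith
  have he1 : ‖e‖ = 1 := by
    rw [mem_closedBall_zero_iff] at he
    refine le_antisymm he (not_lt.1 fun hlt => ?_)
    -- an interior closest point is impossible, as the image is open
    have hopen : IsOpen (F '' ball 0 1) := isOpen_image_of_injOn isOpen_ball hFd hFi isOpen_ball
      (ball_subset_ball hR.le)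
    obtain ⟨η, hη, hball⟩ := Metric.isOpen_iff.1 hopen (F e)
      (mem_image_of_mem _ (by rwa [mem_ball_zero_iff]))
    set t : ℝ := min (1 / 2) (η / (2 * d)) with ht
    have ht0 : 0 < t := by rw [ht]; positivity
    have ht1 : t ≤ 1 / 2 := min_le_left _ _
    have ht2 : t * d ≤ η / 2 := by
      have : t ≤ η / (2 * d) := min_le_right _ _
      rw [le_div_iff₀ (by positivity)] at this; linarith
    have hmem : F e - (t : ℂ) • (F e - p) ∈ ball (F e) η := by
      rw [mem_ball, dist_eq_norm, sub_sub_cancel_left, norm_neg, norm_smul, Complex.norm_real,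
        Real.norm_eq_abs, abs_of_pos ht0, ← hd]
      linarith
    obtain ⟨z, hz, hzF⟩ := hball hmem
    have h1 := hemin' z (ball_subset_closedBall hz)
    rw [hzF, show F e - (t : ℂ) • (F e - p) - p = ((1 - t : ℝ) : ℂ) • (F e - p) by
      push_cast; module, norm_smul, Complex.norm_real, Real.norm_eq_abs,
      abs_of_pos (by linarith), ← hd] at h1
    nlinarith
  have hρd : ρ ≤ d := hρ _ (hmaps e (hcl he))
  obtain ⟨Φ, h1, h2, h3, h4, h5⟩ := touch_fill (s := s / r) hR hFd hFi he1 hd0 rfl hemin' hW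
    (by
      rintro _ ⟨z, hz, rfl⟩
      exact hW₀ (h.subset (mem_image_of_mem _ (hmaps z (hcl hz)))))
    ((ball_subset_ball hdδ.le).trans hpW) (by positivity) hsr1
  exact ⟨Φ, ⟨h1, h2, h3⟩, (subset_insert q K).trans (hs.trans (hFs.trans h4)),
    h5 (mem_closedBall_self (by positivity)),
    (closedBall_subset_closedBall (by linarith)).trans h5⟩

/-- Every point of the connected open set `W` can be covered. -/
lemma Emb.reach {W K : Set E} {f : E → E} {q : E} (h : Emb W f) (hW : IsOpen W)
    (hc : IsPreconnected W) (hK : IsCompact K) (hKf : K ⊆ f '' ball 0 1) (hq : q ∈ W) :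
    ∃ Φ, Emb W Φ ∧ K ⊆ Φ '' ball 0 1 ∧ q ∈ Φ '' ball 0 1 := by
  set Q : Set E := {q | ∃ Φ, Emb W Φ ∧ K ⊆ Φ '' ball 0 1 ∧ q ∈ Φ '' ball 0 1} with hQ
  have hQo : IsOpen Q := by
    rw [isOpen_iff_mem_nhds]
    rintro x ⟨Φ, h1, h2, h3⟩
    filter_upwards [h1.isOpen_image.mem_nhds h3] with y hy using ⟨Φ, h1, h2, hy⟩
  have h0 : f 0 ∈ f '' ball 0 1 := mem_image_of_mem _ (mem_ball_self one_pos)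
  refine hc.subset_of_closure_inter_subset hQo ⟨f 0, h.subset h0, f, h, hKf, h0⟩ ?_ hq
  rintro x ⟨hx, hxW⟩
  obtain ⟨δ, hδ, hδW⟩ := Metric.isOpen_iff.1 hW x hxW
  obtain ⟨y, ⟨Φ, h1, h2, h3⟩, hxy⟩ := Metric.mem_closure_iff.1 hx δ hδ
  by_cases hxΦ : x ∈ Φ '' ball 0 1
  · exact ⟨Φ, h1, h2, hxΦ⟩
  · obtain ⟨Ψ, g1, g2, g3, -⟩ := h1.fill (ρ := 0) Subset.rfl hW hK h2 h3
      (by rwa [dist_comm, dist_eq_norm] at hxy) hδW hxΦ (fun z _ => norm_nonneg _)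
    exact ⟨Ψ, g1, g2, g3⟩

/-- A closed ball which the image avoids can be filled up to a factor `1 / 100`. -/
lemma Emb.fill_closedBall [Nontrivial E] {W K : Set E} {f : E → E} {p : E} {ρ : ℝ}
    (hρ : 0 < ρ) (h : Emb (W \ closedBall p ρ) f) (hW : IsOpen W) (hc : IsPreconnected W)
    (hpW : closedBall p ρ ⊆ W) (hK : IsCompact K) (hKf : K ⊆ f '' ball 0 1) :
    ∃ Φ, Emb W Φ ∧ K ⊆ Φ '' ball 0 1 ∧ closedBall p (1 / 100 * ρ) ⊆ Φ '' ball 0 1 := by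
  obtain ⟨ρ', hρ', hW'⟩ := exists_ball_superset hW hρ hpW
  obtain ⟨v, hv⟩ := exists_norm_eq E (c := (ρ + ρ') / 2) (by linarith)
  have hvp : ‖p + v - p‖ = (ρ + ρ') / 2 := by rw [add_sub_cancel_left, hv]
  have hvW : p + v ∈ W \ closedBall p ρ := by
    refine ⟨hW' ?_, ?_⟩
    · rw [mem_ball, dist_eq_norm, hvp]; linarith
    · rw [mem_closedBall, dist_eq_norm, hvp]; linarith
  obtain ⟨Φ, h1, h2, h3⟩ := h.reach (hW.sdiff isClosed_closedBall)
    (isPreconnected_diff_closedBall hW hc hρ hpW) hK hKf hvW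
  have hout : ∀ z ∈ ball (0 : E) 1, ρ < ‖Φ z - p‖ := fun z hz => by
    have := (h1.subset (mem_image_of_mem _ hz)).2
    rwa [mem_closedBall, dist_eq_norm, not_le] at this
  obtain ⟨Ψ, g1, g2, -, g3⟩ := h1.fill (ρ := ρ) sdiff_subset hW hK h2 h3
    (δ := ρ') (by rw [hvp]; linarith) hW' (by
      rintro ⟨z, hz, hzp⟩
      have := hout z hz
      rw [hzp, sub_self, norm_zero] at this; linarith) (fun z hz => (hout z hz).le)
  exact ⟨Ψ, g1, g2, g3⟩

/-- Finitely many disjoint closed balls which the image avoids can be filled simultaneously. -/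
lemma Emb.fill_finset [Nontrivial E] {ι : Type*} [DecidableEq ι] (t : Finset ι) (c : ι → E)
    (r : ι → ℝ) (hr : ∀ i ∈ t, 0 < r i)
    (hdisj : (t : Set ι).PairwiseDisjoint fun i => closedBall (c i) (r i)) :
    ∀ {W K : Set E} {f : E → E}, IsOpen W → IsPreconnected W →
      (∀ i ∈ t, closedBall (c i) (r i) ⊆ W) → Emb (W \ ⋃ i ∈ t, closedBall (c i) (r i)) f →
      IsCompact K → K ⊆ f '' ball 0 1 → ∃ Φ, Emb W Φ ∧ K ⊆ Φ '' ball 0 1 ∧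
        ∀ i ∈ t, closedBall (c i) (1 / 100 * r i) ⊆ Φ '' ball 0 1 := by
  have : ProperSpace E := FiniteDimensional.proper ℂ E
  induction t using Finset.induction_on with
  | empty =>
    intro W K f hW hc _ hf hK hKf
    exact ⟨f, hf.mono sdiff_subset, hKf, by simp⟩
  | insert j t hj ih =>
    intro W K f hW hc hB hf hK hKf
    have hrj := hr j (Finset.mem_insert_self j t)
    have hBj := hB j (Finset.mem_insert_self j t)
    have hWo : IsOpen (W \ closedBall (c j) (r j)) := hW.sdiff isClosed_closedBall
    obtain ⟨Φ, h1, h2, h3⟩ := ih (fun i hi => hr i (Finset.mem_insert_of_mem hi))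
      (hdisj.subset (by simp)) hWo
      (isPreconnected_diff_closedBall hW hc hrj hBj)
      (fun i hi => subset_sdiff.2 ⟨hB i (Finset.mem_insert_of_mem hi),
        hdisj (by simp [hi]) (by simp) (fun hij => hj (hij ▸ hi))⟩)
      (hf.mono (by rw [Finset.set_biUnion_insert, sdiff_sdiff])) hK hKf
    obtain ⟨Ψ, g1, g2, g3⟩ := h1.fill_closedBall hrj hW hc hBj
      (K := K ∪ ⋃ i ∈ t, closedBall (c i) (1 / 100 * r i))
      (hK.union (t.isCompact_biUnion fun i _ => isCompact_closedBall _ _))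
      (union_subset h2 (iUnion₂_subset h3))
    refine ⟨Ψ, g1, subset_union_left.trans g2, fun i hi => ?_⟩
    rcases Finset.mem_insert.1 hi with rfl | hi
    · exact g3
    · exact (subset_biUnion_of_mem (u := fun i => closedBall (c i) (1 / 100 * r i))
        (show i ∈ (t : Set ι) from hi)).trans (subset_union_right.trans g2)
end BallFill

end

/-! ### Measure gained by filling balls -/

section
open Metric Set Filter Topology

namespace BallFill
universe u

/-- The proportion of the complement of the image gained in one step. -/
noncomputable def gain (E : Type*) [NormedAddCommGroup E] [InnerProductSpace ℂ E] : ℝ :=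
  (1 / 100) ^ Module.finrank ℝ E / 2

lemma gain_pos (E : Type*) [NormedAddCommGroup E] [InnerProductSpace ℂ E] : 0 < gain E := by
  unfold gain; positivity

variable {E : Type u} [NormedAddCommGroup E] [InnerProductSpace ℂ E] [FiniteDimensional ℂ E]
  [MeasurableSpace E] [BorelSpace E] (μ : Measure E) [μ.IsAddHaarMeasure]

/-- An open set of finite measure is half filled by finitely many disjoint closed balls. -/
lemma exists_finset_balls {G : Set E} (hG : IsOpen G) (hfin : μ G ≠ ⊤) :
    ∃ (T : Set E) (r : E → ℝ) (t : Finset T), (∀ i ∈ t, 0 < r i) ∧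
      (∀ i ∈ t, closedBall (i : E) (r i) ⊆ G) ∧
      ((t : Set T).PairwiseDisjoint fun i => closedBall (i : E) (r i)) ∧
      μ.real G ≤ 2 * ∑ i ∈ t, μ.real (closedBall (i : E) (r i)) := by
  have : FiniteDimensional ℝ E := FiniteDimensional.complexToReal E
  have : ProperSpace E := FiniteDimensional.proper ℂ E
  obtain ⟨T, r, hTc, -, hTr, hcov, hdisj⟩ := Besicovitch.exists_disjoint_closedBall_covering_ae μ
    (fun x => {r | closedBall x r ⊆ G}) G (by
      intro x hx δ hδ
      obtain ⟨η, hη, h⟩ := Metric.isOpen_iff.1 hG x hx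
      refine ⟨min δ η / 2, ?_, by positivity, ?_⟩
      · refine (closedBall_subset_ball ?_).trans h
        have := min_le_right δ η
        have : 0 < min δ η := lt_min hδ hη
        linarith
      · have := min_le_left δ η
        have : 0 < min δ η := lt_min hδ hη
        linarith) (fun _ => 1) (fun _ _ => one_pos)
  rcases eq_or_ne (μ G) 0 with h0 | h0
  · exact ⟨T, r, ∅, by simp, by simp, by simp, by simp [Measure.real, h0]⟩
  have hle : μ G ≤ ∑' i : T, μ (closedBall (i : E) (r i)) := by
    calc μ G ≤ μ ((G \ ⋃ x ∈ T, closedBall x (r x)) ∪ ⋃ x ∈ T, closedBall x (r x)) :=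
          measure_mono (by intro x hx; by_cases h : x ∈ ⋃ x ∈ T, closedBall x (r x)
                           · exact Or.inr h
                           · exact Or.inl ⟨hx, h⟩)
      _ ≤ _ := measure_union_le _ _
      _ = μ (⋃ x ∈ T, closedBall x (r x)) := by rw [hcov, zero_add]
      _ ≤ _ := measure_biUnion_le μ hTc _
  have hlt : μ G / 2 < ∑' i : T, μ (closedBall (i : E) (r i)) :=
    (ENNReal.half_lt_self h0 hfin).trans_le hle
  rw [ENNReal.tsum_eq_iSup_sum, lt_iSup_iff] at hlt
  obtain ⟨t, ht⟩ := hlt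
  refine ⟨T, r, t, fun i _ => (hTr i i.2).2.1, fun i _ => (hTr i i.2).1, ?_, ?_⟩
  · intro i _ j _ hij
    exact hdisj i.2 j.2 (fun h => hij (Subtype.ext h))
  · have hs : ∑ i ∈ t, μ (closedBall (i : E) (r i)) ≠ ⊤ :=
      ENNReal.sum_ne_top.2 fun i _ => measure_closedBall_lt_top.ne
    have := (ENNReal.toReal_le_toReal (ENNReal.div_ne_top hfin two_ne_zero) hs).2 ht.le
    rw [ENNReal.toReal_div, ENNReal.toReal_sum fun i _ => measure_closedBall_lt_top.ne,
      ENNReal.toReal_ofNat] at this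
    simp only [Measure.real]
    linarith

/-- Fill finitely many disjoint closed balls which make up half of the measure of the complement of a
slightly shrunk image. -/
lemma Emb.gain_step [Nontrivial E] {U K : Set E} {f : E → E} {ε : ℝ} (h : Emb U f)
    (hU : IsOpen U) (hc : IsPreconnected U) (hfin : μ U ≠ ⊤) (hK : IsCompact K)
    (hKf : K ⊆ f '' ball 0 1) (hε : 0 < ε) :
    ∃ Φ, Emb U Φ ∧ K ⊆ Φ '' ball 0 1 ∧
      μ.real (f '' ball 0 1) + gain E * (μ.real U - μ.real (f '' ball 0 1)) - ε ≤
        μ.real (Φ '' ball 0 1) := by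
  classical
  have : FiniteDimensional ℝ E := FiniteDimensional.complexToReal E
  have : ProperSpace E := FiniteDimensional.proper ℂ E
  have hffin : μ (f '' ball 0 1) ≠ ⊤ := ne_top_of_le_ne_top hfin (measure_mono h.subset)
  -- a compact subset of the image with almost the same measure
  obtain ⟨K₀, hK₀f, hK₀, hK₀m⟩ : ∃ K₀ ⊆ f '' ball 0 1, IsCompact K₀ ∧
      μ.real (f '' ball 0 1) - ε ≤ μ.real K₀ := by
    rcases eq_or_ne (μ (f '' ball 0 1)) 0 with h0 | h0
    · exact ⟨∅, empty_subset _, isCompact_empty, by simp [Measure.real, h0, hε.le]⟩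
    · obtain ⟨K₀, h1, h2, h3⟩ := h.isOpen_image.exists_lt_isCompact (μ := μ)
        (ENNReal.sub_lt_self hffin h0 (ENNReal.ofReal_pos.2 hε).ne')
      refine ⟨K₀, h1, h2, ?_⟩
      have h4 := (tsub_le_iff_right).1 h3.le
      have h5 := (ENNReal.toReal_le_toReal hffin
        (ENNReal.add_ne_top.2 ⟨h2.measure_lt_top.ne, ENNReal.ofReal_ne_top⟩)).2 h4
      rw [ENNReal.toReal_add h2.measure_lt_top.ne ENNReal.ofReal_ne_top,
        ENNReal.toReal_ofReal hε.le] at h5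
      simp only [Measure.real]; linarith
  obtain ⟨s, hs0, hs1, hs⟩ := h.exists_radius (hK.union hK₀) (union_subset hKf hK₀f)
  have hsC : (s : ℂ) ≠ 0 := by exact_mod_cast hs0.ne'
  have hnorm : ∀ z : E, ‖(s : ℂ) • z‖ = s * ‖z‖ := fun z => by
    rw [norm_smul, Complex.norm_real, Real.norm_eq_abs, abs_of_pos hs0]
  set K' : Set E := f '' closedBall 0 s with hK'
  have hK'f : K' ⊆ f '' ball 0 1 := image_mono (closedBall_subset_ball hs1)
  have hK'c : IsCompact K' := (isCompact_closedBall (0 : E) s).image_of_continuousOn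
    (h.diff.continuousOn.mono (closedBall_subset_ball hs1))
  obtain ⟨T, r, t, hr, hB, hdisj, hvol⟩ := exists_finset_balls μ (hU.sdiff hK'c.isClosed)
    (ne_top_of_le_ne_top hfin (measure_mono sdiff_subset))
  -- the restriction of `f` to the ball of radius `s` avoids the chosen balls
  have hmaps : ∀ z ∈ ball (0 : E) 1, (s : ℂ) • z ∈ ball (0 : E) s := fun z hz => by
    rw [mem_ball_zero_iff] at hz ⊢
    rw [hnorm]; nlinarith
  have hsub : ball (0 : E) s ⊆ ball 0 1 := ball_subset_ball hs1.le
  have hg : Emb (U \ ⋃ i ∈ t, closedBall (i : E) (r i)) (fun z => f ((s : ℂ) • z)) := by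
    refine ⟨h.diff.comp ((differentiable_id.const_smul (s : ℂ)).differentiableOn)
      fun z hz => hsub (hmaps z hz), fun z hz z' hz' hzz =>
      smul_right_injective E hsC (h.inj (hsub (hmaps z hz)) (hsub (hmaps z' hz')) hzz), ?_⟩
    rintro _ ⟨z, hz, rfl⟩
    refine ⟨h.subset (mem_image_of_mem _ (hsub (hmaps z hz))), ?_⟩
    simp only [mem_iUnion, not_exists]
    intro i hi hmem
    exact (hB i hi hmem).2 (mem_image_of_mem _ (ball_subset_closedBall (hmaps z hz)))
  have hKg : K ∪ K₀ ⊆ (fun z => f ((s : ℂ) • z)) '' ball 0 1 := by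
    refine hs.trans ?_
    rintro _ ⟨z, hz, rfl⟩
    refine ⟨(s : ℂ)⁻¹ • z, ?_, by simp only [smul_inv_smul₀ hsC]⟩
    rw [mem_ball_zero_iff] at hz
    rw [mem_ball_zero_iff, norm_smul, norm_inv, Complex.norm_real, Real.norm_eq_abs,
      abs_of_pos hs0, inv_mul_lt_iff₀ hs0, mul_one]
    exact hz
  obtain ⟨Φ, h1, h2, h3⟩ := Emb.fill_finset t (fun i => (i : E)) (fun i => r i) hr hdisj hU hc
    (fun i hi => (hB i hi).trans sdiff_subset) hg (hK.union hK₀) hKg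
  refine ⟨Φ, h1, subset_union_left.trans h2, ?_⟩
  have hΦfin : μ (Φ '' ball 0 1) ≠ ⊤ := ne_top_of_le_ne_top hfin (measure_mono h1.subset)
  have hsmall : ∀ i ∈ t, closedBall (i : E) (1 / 100 * r i) ⊆ closedBall (i : E) (r i) :=
    fun i hi => closedBall_subset_closedBall (by have := hr i hi; linarith)
  have hunion : μ.real K₀ + ∑ i ∈ t, μ.real (closedBall (i : E) (1 / 100 * r i)) ≤
      μ.real (Φ '' ball 0 1) := by
    rw [← measureReal_biUnion_finset (fun i hi j hj hij =>
        (hdisj hi hj hij).mono (hsmall i hi) (hsmall j hj))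
        (fun i _ => measurableSet_closedBall) (fun i _ => measure_closedBall_lt_top.ne),
      ← measureReal_union _ (t.measurableSet_biUnion fun i _ => measurableSet_closedBall)
        hK₀.measure_lt_top.ne _]
    · refine measureReal_mono ?_ hΦfin
      exact union_subset (subset_union_right.trans h2) (iUnion₂_subset h3)
    · rw [Set.disjoint_right]
      intro x hx hxK
      simp only [mem_iUnion] at hx
      obtain ⟨i, hi, hxi⟩ := hx
      have hxs := hs (Or.inr hxK)
      exact (hB i hi (hsmall i hi hxi)).2 (image_mono ball_subset_closedBall hxs)
    · exact (t.isCompact_biUnion fun i _ =>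
        isCompact_closedBall (i : E) (1 / 100 * r i)).measure_lt_top.ne
  have hscale : ∀ i ∈ t, μ.real (closedBall (i : E) (1 / 100 * r i)) =
      (1 / 100) ^ Module.finrank ℝ E * μ.real (closedBall (i : E) (r i)) := by
    intro i hi
    simp only [Measure.real]
    rw [Measure.addHaar_closedBall_mul μ _ (by norm_num) (hr i hi).le, ENNReal.toReal_mul,
      ENNReal.toReal_ofReal (by positivity), Measure.addHaar_closedBall_center μ (i : E)]
  rw [Finset.sum_congr rfl hscale, ← Finset.mul_sum] at hunion
  have hdiff : μ.real U - μ.real (f '' ball 0 1) ≤ μ.real (U \ K') := by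
    have h4 : μ.real K' ≤ μ.real (f '' ball 0 1) := measureReal_mono hK'f hffin
    have h5 := le_measureReal_sdiff (μ := μ) (s₁ := U) (s₂ := K') hK'c.measure_lt_top.ne
    linarith
  have hgain : gain E * (μ.real U - μ.real (f '' ball 0 1)) ≤
      (1 / 100) ^ Module.finrank ℝ E * ∑ i ∈ t, μ.real (closedBall (i : E) (r i)) := by
    have h6 : 0 < ((1 : ℝ) / 100) ^ Module.finrank ℝ E := by positivity
    rw [gain]
    nlinarith
  linarith

/-- Almost all of `U` can be covered: an embedding whose image has almost maximal measure allows only a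
small gain. -/
lemma Emb.exhaust [Nontrivial E] {U K : Set E} {f : E → E} {ε : ℝ} (h : Emb U f)
    (hU : IsOpen U) (hc : IsPreconnected U) (hfin : μ U ≠ ⊤) (hK : IsCompact K)
    (hKf : K ⊆ f '' ball 0 1) (hε : 0 < ε) :
    ∃ Φ, Emb U Φ ∧ K ⊆ Φ '' ball 0 1 ∧ μ.real U - ε ≤ μ.real (Φ '' ball 0 1) := by
  set S : Set ℝ := {v | ∃ Φ, Emb U Φ ∧ K ⊆ Φ '' ball 0 1 ∧ v = μ.real (Φ '' ball 0 1)} with hS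
  have hne : S.Nonempty := ⟨_, f, h, hKf, rfl⟩
  have hbdd : BddAbove S := by
    refine ⟨μ.real U, ?_⟩
    rintro _ ⟨Φ, h1, -, rfl⟩
    exact measureReal_mono h1.subset hfin
  by_contra hcon
  push Not at hcon
  have hsup : sSup S ≤ μ.real U - ε := by
    refine csSup_le hne ?_
    rintro _ ⟨Φ, h1, h2, rfl⟩
    exact (hcon Φ h1 h2).le
  have hg := gain_pos E
  obtain ⟨_, ⟨Φ, h1, h2, rfl⟩, h3⟩ := exists_lt_of_lt_csSup hne
    (show sSup S - gain E * ε / 2 < sSup S by have : 0 < gain E * ε := by positivity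
                                              linarith)
  have h4 := le_csSup hbdd ⟨Φ, h1, h2, rfl⟩
  obtain ⟨Ψ, g1, g2, g3⟩ := h1.gain_step μ hU hc hfin hK h2
    (show 0 < gain E * ε / 2 by positivity)
  have h5 := le_csSup hbdd ⟨Ψ, g1, g2, rfl⟩
  have h6 : gain E * ε ≤ gain E * (μ.real U - μ.real (Φ '' ball 0 1)) := by
    gcongr; linarith
  linarith
end BallFill

end

/-! ### The volume estimate -/

/-- The ball of radius `1 / 2` has volume `(π / 4) ^ m / m!`. -/
lemma rhoConst_le_one {m : ℕ} (hm : m ≠ 0) : rhoConst m ≤ 1 := by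
  have : NeZero m := ⟨hm⟩
  have hd : Module.finrank ℝ (EuclideanSpace ℂ (Fin m)) = 2 * m := by
    have h := Module.finrank_mul_finrank ℝ ℂ (EuclideanSpace ℂ (Fin m))
    rw [Complex.finrank_real_complex, finrank_euclideanSpace_fin] at h
    exact h.symm
  have : FiniteDimensional ℝ (EuclideanSpace ℂ (Fin m)) := FiniteDimensional.complexToReal _
  rw [rhoConst, InnerProductSpace.volume_ball_of_dim_even hd, ENNReal.toReal_mul, hd]
  rw [← ENNReal.ofReal_pow (by norm_num), ENNReal.toReal_ofReal (by positivity),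
    ENNReal.toReal_ofReal (by positivity), pow_mul, ← mul_div_assoc, ← mul_pow]
  refine div_le_one_of_le₀ ?_ (by positivity)
  calc (((1 : ℝ) / 2) ^ 2 * Real.pi) ^ m ≤ 1 := by
        apply pow_le_one₀ (by positivity)
        nlinarith [Real.pi_le_four]
    _ ≤ _ := by exact_mod_cast Nat.factorial_pos m

/-- **Lemma 2.4.** Given an injective holomorphic map `F : B^m(0,1) → U` into a bounded
connected open set `U ⊆ ℂ^m`, `0 < s < 1` and `ε > 0`, there is an injective holomorphic
map `F' : B^m(0,1) → U` with `F'(B^m(0,1)) ⊇ F(B^m(0,s))` and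
`vol(F'(B^m(0,1))) ≥ vol(F(B^m(0,1))) + ρ_m/(2·32^{2m})·(vol(U) − vol(F(B^m(0,1)))) − ε`. -/
theorem exists_injective_holomorphic_ball_volume_increase {m : ℕ}
    (U : Set (EuclideanSpace ℂ (Fin m))) (hUopen : IsOpen U) (hUconn : IsConnected U)
    (hUbdd : Bornology.IsBounded U)
    (F : EuclideanSpace ℂ (Fin m) → EuclideanSpace ℂ (Fin m))
    (hF : DifferentiableOn ℂ F (ball 0 1)) (hFinj : Set.InjOn F (ball 0 1))
    (hFU : F '' ball 0 1 ⊆ U)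
    (s ε : ℝ) (hs0 : 0 < s) (hs1 : s < 1) (hε : 0 < ε) :
    ∃ F' : EuclideanSpace ℂ (Fin m) → EuclideanSpace ℂ (Fin m),
      DifferentiableOn ℂ F' (ball 0 1) ∧ Set.InjOn F' (ball 0 1) ∧
      F' '' ball 0 1 ⊆ U ∧ F '' ball 0 s ⊆ F' '' ball 0 1 ∧
      (volume (F' '' ball 0 1)).toReal ≥
        (volume (F '' ball 0 1)).toReal +
          rhoConst m / (2 * 32 ^ (2 * m)) *
            ((volume U).toReal - (volume (F '' ball 0 1)).toReal) - ε := by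
  rcases eq_or_ne m 0 with rfl | hm
  · -- `ℂ^0` is a point, so the image of `F` is already all of `U`
    have hU : F '' ball 0 1 = U := by
      refine hFU.antisymm fun x _ => ⟨0, mem_ball_self one_pos, Subsingleton.elim _ _⟩
    refine ⟨F, hF, hFinj, hFU, Set.image_mono (ball_subset_ball hs1.le), ?_⟩
    rw [hU, sub_self, mul_zero]
    linarith
  have : NeZero m := ⟨hm⟩
  have hfin : volume U ≠ ⊤ := hUbdd.measure_lt_top.ne
  obtain ⟨Φ, h1, h2, h3⟩ := BallFill.Emb.exhaust volume (K := F '' closedBall 0 s)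
    ⟨hF, hFinj, hFU⟩ hUopen hUconn.isPreconnected hfin
    ((isCompact_closedBall _ s).image_of_continuousOn
      (hF.continuousOn.mono (closedBall_subset_ball hs1)))
    (Set.image_mono (closedBall_subset_ball hs1)) hε
  refine ⟨Φ, h1.diff, h1.inj, h1.subset, (Set.image_mono ball_subset_closedBall).trans h2, ?_⟩
  have hle : (volume (F '' ball 0 1)).toReal ≤ (volume U).toReal := measureReal_mono hFU hfin
  have hc : rhoConst m / (2 * 32 ^ (2 * m)) ≤ 1 := by
    refine div_le_one_of_le₀ ((rhoConst_le_one hm).trans ?_) (by positivity)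
    have : (1 : ℝ) ≤ 32 ^ (2 * m) := one_le_pow₀ (by norm_num)
    linarith
  have h4 := mul_le_of_le_one_left (sub_nonneg.2 hle) hc
  simp only [Measure.real] at h3
  linarith
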